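/- arXiv:2311.01114 — 5 statements merged into one kernel-verified Lean document; each statement's English description precedes it below -/
import Mathlib

section
/- Let X be a finite non-degenerate latin cycle set with |X| > 1. Then X does not have finite primitive level. -/
/-!
Latin cycle sets have finite epimorphic images that are again latin, and distinct elements of a
latin cycle set have distinct left multiplications. So it suffices that a finite cycle set `Y` with
more than one element and injective `σ` is never primitive (`not_primitive_of_sigma_injective`).

The left multiplications extend to the free commutative monoid on `Y` through
`σ_{a+b} = σ_{a·b} σ_a`, and the quotient by `σ_a = σ_b` is a finite abelian group `A` in bijection
with the permutation group `G` (the left brace on `G`). The map `π : G → A` inverse to `a ↦ σ_a⁻¹`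
satisfies `π (g h) = π g + g • π h`, and `Y` embeds equivariantly in `A` as a generating set.

For coprime `m, m'` with `m m' = |A|`, the elements `g` with `m • π g = 0` form a subgroup of order
`m`. Hence `G` has Hall subgroups of all possible orders and is solvable; this needs Burnside's
`p^a q^b` theorem, proved by character theory, and Wielandt's criterion on three solvable subgroups
of pairwise coprime indices.

If `Y` is primitive, every nontrivial normal subgroup of `G` is transitive on `Y`. The solvable
group `G` has a nontrivial normal `p`-subgroup `N`. Let `q` be the largest power of `p` dividing
`|A|`, and `H` the Sylow subgroup of order `q` from above; it contains `N`. The cocycle identity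
shows that `N` acts trivially on `q • A`, and transitivity of `N` on the generators of `A` then
makes `G` act trivially on `q • A`. So `H` is normal, its centre is transitive on `Y`, and `H` acts
freely on `Y`. Comparing sizes, `Y` fills a whole coset of `A[q]`. This coset meets `q • A`, so `G`
fixes a point of `Y`, which contradicts transitivity (`false_of_bijective_cocycle`).
-/

/-- A cycle set: each left multiplication `σ_x = op x` is bijective and
`(x·y)·(x·z) = (y·x)·(y·z)`. -/
structure CycleSet (X : Type) where
  op : X → X → X
  bij : ∀ x, Function.Bijective (op x)
  cyc : ∀ x y z, op (op x y) (op x z) = op (op y x) (op y z)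

namespace CycleSet

variable {X Y : Type}

/-- The left multiplication `σ_x` as a permutation of `X`. -/
noncomputable def sigma (C : CycleSet X) (x : X) : Equiv.Perm X :=
  Equiv.ofBijective _ (C.bij x)

/-- Non-degeneracy: the squaring map `x ↦ x·x` is bijective. -/
def Nondeg (C : CycleSet X) : Prop := Function.Bijective fun x => C.op x x

/-- The associated permutation group `G(X)`, generated by the `σ_x`. -/
noncomputable def G (C : CycleSet X) : Subgroup (Equiv.Perm X) :=
  Subgroup.closure (Set.range C.sigma)

/-- The displacement group `Dis(X)`, generated by the `σ_x σ_y⁻¹`. -/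
noncomputable def Dis (C : CycleSet X) : Subgroup (Equiv.Perm X) :=
  Subgroup.closure {g | ∃ x y, g = C.sigma x * (C.sigma y)⁻¹}

/-- A subgroup of `Sym(X)` acts transitively on `X`. -/
def SubgroupTransitive (H : Subgroup (Equiv.Perm X)) : Prop :=
  ∀ a b : X, ∃ g ∈ H, g a = b

/-- Indecomposability: `G(X)` acts transitively on `X`. -/
def Indec (C : CycleSet X) : Prop := SubgroupTransitive C.G

/-- A trivial cycle set: all left multiplications coincide. -/
def IsTrivial (C : CycleSet X) : Prop := ∀ x y z, C.op x z = C.op y z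

/-- Cycle set homomorphism. -/
def IsHom (C : CycleSet X) (D : CycleSet Y) (f : X → Y) : Prop :=
  ∀ a b : X, f (C.op a b) = D.op (f a) (f b)

/-- A block for the action of `G(X)` on `X`. -/
def IsBlock (C : CycleSet X) (s : Set X) : Prop :=
  ∀ g ∈ C.G, (⇑g '' s = s ∨ Disjoint (⇑g '' s) s)

/-- Primitivity: `G(X)` acts transitively on `X` and all blocks are trivial. -/
def Primitive (C : CycleSet X) : Prop :=
  C.Indec ∧ ∀ s : Set X, C.IsBlock s → s.Subsingleton ∨ s = Set.univ

/-- There is a chain `X = X₁ → X₂ → ⋯ → X_k` of epimorphisms of cycle sets with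
`|X_i| > |X_{i+1}| > 1` for `1 ≤ i ≤ k-1` and with `X_k` primitive. -/
def HasChain [Finite X] (C : CycleSet X) (k : ℕ) : Prop :=
  ∃ (T : ℕ → Type) (_ : ∀ i, Finite (T i)) (CS : ∀ i, CycleSet (T i)) (e : X → T 0),
    Function.Bijective e ∧ IsHom C (CS 0) e ∧
    (∀ i, i + 1 < k → Nat.card (T (i + 1)) < Nat.card (T i) ∧ 1 < Nat.card (T (i + 1))) ∧
    (∀ i, i + 1 < k → ∃ p : T i → T (i + 1),
      Function.Surjective p ∧ IsHom (CS i) (CS (i + 1)) p) ∧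
    (CS (k - 1)).Primitive

/-- `X` has finite primitive level: some chain as above exists (of positive length). -/
def HasFPL [Finite X] (C : CycleSet X) : Prop := ∃ k, 1 ≤ k ∧ HasChain C k

/-- `fpl(X) = k`: `k` is the largest positive integer admitting a chain as above. -/
def fplEq [Finite X] (C : CycleSet X) (k : ℕ) : Prop :=
  1 ≤ k ∧ HasChain C k ∧ ∀ m, 1 ≤ m → HasChain C m → m ≤ k

end CycleSet

open CycleSet

/-- A latin cycle set: every right multiplication `δ_x : y ↦ y·x` is bijective. -/
def IsLatin {X : Type} (C : CycleSet X) : Prop :=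
  ∀ x : X, Function.Bijective fun y => C.op y x

/-! ### Characters and conjugacy classes of prime power size -/

/-- If the average of finitely many `N`-th roots of unity is an algebraic integer, then it is `0` or
all the roots are equal: by Kronecker's theorem a nonzero average is itself a root of unity, and
equality holds in the triangle inequality. -/
theorem rootsOfUnity_average {n N : ℕ} (hN : 0 < N) (z : Fin n → ℂ) (hz : ∀ i, z i ^ N = 1)
    (hint : IsIntegral ℤ ((∑ i, z i) / n)) :
    (∑ i, z i) = 0 ∨ ∃ u, ∀ i, z i = u := by
  rcases Nat.eq_zero_or_pos n with rfl | hn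
  · left; simp
  by_cases h0 : ∑ i, z i = 0
  · exact Or.inl h0
  right
  have hn' : (n : ℂ) ≠ 0 := by exact_mod_cast hn.ne'
  let K := IntermediateField.adjoin ℚ (Set.range z)
  have hfd : FiniteDimensional ℚ K := by
    apply IntermediateField.finiteDimensional_adjoin
    rintro _ ⟨i, rfl⟩
    refine ⟨Polynomial.X ^ N - 1, Polynomial.monic_X_pow_sub_C 1 hN.ne', ?_⟩
    simp [hz]
  have hNF : NumberField K := { to_charZero := inferInstance, to_finiteDimensional := hfd }
  let y : Fin n → K := fun i => ⟨z i, IntermediateField.subset_adjoin _ _ ⟨i, rfl⟩⟩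
  have hy : ∀ i, y i ^ N = 1 := fun i => Subtype.ext (by simp [y, hz])
  set α : K := (∑ i, y i) / n with hα
  have hαc : (α : ℂ) = (∑ i, z i) / n := by
    simp [hα, y]
  have hα0 : α ≠ 0 := by
    intro h
    have : (α : ℂ) = 0 := by rw [h]; rfl
    rw [hαc] at this
    exact h0 ((div_eq_zero_iff.1 this).resolve_right hn')
  have hαi : IsIntegral ℤ α := by
    rw [← isIntegral_algebraMap_iff (B := ℂ) (algebraMap K ℂ).injective]
    change IsIntegral ℤ (α : ℂ)
    rw [hαc]; exact hint
  obtain ⟨k, hk, hk1⟩ := NumberField.Embeddings.pow_eq_one_of_norm_le_one K ℂ hα0 hαi (by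
    intro φ
    have h1 : ∀ i, ‖φ (y i)‖ = 1 := fun i =>
      Complex.norm_eq_one_of_pow_eq_one (n := N) (by rw [← map_pow, hy, map_one]) hN.ne'
    rw [hα, map_div₀, map_sum, map_natCast, norm_div, Complex.norm_natCast,
      div_le_one (by exact_mod_cast hn)]
    refine (norm_sum_le _ _).trans ?_
    simp [h1])
  have hk1' : ((∑ i, z i) / n) ^ k = 1 := by rw [← hαc]; exact_mod_cast congrArg Subtype.val hk1
  set u : ℂ := (∑ i, z i) / n with hu
  have hun : ‖u‖ = 1 := Complex.norm_eq_one_of_pow_eq_one hk1' hk.ne'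
  have hzn : ∀ i, ‖z i‖ = 1 := fun i => Complex.norm_eq_one_of_pow_eq_one (hz i) hN.ne'
  refine ⟨u, ?_⟩
  have huu : u * star u = 1 := by
    have := Complex.mul_conj' u
    rw [hun] at this; simpa using this
  -- The numbers `Re (z i * conj u)` are at most `1` and add up to `n`, so each of them is `1`.
  have hle : ∀ i ∈ Finset.univ, (z i * star u).re ≤ 1 := fun i _ => by
    refine (Complex.re_le_norm _).trans ?_
    rw [norm_mul, norm_star, hun, hzn, one_mul]
  have hsum : ∑ i, (z i * star u).re = ∑ i : Fin n, (1 : ℝ) := by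
    rw [← Complex.re_sum, ← Finset.sum_mul]
    have : (∑ i, z i) = n * u := by rw [hu]; field_simp
    rw [this, mul_assoc, huu]; simp
  have heq := (Finset.sum_eq_sum_iff_of_le hle).1 hsum
  intro i
  have hre := heq i (Finset.mem_univ i)
  have hn1 : ‖z i * star u‖ = 1 := by rw [norm_mul, norm_star, hun, hzn, one_mul]
  have h1 : z i * star u = 1 := by
    have : ((z i * star u).re : ℂ) = z i * star u :=
      Complex.conj_eq_iff_re.1 (Complex.conj_eq_iff_im.2 (by
        have h2 := Complex.sq_norm_sub_sq_re (z i * star u)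
        rw [hn1, hre] at h2
        nlinarith [h2]))
    rw [← this, hre]; simp
  calc z i = z i * star u * u := by rw [mul_assoc, mul_comm (star u) u, huu, mul_one]
    _ = u := by rw [h1, one_mul]

/-- The matrix form of `rootsOfUnity_average`, applied to the eigenvalues of `M`. -/
theorem trace_eq_zero_or_scalar {n N : ℕ} (hN : 0 < N) (M : Matrix (Fin n) (Fin n) ℂ)
    (hM : M ^ N = 1) (hint : IsIntegral ℤ (M.trace / n)) :
    M.trace = 0 ∨ ∃ c : ℂ, M = c • 1 := by
  rcases Nat.eq_zero_or_pos n with rfl | hn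
  · left; simp
  have hdvd : minpoly ℂ M ∣ Polynomial.X ^ N - 1 := minpoly.dvd _ _ (by simp [hM])
  have hcard : M.charpoly.roots.card = n := by
    rw [← (IsAlgClosed.splits M.charpoly).natDegree_eq_card_roots, Matrix.charpoly_natDegree_eq_dim]
    simp
  obtain ⟨l, hl⟩ : ∃ l : List ℂ, (l : Multiset ℂ) = M.charpoly.roots := ⟨_, Multiset.coe_toList _⟩
  have hlen : l.length = n := by rw [← hcard, ← hl]; simp
  subst hlen
  have hroot : ∀ x ∈ M.charpoly.roots, x ^ N = 1 := by
    intro x hx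
    have h1 : (minpoly ℂ M).IsRoot x := by
      rw [← Matrix.minpoly_toLin', ← Module.End.hasEigenvalue_iff_isRoot,
        Module.End.hasEigenvalue_iff_isRoot_charpoly, Matrix.charpoly_toLin']
      exact Polynomial.isRoot_of_mem_roots hx
    have h2 := h1.dvd hdvd
    simpa [sub_eq_zero] using h2
  have htr : M.trace = ∑ i, l.get i := by
    rw [Matrix.trace_eq_sum_roots_charpoly, ← hl]
    simp [← List.sum_ofFn]
  rw [htr] at hint ⊢
  rcases rootsOfUnity_average hN l.get (fun i => hroot _ (by rw [← hl]; simp)) hint with h | ⟨u, hu⟩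
  · exact Or.inl h
  right
  refine ⟨u, ?_⟩
  have hrep : M.charpoly.roots = Multiset.replicate l.length u := by
    rw [Multiset.eq_replicate]
    refine ⟨hcard, fun b hb => ?_⟩
    rw [← hl] at hb
    obtain ⟨i, hi⟩ := List.get_of_mem (Multiset.mem_coe.1 hb)
    rw [← hi, hu]
  have hcp : M.charpoly = (Polynomial.X - Polynomial.C u) ^ l.length := by
    rw [(IsAlgClosed.splits M.charpoly).eq_prod_roots_of_monic (Matrix.charpoly_monic M), hrep]
    simp
  -- `minpoly M` is squarefree and divides a power of `X - u`, hence divides `X - u`.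
  have hsq : Squarefree (minpoly ℂ M) :=
    Squarefree.squarefree_of_dvd hdvd
      (Polynomial.X_pow_sub_one_separable_iff.2 (by exact_mod_cast hN.ne')).squarefree
  have h1 : minpoly ℂ M ∣ Polynomial.X - Polynomial.C u :=
    (hsq.dvd_pow_iff_dvd hn.ne').1 (hcp ▸ Matrix.minpoly_dvd_charpoly M)
  obtain ⟨q, hq⟩ := h1
  have h2 := congrArg (Polynomial.aeval M) hq
  rw [map_mul, minpoly.aeval, zero_mul] at h2
  simp only [map_sub, Polynomial.aeval_X, Polynomial.aeval_C, sub_eq_zero] at h2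
  rw [h2, Algebra.algebraMap_eq_smul_one]

theorem isIntegral_trace_of_pow_eq_one {n N : ℕ} (hN : 0 < N) (M : Matrix (Fin n) (Fin n) ℂ)
    (hM : M ^ N = 1) : IsIntegral ℤ M.trace := by
  rw [Matrix.trace_eq_sum_roots_charpoly]
  refine IsIntegral.multiset_sum fun x hx => ?_
  have h1 : (minpoly ℂ M).IsRoot x := by
    rw [← Matrix.minpoly_toLin', ← Module.End.hasEigenvalue_iff_isRoot,
      Module.End.hasEigenvalue_iff_isRoot_charpoly, Matrix.charpoly_toLin']
    exact Polynomial.isRoot_of_mem_roots hx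
  have h2 := h1.dvd (minpoly.dvd ℂ M (p := Polynomial.X ^ N - 1) (by simp [hM]))
  refine ⟨Polynomial.X ^ N - 1, Polynomial.monic_X_pow_sub_C 1 hN.ne', ?_⟩
  simpa using h2

/-- Schur's lemma for a family of matrices spanning the whole matrix algebra. -/
theorem exists_scalar_of_commute_span {n : ℕ} {ι : Type*} (f : ι → Matrix (Fin n) (Fin n) ℂ)
    (hspan : Submodule.span ℂ (Set.range f) = ⊤) (S : Matrix (Fin n) (Fin n) ℂ)
    (hS : ∀ i, Commute S (f i)) : ∃ c : ℂ, S = c • 1 := by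
  have hall : ∀ T, Commute S T := by
    intro T
    have hT : T ∈ Submodule.span ℂ (Set.range f) := hspan ▸ Submodule.mem_top
    induction hT using Submodule.span_induction with
    | mem x hx => obtain ⟨i, rfl⟩ := hx; exact hS i
    | zero => exact Commute.zero_right _
    | add x y _ _ hx hy => exact hx.add_right hy
    | smul a x _ hx => exact hx.smul_right a
  have : S ∈ Set.range (Matrix.scalar (Fin n)) :=
    Matrix.mem_range_scalar_iff_commute_single'.2 fun i j => (hall _).symm
  obtain ⟨c, rfl⟩ := this
  exact ⟨c, by ext i j; simp [Matrix.one_apply, Matrix.diagonal_apply]⟩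

open Classical in
/-- If the size of the conjugacy class of `g` is coprime to the degree `n` of an irreducible
representation `ρ`, then `ρ g` has trace `0` or is scalar. Irreducibility is expressed by the image
of `ρ` spanning the matrix algebra. -/
theorem trace_eq_zero_or_scalar_of_coprime {G : Type*} [Group G] [Fintype G] {n : ℕ}
    (ρ : G →* Matrix (Fin n) (Fin n) ℂ)
    (hspan : Submodule.span ℂ (Set.range ρ) = ⊤) (g : G)
    (hco : Nat.Coprime (Finset.univ.filter (IsConj g)).card n) :
    (ρ g).trace = 0 ∨ ∃ c : ℂ, ρ g = c • 1 := by
  rcases Nat.eq_zero_or_pos n with rfl | hn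
  · left; simp [Matrix.trace]
  have hn' : (n : ℂ) ≠ 0 := by exact_mod_cast hn.ne'
  have : NeZero n := ⟨hn.ne'⟩
  set C := Finset.univ.filter (IsConj g) with hC
  have hpow : ρ g ^ Fintype.card G = 1 := by rw [← map_pow, pow_card_eq_one, map_one]
  have hN : 0 < Fintype.card G := Fintype.card_pos
  set S := ∑ x ∈ C, ρ x with hS
  have hcomm : ∀ h, Commute S (ρ h) := by
    intro h
    change S * ρ h = ρ h * S
    rw [hS, Finset.sum_mul, Finset.mul_sum]
    simp_rw [← map_mul]
    refine Finset.sum_bij' (fun x _ => h⁻¹ * x * h) (fun x _ => h * x * h⁻¹) ?_ ?_ ?_ ?_ ?_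
    · intro a ha
      simp only [hC, Finset.mem_filter, Finset.mem_univ, true_and] at ha ⊢
      exact ha.trans (isConj_iff.2 ⟨h⁻¹, by group⟩)
    · intro a ha
      simp only [hC, Finset.mem_filter, Finset.mem_univ, true_and] at ha ⊢
      exact ha.trans (isConj_iff.2 ⟨h, rfl⟩)
    · intro a _; group
    · intro a _; group
    · intro a _; congr 1; group
  obtain ⟨c, hc⟩ := exists_scalar_of_commute_span ρ hspan S hcomm
  have htr : c * n = C.card * (ρ g).trace := by
    have h1 : S.trace = C.card * (ρ g).trace := by
      rw [hS, Matrix.trace_sum, Finset.sum_congr rfl (g := fun _ => (ρ g).trace), Finset.sum_const,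
        nsmul_eq_mul]
      intro x hx
      simp only [hC, Finset.mem_filter, Finset.mem_univ, true_and] at hx
      obtain ⟨y, rfl⟩ := isConj_iff.1 hx
      rw [map_mul, map_mul, Matrix.trace_mul_comm, ← mul_assoc, ← map_mul, inv_mul_cancel, map_one,
        one_mul]
    rw [← h1, hc]; simp
  -- The class sum already lives in the finite `ℤ`-algebra `ℤ[G]`, so its scalar is integral.
  have hcint : IsIntegral ℤ c := by
    let F : MonoidAlgebra ℤ G →ₐ[ℤ] Matrix (Fin n) (Fin n) ℂ := MonoidAlgebra.lift ℤ _ G ρ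
    have h1 : S = F (∑ x ∈ C, MonoidAlgebra.of ℤ G x) := by
      rw [map_sum]; simp [F, hS]
    have h2 : IsIntegral ℤ S := by
      rw [h1]; exact (IsIntegral.of_finite ℤ _).map F
    rw [hc, ← Algebra.algebraMap_eq_smul_one] at h2
    exact (isIntegral_algebraMap_iff (algebraMap ℂ (Matrix (Fin n) (Fin n) ℂ)).injective).1 h2
  apply trace_eq_zero_or_scalar hN _ hpow
  obtain ⟨a, b, hab⟩ : ∃ a b : ℤ, a * C.card + b * n = 1 := Nat.isCoprime_iff_coprime.2 hco
  have hab' : (a : ℂ) * C.card + b * n = 1 := by exact_mod_cast hab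
  have : (ρ g).trace / n = a * c + b * (ρ g).trace := by
    rw [div_eq_iff hn']
    linear_combination (-(ρ g).trace) * hab' - a * htr
  rw [this]
  have hZ : ∀ k : ℤ, IsIntegral ℤ (k : ℂ) := fun k => isIntegral_algebraMap (R := ℤ) (x := k)
  exact ((hZ a).mul hcint).add ((hZ b).mul (isIntegral_trace_of_pow_eq_one hN _ hpow))

/-- The regular trace on `∏ M_{d i}(ℂ)`. -/
theorem trace_mulLeft_pi_matrix {m : ℕ} (d : Fin m → ℕ)
    (a : Π i, Matrix (Fin (d i)) (Fin (d i)) ℂ) :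
    LinearMap.trace ℂ _ (LinearMap.mulLeft ℂ a) = ∑ i, (d i : ℂ) * (a i).trace := by
  classical
  let b := Pi.basis (fun i => Matrix.stdBasis ℂ (Fin (d i)) (Fin (d i)))
  rw [LinearMap.trace_eq_matrix_trace ℂ b, Matrix.trace]
  simp only [Matrix.diag_apply, LinearMap.toMatrix_apply]
  rw [Fintype.sum_sigma]
  refine Finset.sum_congr rfl fun i _ => ?_
  rw [Fintype.sum_prod_type, Matrix.trace, Finset.mul_sum]
  refine Finset.sum_congr rfl fun j _ => ?_
  have : ∀ k, (b.repr ((LinearMap.mulLeft ℂ a) (b ⟨i, (j, k)⟩))) ⟨i, (j, k)⟩ = a i j j := by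
    intro k
    have h1 : (LinearMap.mulLeft ℂ a) (b ⟨i, (j, k)⟩) =
        Pi.single i (a i * Matrix.single j k 1) := by
      rw [Pi.basis_apply, LinearMap.mulLeft_apply, Matrix.stdBasis_eq_single]
      ext1 l
      rcases eq_or_ne l i with rfl | hl
      · simp
      · simp [Pi.single_eq_of_ne hl]
    rw [h1, Pi.basis_repr, Pi.single_eq_same]
    change (a i * Matrix.single j k (1 : ℂ)) j k = _
    simp
  rw [Finset.sum_congr rfl fun k _ => this k]
  simp

/-- The regular character vanishes away from the identity. -/
theorem trace_mulLeft_monoidAlgebra {G : Type*} [Group G] [Fintype G] (g : G) (hg : g ≠ 1) :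
    LinearMap.trace ℂ _ (LinearMap.mulLeft ℂ (MonoidAlgebra.of ℂ G g)) = 0 := by
  classical
  let b : Module.Basis G ℂ (MonoidAlgebra ℂ G) := ⟨MonoidAlgebra.coeffLinearEquiv ℂ⟩
  rw [LinearMap.trace_eq_matrix_trace ℂ b, Matrix.trace]
  refine Finset.sum_eq_zero fun x _ => ?_
  rw [Matrix.diag_apply, LinearMap.toMatrix_apply, LinearMap.mulLeft_apply]
  have h1 : b x = MonoidAlgebra.of ℂ G x := rfl
  rw [h1, ← map_mul]
  change (MonoidAlgebra.of ℂ G (g * x)).coeff x = 0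
  simp [hg]

theorem not_isIntegral_neg_inv_prime {p : ℕ} (hp : p.Prime) (z : ℂ) (hz : IsIntegral ℤ z) :
    1 + (p : ℂ) * z ≠ 0 := by
  intro h
  have hp0 : (p : ℂ) ≠ 0 := by exact_mod_cast hp.ne_zero
  have h1 : z = algebraMap ℚ ℂ (-(1 / p : ℚ)) := by
    simp only [map_neg, map_div₀, map_one, map_natCast]
    field_simp
    linear_combination h
  rw [h1, isIntegral_algebraMap_iff (algebraMap ℚ ℂ).injective,
    IsIntegrallyClosed.isIntegral_iff] at hz
  obtain ⟨k, hk⟩ := hz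
  have hp0' : (p : ℚ) ≠ 0 := by exact_mod_cast hp.ne_zero
  have h2 : (k : ℚ) * p = -1 := by
    simp only [algebraMap_int_eq, eq_intCast] at hk
    rw [hk]; field_simp
  have h3 : k * p = -1 := by exact_mod_cast h2
  have h4 : (p : ℤ) ∣ 1 := ⟨-k, by linarith⟩
  exact hp.one_lt.ne' (by exact_mod_cast Int.eq_one_of_dvd_one (by positivity) h4)

/-- For `g ≠ 1` and a prime `p`, some nontrivial irreducible representation of degree prime to `p` has
nonzero character at `g`. Otherwise, decomposing the regular character at `g` would give
`1 + p z = 0` with `z` an algebraic integer. -/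
theorem exists_rep_trace_ne_zero {G : Type*} [Group G] [Fintype G] (g : G) (hg : g ≠ 1) {p : ℕ}
    (hp : p.Prime) :
    ∃ (n : ℕ) (ρ : G →* Matrix (Fin n) (Fin n) ℂ), Submodule.span ℂ (Set.range ρ) = ⊤ ∧
      ¬ p ∣ n ∧ (∃ h, ρ h ≠ 1) ∧ (ρ g).trace ≠ 0 := by
  classical
  by_contra hcon
  push Not at hcon
  have : NeZero (Nat.card G : ℂ) := ⟨by exact_mod_cast Nat.card_pos.ne'⟩
  obtain ⟨m, d, hd, ⟨e⟩⟩ :=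
    IsSemisimpleRing.exists_algEquiv_pi_matrix_of_isAlgClosed ℂ (MonoidAlgebra ℂ G)
  let ev : ∀ i, MonoidAlgebra ℂ G →ₐ[ℂ] Matrix (Fin (d i)) (Fin (d i)) ℂ := fun i =>
    (Pi.evalAlgHom ℂ _ i).comp e.toAlgHom
  have hev : ∀ i x, ev i x = e x i := fun i x => rfl
  have hevsurj : ∀ i, Function.Surjective (ev i) := fun i M =>
    ⟨e.symm (Pi.single i M), by simp [hev]⟩
  let ρ : ∀ i, G →* Matrix (Fin (d i)) (Fin (d i)) ℂ := fun i =>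
    (ev i).toMonoidHom.comp (MonoidAlgebra.of ℂ G)
  have hρ : ∀ i h, ρ i h = e (MonoidAlgebra.of ℂ G h) i := fun i h => rfl
  have hlift : ∀ i x, ev i x = ∑ h, x.coeff h • ρ i h := by
    intro i x
    have : x = ∑ h, x.coeff h • MonoidAlgebra.of ℂ G h := by
      ext y
      simp [MonoidAlgebra.coeff_sum, MonoidAlgebra.coeff_single]
    conv_lhs => rw [this]
    rw [map_sum]
    simp only [map_smul]
    rfl
  have hspan : ∀ i, Submodule.span ℂ (Set.range (ρ i)) = ⊤ := by
    intro i
    rw [eq_top_iff]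
    intro M _
    obtain ⟨x, rfl⟩ := hevsurj i M
    rw [hlift]
    exact Submodule.sum_mem _ fun h _ => Submodule.smul_mem _ _ (Submodule.subset_span ⟨h, rfl⟩)
  -- Exactly one block carries the trivial representation.
  obtain ⟨i₀, hi₀⟩ : ∃ i, ∀ h, ρ i h = 1 := by
    set s : MonoidAlgebra ℂ G := ∑ h, MonoidAlgebra.of ℂ G h with hs
    have hs0 : s ≠ 0 := by
      intro h
      have := congrArg (fun x : MonoidAlgebra ℂ G => x.coeff 1) h
      simp [hs, MonoidAlgebra.coeff_sum, MonoidAlgebra.coeff_single, Finsupp.single_apply] at this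
    obtain ⟨i, hi⟩ : ∃ i, e s i ≠ 0 := by
      by_contra hc
      push Not at hc
      exact hs0 (e.injective (by rw [map_zero]; exact funext hc))
    have hmul : ∀ h, ρ i h * e s i = e s i := by
      intro h
      rw [hρ, ← Pi.mul_apply, ← map_mul, hs, Finset.mul_sum]
      simp_rw [← map_mul]
      exact congrArg (fun t => e t i) (Fintype.sum_equiv (Equiv.mulLeft h)
        (fun x => MonoidAlgebra.of ℂ G (h * x)) (fun x => MonoidAlgebra.of ℂ G x) fun _ => rfl)
    have hmul' : ∀ h, e s i * ρ i h = e s i := by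
      intro h
      rw [hρ, ← Pi.mul_apply, ← map_mul, hs, Finset.sum_mul]
      simp_rw [← map_mul]
      exact congrArg (fun t => e t i) (Fintype.sum_equiv (Equiv.mulRight h)
        (fun x => MonoidAlgebra.of ℂ G (x * h)) (fun x => MonoidAlgebra.of ℂ G x) fun _ => rfl)
    obtain ⟨c, hc⟩ := exists_scalar_of_commute_span (ρ i) (hspan i) (e s i)
      (fun h => (hmul' h).trans (hmul h).symm)
    have hc0 : c ≠ 0 := by rintro rfl; exact hi (by rw [hc, zero_smul])
    refine ⟨i, fun h => ?_⟩
    have := hmul h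
    rw [hc, mul_smul_comm, mul_one] at this
    exact smul_right_injective _ hc0 this
  have huniq : ∀ i, (∀ h, ρ i h = 1) → i = i₀ := by
    intro i hi
    by_contra hne
    obtain ⟨x, hx⟩ := e.surjective (Pi.single i 1)
    have h1 : ev i x = 1 := by rw [hev, hx, Pi.single_eq_same]
    have h2 : ev i₀ x = 0 := by rw [hev, hx, Pi.single_eq_of_ne (Ne.symm hne)]
    simp_rw [hlift, hi, hi₀, ← Finset.sum_smul] at h1 h2
    have := hd i₀
    have h3 : ∑ h, x.coeff h = 0 := (smul_eq_zero.1 h2).resolve_right one_ne_zero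
    rw [h3, zero_smul] at h1
    have := hd i
    exact zero_ne_one h1
  have hd1 : d i₀ = 1 := by
    have := hd i₀
    have h1 : Module.finrank ℂ (Matrix (Fin (d i₀)) (Fin (d i₀)) ℂ) ≤ 1 := by
      refine finrank_le_one 1 fun M => ?_
      have hM : M ∈ Submodule.span ℂ (Set.range (ρ i₀)) := hspan i₀ ▸ Submodule.mem_top
      have hr : Set.range (ρ i₀) = {1} := by
        ext y; simp [hi₀, eq_comm]
      rw [hr, Submodule.mem_span_singleton] at hM
      exact hM
    rw [Module.finrank_matrix] at h1
    simp only [Fintype.card_fin, Module.finrank_self, mul_one] at h1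
    have := NeZero.pos (d i₀)
    nlinarith
  -- Compare both computations of the regular character at `g`.
  have htr : ∑ i, (d i : ℂ) * (ρ i g).trace = 0 := by
    have h1 := trace_mulLeft_pi_matrix d (e (MonoidAlgebra.of ℂ G g))
    have h2 := trace_mulLeft_monoidAlgebra g hg
    rw [← LinearMap.trace_conj' _ e.toLinearEquiv] at h2
    have h3 : e.toLinearEquiv.conj (LinearMap.mulLeft ℂ (MonoidAlgebra.of ℂ G g)) =
        LinearMap.mulLeft ℂ (e (MonoidAlgebra.of ℂ G g)) := by
      refine LinearMap.ext fun x => ?_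
      change e (_ * e.symm x) = _ * x
      rw [map_mul, e.apply_symm_apply]
    rw [h3, h1] at h2
    exact h2
  have hterm : ∀ i ∈ Finset.univ.erase i₀, ∃ z : ℂ, IsIntegral ℤ z ∧
      (d i : ℂ) * (ρ i g).trace = p * z := by
    intro i hi
    by_cases hpd : p ∣ d i
    · obtain ⟨k, hk⟩ := hpd
      refine ⟨k * (ρ i g).trace, ?_, by
        rw [← mul_assoc]; congr 1; exact_mod_cast hk⟩
      refine IsIntegral.mul ?_ (isIntegral_trace_of_pow_eq_one (Fintype.card_pos (α := G)) _
        (by rw [← map_pow, pow_card_eq_one, map_one]))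
      simpa using isIntegral_algebraMap (R := ℤ) (A := ℂ) (x := (k : ℤ))
    · refine ⟨0, isIntegral_zero, ?_⟩
      have hne : ∃ h, ρ i h ≠ 1 := by
        by_contra hc
        push Not at hc
        exact (Finset.mem_erase.1 hi).1 (huniq i hc)
      rw [hcon (d i) (ρ i) (hspan i) hpd hne]; simp
  choose! z hz1 hz2 using hterm
  rw [← Finset.add_sum_erase _ _ (Finset.mem_univ i₀), hi₀, hd1, Finset.sum_congr rfl hz2,
    ← Finset.mul_sum] at htr
  refine not_isIntegral_neg_inv_prime hp _ (IsIntegral.sum _ hz1) ?_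
  rw [← htr]
  simp

open Classical in
/-- A finite simple group with a nontrivial conjugacy class of prime power size is commutative: some
nontrivial irreducible representation sends `g` to a scalar matrix, so that the elements acting as
scalars form a nontrivial normal subgroup. -/
theorem IsSimpleGroup.comm_of_conjClass_prime_pow {G : Type*} [Group G] [Fintype G]
    [IsSimpleGroup G] {g : G} (hg : g ≠ 1) {p k : ℕ} (hp : p.Prime)
    (hcard : (Finset.univ.filter (IsConj g)).card ∣ p ^ k) (a b : G) : a * b = b * a := by
  obtain ⟨n, ρ, hspan, hpn, ⟨h, hh⟩, htr⟩ := exists_rep_trace_ne_zero g hg hp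
  have hco : Nat.Coprime (Finset.univ.filter (IsConj g)).card n :=
    Nat.Coprime.coprime_dvd_left hcard ((hp.coprime_iff_not_dvd.2 hpn).pow_left k)
  obtain ⟨c, hc⟩ := (trace_eq_zero_or_scalar_of_coprime ρ hspan g hco).resolve_left htr
  -- `Z` consists of the elements acting as scalars.
  let Z : Subgroup G := (Subgroup.center (Matrix (Fin n) (Fin n) ℂ)ˣ).comap ρ.toHomUnits
  have hZ : Z = ⊤ := by
    refine (Subgroup.Normal.eq_bot_or_eq_top inferInstance).resolve_left fun hbot => hg ?_
    rw [← Subgroup.mem_bot, ← hbot, Subgroup.mem_comap, Subgroup.mem_center_iff]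
    intro u
    ext1
    simp [hc]
  have hker : ρ.toHomUnits.ker = ⊥ := by
    refine (Subgroup.Normal.eq_bot_or_eq_top inferInstance).resolve_right fun htop => hh ?_
    have : h ∈ ρ.toHomUnits.ker := htop ▸ Subgroup.mem_top h
    rw [MonoidHom.mem_ker] at this
    simpa using congrArg Units.val this
  apply (MonoidHom.ker_eq_bot_iff _).1 hker
  rw [map_mul, map_mul]
  have hb : b ∈ Z := hZ ▸ Subgroup.mem_top b
  exact Subgroup.mem_center_iff.1 (Subgroup.mem_comap.1 hb) _

/-! ### Solvability criteria for finite groups -/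

/-- **Burnside's `p^a q^b` theorem.** -/
theorem isSolvable_of_card_dvd_two_primes {p q : ℕ} (hp : p.Prime) (hq : q.Prime) (a b : ℕ) :
    ∀ (n : ℕ) {G : Type*} [Group G] [Finite G], Nat.card G = n → n ∣ p ^ a * q ^ b →
      Group.IsSolvable G := by
  intro n
  induction n using Nat.strong_induction_on with
  | _ n ih =>
  intro G _ _ hn hdvd
  rcases subsingleton_or_nontrivial G with hs | hnt
  · infer_instance
  by_cases hsimple : IsSimpleGroup G
  · classical
    have := Fintype.ofFinite G
    -- a nontrivial group has some prime dividing its order, which is `p` or `q`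
    wlog hpd : p ∣ n generalizing p q a b
    · refine this hq hp b a (fun m hm G _ _ h1 h2 =>
        ih m hm h1 (by rwa [mul_comm])) (by rwa [mul_comm]) ?_
      obtain ⟨r, hr, hrn⟩ := Nat.exists_prime_and_dvd
        (show n ≠ 1 by rw [← hn]; exact Finite.one_lt_card.ne')
      rcases (Nat.Prime.dvd_mul hr).1 (hrn.trans hdvd) with h | h
      · rw [(Nat.prime_dvd_prime_iff_eq hr hp).1 (hr.dvd_of_dvd_pow h)] at hrn
        exact absurd hrn hpd
      · rwa [(Nat.prime_dvd_prime_iff_eq hr hq).1 (hr.dvd_of_dvd_pow h)] at hrn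
    have : Fact p.Prime := ⟨hp⟩
    obtain ⟨P⟩ : Nonempty (Sylow p G) := inferInstance
    have hPbot : (P : Subgroup G) ≠ ⊥ := P.ne_bot_of_dvd_card (hn ▸ hpd)
    have : Nontrivial P := (Subgroup.nontrivial_iff_ne_bot _).2 hPbot
    have := P.isPGroup'.center_nontrivial
    obtain ⟨z, hz⟩ := exists_ne (1 : Subgroup.center P)
    have hz1 : ((z : P) : G) ≠ 1 := by
      intro h; apply hz; ext; simpa using h
    refine Group.isSolvable_of_comm
      (IsSimpleGroup.comm_of_conjClass_prime_pow hz1 (p := q) (k := b) hq ?_)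
    have h1 : (P : Subgroup G).index ∣ q ^ b := by
      have h2 : (P : Subgroup G).index ∣ p ^ a * q ^ b :=
        (Subgroup.index_dvd_card _).trans (hn ▸ hdvd)
      refine Nat.Coprime.dvd_of_dvd_mul_left ?_ h2
      exact (Nat.Coprime.pow_left a ((Nat.Prime.coprime_iff_not_dvd hp).2 P.not_dvd_index)).symm
    refine dvd_trans ?_ h1
    have h3 : (Finset.univ.filter (IsConj ((z : P) : G))).card
        = (MulAction.stabilizer (ConjAct G) ((z : P) : G)).index := by
      rw [MulAction.index_stabilizer, ← Set.ncard_coe_finset]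
      congr 1
      ext x
      simp only [Finset.coe_filter, Finset.mem_univ, true_and, Set.mem_ofPred_eq,
        ConjAct.mem_orbit_conjAct]
      exact isConj_comm
    rw [h3, ← Subgroup.index_comap_of_surjective (P : Subgroup G)
      (f := (ConjAct.ofConjAct (G := G)).toMonoidHom) (ConjAct.ofConjAct (G := G)).surjective]
    apply Subgroup.index_dvd_of_le
    intro x hx
    rw [MulAction.mem_stabilizer_iff, ConjAct.smul_def, mul_inv_eq_iff_eq_mul]
    exact congrArg Subtype.val (Subgroup.mem_center_iff.1 z.2 ⟨ConjAct.ofConjAct x, hx⟩)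
  · obtain ⟨N, hN, hN1, hN2⟩ : ∃ N : Subgroup G, N.Normal ∧ N ≠ ⊥ ∧ N ≠ ⊤ := by
      by_contra hc
      push Not at hc
      exact hsimple ⟨fun N hN => or_iff_not_imp_left.2 (hc N hN)⟩
    rw [Group.isSolvable_iff_subgroup_quotient N]
    have h1 : Nat.card N < n := hn ▸ lt_of_le_of_ne (Subgroup.card_le_card_group N)
      (fun h => hN2 (Subgroup.card_eq_iff_eq_top N |>.1 h))
    have h2 : Nat.card (G ⧸ N) < n := by
      have := Subgroup.card_eq_card_quotient_mul_card_subgroup N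
      have h4 : 1 < Nat.card N := by
        rw [Subgroup.one_lt_card_iff_ne_bot]; exact hN1
      have h5 : 0 < Nat.card (G ⧸ N) := Nat.card_pos
      rw [← hn, this]
      nlinarith
    exact ⟨ih _ h1 rfl ((Subgroup.card_subgroup_dvd_card N).trans (hn ▸ hdvd)),
      ih _ h2 rfl ((Subgroup.card_quotient_dvd_card N).trans (hn ▸ hdvd))⟩

/-- A nontrivial finite solvable group has a nontrivial normal `p`-subgroup for some prime `p`. -/
theorem exists_normal_pgroup_of_isSolvable (G : Type*) [Group G] [Finite G] [Nontrivial G]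
    [hG : Group.IsSolvable G] :
    ∃ p : ℕ, p.Prime ∧ ∃ N : Subgroup G, N.Normal ∧ N ≠ ⊥ ∧ IsPGroup p N := by
  obtain ⟨n, hn⟩ := (Group.isSolvable_def G).1 hG
  obtain ⟨A, hA, hA1, hA2⟩ : ∃ A : Subgroup G, A.Normal ∧ A ≠ ⊥ ∧ ⁅A, A⁆ = ⊥ := by
    classical
    have hex : ∃ n, derivedSeries G n = ⊥ := ⟨n, hn⟩
    obtain ⟨m, hm⟩ : ∃ m, Nat.find hex = m + 1 := Nat.exists_eq_succ_of_ne_zero (by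
      intro h
      have := Nat.find_spec hex
      rw [h, derivedSeries_zero] at this
      exact top_ne_bot this)
    refine ⟨derivedSeries G m, inferInstance, Nat.find_min hex (by omega), ?_⟩
    rw [← derivedSeries_succ, ← hm]
    exact Nat.find_spec hex
  have hcomm : ∀ x ∈ A, ∀ y ∈ A, Commute x y := by
    intro x hx y hy
    have := Subgroup.commutator_mem_commutator hx hy
    rw [hA2, Subgroup.mem_bot] at this
    exact commutatorElement_eq_one_iff_commute.1 this
  obtain ⟨p, hp, hpA⟩ := Nat.exists_prime_and_dvd
    (show Nat.card A ≠ 1 by rw [Ne, Subgroup.card_eq_one]; exact hA1)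
  have : Fact p.Prime := ⟨hp⟩
  let N : Subgroup G :=
    { carrier := {x | x ∈ A ∧ ∃ k, x ^ p ^ k = 1}
      one_mem' := ⟨A.one_mem, 0, by simp⟩
      mul_mem' := by
        rintro x y ⟨hx, k, hk⟩ ⟨hy, l, hl⟩
        refine ⟨A.mul_mem hx hy, k + l, ?_⟩
        rw [(hcomm x hx y hy).mul_pow, pow_add, pow_mul, hk, mul_comm, pow_mul y, hl]
        simp
      inv_mem' := by
        rintro x ⟨hx, k, hk⟩
        exact ⟨A.inv_mem hx, k, by rw [inv_pow, hk, inv_one]⟩ }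
  refine ⟨p, hp, N, ⟨?_⟩, ?_, ?_⟩
  · rintro x ⟨hx, k, hk⟩ g
    exact ⟨hA.conj_mem x hx g, k, by rw [conj_pow, hk]; simp⟩
  · obtain ⟨x, hx⟩ := exists_prime_orderOf_dvd_card' p hpA
    intro h
    have : (x : G) ∈ N := ⟨x.2, 1, by rw [pow_one, ← hx]; exact_mod_cast pow_orderOf_eq_one x⟩
    rw [h, Subgroup.mem_bot] at this
    have h1 : x = 1 := by ext; exact this
    rw [h1, orderOf_one] at hx
    exact hp.one_lt.ne hx
  · rintro ⟨x, hx, k, hk⟩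
    exact ⟨k, by ext; simpa using hk⟩

/-- If two subgroups of a finite group have coprime indices, the group is their product. -/
theorem exists_mul_eq_of_coprime_index {G : Type*} [Group G] [Finite G] (K H : Subgroup G)
    (h : K.index.Coprime H.index) (x : G) : ∃ k ∈ K, ∃ y ∈ H, x = k * y := by
  have h1 : H.index ∣ H.relIndex K := by
    have h2 := Subgroup.relIndex_mul_index (inf_le_right : H ⊓ K ≤ K)
    rw [Subgroup.inf_relIndex_right] at h2
    have h3 : H.index ∣ (H ⊓ K).index := Subgroup.index_dvd_of_le inf_le_left
    rw [← h2] at h3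
    exact h.symm.dvd_of_dvd_mul_right h3
  have hst : MulAction.stabilizer K ((1 : G) : G ⧸ H) = H.subgroupOf K := by
    ext k
    rw [MulAction.mem_stabilizer_iff, Subgroup.mem_subgroupOf, ← inv_mem_iff,
      show k • ((1 : G) : G ⧸ H) = ((k : G) : G ⧸ H) from congrArg _ (mul_one (k : G)),
      QuotientGroup.eq]
    simp
  have h4 : (MulAction.orbit K ((1 : G) : G ⧸ H)) = Set.univ := by
    apply Set.eq_of_subset_of_ncard_le (Set.subset_univ _)
    rw [← MulAction.index_stabilizer, hst, Set.ncard_univ]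
    exact Nat.le_of_dvd (Nat.pos_of_ne_zero Subgroup.index_ne_zero_of_finite) h1
  have h5 : (x : G ⧸ H) ∈ MulAction.orbit K ((1 : G) : G ⧸ H) := h4 ▸ Set.mem_univ _
  obtain ⟨k, hk⟩ := h5
  have hk' : ((k : G) : G ⧸ H) = (x : G ⧸ H) := by
    rw [← hk]; exact (congrArg _ (mul_one (k : G))).symm
  exact ⟨k, k.2, (k : G)⁻¹ * x, QuotientGroup.eq.1 hk', by group⟩

/-- **Wielandt's solvability criterion**: a finite group with three solvable subgroups of pairwise
coprime indices is solvable. -/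
theorem isSolvable_of_three_coprime_index : ∀ (n : ℕ) {G : Type*} [Group G] [Finite G]
    (H₁ H₂ H₃ : Subgroup G), Nat.card G = n → Group.IsSolvable H₁ → Group.IsSolvable H₂ →
    Group.IsSolvable H₃ → H₁.index.Coprime H₂.index → H₁.index.Coprime H₃.index →
    H₂.index.Coprime H₃.index → Group.IsSolvable G := by
  intro n
  induction n using Nat.strong_induction_on with
  | _ n ih =>
  intro G _ _ H₁ H₂ H₃ hn s₁ s₂ s₃ h12 h13 h23
  by_cases hbot : H₁ = ⊥
  · subst hbot
    rw [Subgroup.index_bot] at h12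
    have h2 : H₂ = ⊤ := Subgroup.index_eq_one.1
      (Nat.eq_one_of_dvd_coprimes h12 (Subgroup.index_dvd_card _) dvd_rfl)
    subst h2
    exact Group.isSolvable_of_surjective (f := (⊤ : Subgroup G).subtype) fun x => ⟨⟨x, trivial⟩, rfl⟩
  have : Nontrivial H₁ := (Subgroup.nontrivial_iff_ne_bot _).2 hbot
  obtain ⟨p, hp, M, hM, hM1, hMp⟩ := exists_normal_pgroup_of_isSolvable H₁
  have : Fact p.Prime := ⟨hp⟩
  -- `p` does not divide both of the coprime indices of `H₂` and `H₃`
  wlog hp2 : ¬ p ∣ H₂.index generalizing H₂ H₃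
  · refine this H₃ H₂ s₃ s₂ h13 h12 h23.symm fun h => hp2 fun h' => ?_
    exact hp.one_lt.ne' (Nat.eq_one_of_dvd_coprimes h23 h' h)
  -- so `H₂` contains a Sylow `p`-subgroup of `G`, and a conjugate `K` of `H₂` contains `M`
  have hMp' : IsPGroup p (M.map H₁.subtype) := hMp.map _
  obtain ⟨P, hP⟩ := hMp'.exists_le_sylow
  obtain ⟨Q⟩ : Nonempty (Sylow p H₂) := inferInstance
  have hQ : IsPGroup p ((Q : Subgroup H₂).map H₂.subtype) := Q.isPGroup'.map _
  have hQi : ¬ p ∣ ((Q : Subgroup H₂).map H₂.subtype).index := by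
    rw [Subgroup.index_map_subtype]
    exact fun h => ((Nat.Prime.dvd_mul hp).1 h).elim Q.not_dvd_index hp2
  let Q' : Sylow p G := hQ.toSylow hQi
  obtain ⟨g, hg⟩ := MulAction.exists_smul_eq G P Q'
  let K : Subgroup G := H₂.comap (MulAut.conj g).toMonoidHom
  have hMK : M.map H₁.subtype ≤ K := by
    intro x hx
    have h1 : MulAut.conj g x ∈ (g • P : Sylow p G) := by
      have := Subgroup.smul_mem_pointwise_smul x (MulAut.conj g) (P : Subgroup G) (hP hx)
      exact this
    rw [hg] at h1
    have h2 : MulAut.conj g x ∈ (Q : Subgroup H₂).map H₂.subtype := h1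
    obtain ⟨y, -, hy⟩ := h2
    show MulAut.conj g x ∈ H₂
    rw [← hy]
    exact y.2
  have hKi : K.index = H₂.index :=
    Subgroup.index_comap_of_surjective H₂ (f := (MulAut.conj g).toMonoidHom)
      (MulAut.conj g).surjective
  have hKs : Group.IsSolvable K := by
    refine Group.isSolvable_of_isSolvable_injective
      (f := (MulAut.conj g).toMonoidHom.subgroupComap H₂) ?_
    intro x y hxy
    ext
    exact (MulAut.conj g).injective (congrArg Subtype.val hxy)
  -- as `G = K * H₁` and `H₁` normalizes `M`, all conjugates of `M` lie in `K`
  have hconj : ∀ x : G, ∀ m ∈ M.map H₁.subtype, x * m * x⁻¹ ∈ K := by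
    rintro x m ⟨m, hm, rfl⟩
    obtain ⟨k, hk, y, hy, rfl⟩ := exists_mul_eq_of_coprime_index K H₁ (hKi ▸ h12.symm) x
    have h1 := hMK (Subgroup.mem_map_of_mem H₁.subtype (hM.conj_mem m hm ⟨y, hy⟩))
    have h2 := K.mul_mem (K.mul_mem hk h1) (K.inv_mem hk)
    simpa [mul_assoc] using h2
  let N : Subgroup G := Subgroup.normalClosure (M.map H₁.subtype : Set G)
  have hNK : N ≤ K := by
    refine (Subgroup.closure_le _).2 fun x hx => ?_
    obtain ⟨m, hm, hc⟩ := Group.mem_conjugatesOfSet_iff.1 hx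
    obtain ⟨c, rfl⟩ := isConj_iff.1 hc
    exact hconj c m hm
  have hNs : Group.IsSolvable N :=
    Group.isSolvable_of_isSolvable_injective (Subgroup.inclusion_injective hNK)
  have hN1 : N ≠ ⊥ := by
    intro h
    apply hM1
    have : M.map H₁.subtype ≤ ⊥ := h ▸ Subgroup.subset_normalClosure
    rw [le_bot_iff, Subgroup.map_eq_bot_iff_of_injective _ H₁.subtype_injective] at this
    exact this
  rw [Group.isSolvable_iff_subgroup_quotient N]
  refine ⟨hNs, ?_⟩
  have hlt : Nat.card (G ⧸ N) < n := by
    have := Subgroup.card_eq_card_quotient_mul_card_subgroup N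
    have h4 : 1 < Nat.card N := by
      rw [Subgroup.one_lt_card_iff_ne_bot]; exact hN1
    have h5 : 0 < Nat.card (G ⧸ N) := Nat.card_pos
    rw [← hn, this]
    nlinarith
  have hs : ∀ H : Subgroup G, Group.IsSolvable H →
      Group.IsSolvable (H.map (QuotientGroup.mk' N)) := fun H _ =>
    Group.isSolvable_of_surjective (f := (QuotientGroup.mk' N).subgroupMap H)
      ((QuotientGroup.mk' N).subgroupMap_surjective H)
  have hi : ∀ H : Subgroup G, (H.map (QuotientGroup.mk' N)).index ∣ H.index := fun H =>
    Subgroup.index_map_dvd H (QuotientGroup.mk'_surjective N)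
  exact ih _ hlt _ _ _ rfl (hs H₁ s₁) (hs H₂ s₂) (hs H₃ s₃)
    (Nat.Coprime.of_dvd (hi _) (hi _) h12) (Nat.Coprime.of_dvd (hi _) (hi _) h13)
    (Nat.Coprime.of_dvd (hi _) (hi _) h23)

/-- A finite group of order `n` with a compatible family of Hall subgroups, one of order `m` for
each factorization `n = m * m'` into coprime factors, is solvable. -/
theorem isSolvable_of_hall_family {G : Type*} [Group G] [Finite G] (H : ℕ → Subgroup G)
    (hH : ∀ m m', m * m' = Nat.card G → m.Coprime m' → Nat.card (H m) = m)
    (hle : ∀ m m', m ∣ m' → H m ≤ H m') : Group.IsSolvable G := by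
  have key : ∀ m m', m * m' = Nat.card G → m.Coprime m' → Group.IsSolvable (H m) := by
    intro m
    induction m using Nat.strong_induction_on with
    | _ m ih =>
    intro m' hmm hc
    have hm0 : m ≠ 0 := by
      rintro rfl
      rw [zero_mul] at hmm
      exact Nat.card_pos.ne hmm
    -- the Hall subgroup of `H m` of index a power of `p` is solvable by induction
    have step : ∀ p : ℕ, p.Prime → p ∣ m →
        Group.IsSolvable ((H (ordCompl[p] m)).subgroupOf (H m)) ∧
          ((H (ordCompl[p] m)).subgroupOf (H m)).index = ordProj[p] m := by
      intro p hp hpm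
      have h1 : ordProj[p] m * ordCompl[p] m = m := Nat.ordProj_mul_ordCompl_eq_self m p
      have h2 : ordCompl[p] m * (ordProj[p] m * m') = Nat.card G := by
        rw [← hmm]; conv_rhs => rw [← h1]
        ring
      have h3 : (ordCompl[p] m).Coprime (ordProj[p] m * m') :=
        Nat.Coprime.mul_right ((Nat.coprime_ordCompl hp hm0).pow_left _).symm
          (Nat.Coprime.coprime_dvd_left (Nat.ordCompl_dvd m p) hc)
      have h4 : ordCompl[p] m < m := by
        refine Nat.div_lt_self (Nat.pos_of_ne_zero hm0)
          (Nat.one_lt_pow ?_ hp.one_lt)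
        exact (hp.factorization_pos_of_dvd hm0 hpm).ne'
      have h5 := hle _ _ (Nat.ordCompl_dvd m p)
      have h6 := ih _ h4 _ h2 h3
      refine ⟨Group.isSolvable_of_isSolvable_injective
        (f := (Subgroup.subgroupOfEquivOfLe h5).toMonoidHom)
        (Subgroup.subgroupOfEquivOfLe h5).injective, ?_⟩
      have h7 := Subgroup.card_mul_index ((H (ordCompl[p] m)).subgroupOf (H m))
      rw [Nat.card_congr (Subgroup.subgroupOfEquivOfLe h5).toEquiv, hH _ _ h2 h3,
        hH _ _ hmm hc] at h7
      refine Nat.eq_of_mul_eq_mul_left (Nat.ordCompl_pos p hm0) ?_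
      rw [h7, mul_comm, h1]
    have hcop : ∀ p q : ℕ, p.Prime → q.Prime → p ≠ q → (ordProj[p] m).Coprime (ordProj[q] m) :=
      fun p q hp hq hpq => Nat.coprime_pow_primes _ _ hp hq hpq
    by_cases h3 : 2 < m.primeFactors.card
    · obtain ⟨p, hp, q, hq, r, hr, hpq, hpr, hqr⟩ := Finset.two_lt_card.1 h3
      obtain ⟨hp, hpm, -⟩ := Nat.mem_primeFactors.1 hp
      obtain ⟨hq, hqm, -⟩ := Nat.mem_primeFactors.1 hq
      obtain ⟨hr, hrm, -⟩ := Nat.mem_primeFactors.1 hr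
      obtain ⟨sp, ip⟩ := step p hp hpm
      obtain ⟨sq, iq⟩ := step q hq hqm
      obtain ⟨sr, ir⟩ := step r hr hrm
      refine isSolvable_of_three_coprime_index _ _ _ _ rfl sp sq sr ?_ ?_ ?_
      · rw [ip, iq]; exact hcop p q hp hq hpq
      · rw [ip, ir]; exact hcop p r hp hr hpr
      · rw [iq, ir]; exact hcop q r hq hr hqr
    · obtain ⟨p, q, hp, hq, hsub⟩ : ∃ p q : ℕ, p.Prime ∧ q.Prime ∧ m.primeFactors ⊆ {p, q} := by
        have hpr : ∀ x ∈ m.primeFactors, x.Prime := fun x hx => Nat.prime_of_mem_primeFactors hx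
        obtain h | h | h : m.primeFactors.card = 0 ∨ m.primeFactors.card = 1 ∨
          m.primeFactors.card = 2 := by omega
        · exact ⟨2, 2, Nat.prime_two, Nat.prime_two, by simp [Finset.card_eq_zero.1 h]⟩
        · obtain ⟨p, hp⟩ := Finset.card_eq_one.1 h
          have := hpr p (by simp [hp])
          exact ⟨p, p, this, this, by simp [hp]⟩
        · obtain ⟨p, q, -, hpq⟩ := Finset.card_eq_two.1 h
          exact ⟨p, q, hpr p (by simp [hpq]), hpr q (by simp [hpq]), hpq.le⟩
      refine isSolvable_of_card_dvd_two_primes hp hq (m.factorization p) (m.factorization q) m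
        (hH _ _ hmm hc) ?_
      rw [← Nat.factorization_le_iff_dvd hm0
        (mul_ne_zero (pow_ne_zero _ hp.ne_zero) (pow_ne_zero _ hq.ne_zero))]
      intro r
      rw [Nat.factorization_mul (pow_ne_zero _ hp.ne_zero) (pow_ne_zero _ hq.ne_zero),
        hp.factorization_pow, hq.factorization_pow, Finsupp.add_apply]
      by_cases hr : r ∈ m.primeFactors
      · have := hsub hr
        simp only [Finset.mem_insert, Finset.mem_singleton] at this
        rcases this with rfl | rfl <;> simp
      · rw [← Nat.support_factorization, Finsupp.notMem_support_iff] at hr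
        rw [hr]; exact Nat.zero_le _
  have h1 := key (Nat.card G) 1 (mul_one _) (Nat.coprime_one_right _)
  have h2 : H (Nat.card G) = ⊤ := (Subgroup.card_eq_iff_eq_top _).1
    (hH (Nat.card G) 1 (mul_one _) (Nat.coprime_one_right _))
  rw [h2] at h1
  exact Group.isSolvable_of_surjective (f := (⊤ : Subgroup G).subtype) fun x => ⟨⟨x, trivial⟩, rfl⟩

/-! ### Bijective cocycles and transitive actions -/

/-- In a finite abelian group of order `m * m'` with `m`, `m'` coprime, the elements killed by `m`
form a subgroup of order `m`. -/
theorem card_ker_nsmul_of_coprime {A : Type*} [AddCommGroup A] [Finite A] {m m' : ℕ}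
    (h : m * m' = Nat.card A) (hc : m.Coprime m') :
    Nat.card (nsmulAddMonoidHom (α := A) m).ker = m := by
  have hA : Nat.card A ≠ 0 := Nat.card_pos.ne'
  have hle : ∀ m m', m * m' = Nat.card A → m.Coprime m' →
      Nat.card (nsmulAddMonoidHom (α := A) m).ker ≤ m := by
    intro m m' h hc
    have hm0 : m ≠ 0 := by rintro rfl; simp at h; exact hA h.symm
    have hcop : (Nat.card (nsmulAddMonoidHom (α := A) m).ker).Coprime m' := by
      refine Nat.coprime_of_dvd fun r hr h1 h2 => ?_
      have : Fact r.Prime := ⟨hr⟩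
      obtain ⟨a, ha⟩ := exists_prime_addOrderOf_dvd_card' r h1
      have h3 : m • (a : A) = 0 := a.2
      have h4 : r ∣ m := by
        rw [← ha]
        exact addOrderOf_dvd_of_nsmul_eq_zero (by ext; simpa using h3)
      exact hr.one_lt.ne' (Nat.eq_one_of_dvd_coprimes hc h4 h2)
    refine Nat.le_of_dvd (Nat.pos_of_ne_zero hm0) (hcop.dvd_of_dvd_mul_right ?_)
    rw [h]
    exact AddSubgroup.card_addSubgroup_dvd_card _
  have h1 := hle m m' h hc
  have h2 := hle m' m (by rw [mul_comm, h]) hc.symm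
  have h3 : (nsmulAddMonoidHom (α := A) m).range ≤ (nsmulAddMonoidHom (α := A) m').ker := by
    rintro _ ⟨a, rfl⟩
    show m' • m • a = 0
    rw [smul_smul, mul_comm, h, card_nsmul_eq_zero']
  have h4 : Nat.card (nsmulAddMonoidHom (α := A) m).range ≤
      Nat.card (nsmulAddMonoidHom (α := A) m').ker :=
    Nat.card_le_card_of_injective _ (AddSubgroup.inclusion_injective h3)
  have h5 := AddSubgroup.card_mul_index (nsmulAddMonoidHom (α := A) m).ker
  rw [AddSubgroup.index_ker, ← h] at h5
  have hm0 : 0 < m' := Nat.pos_of_ne_zero (by rintro rfl; simp at h; exact hA h.symm)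
  nlinarith

section Core

variable {G A X : Type*} [Group G] [AddCommGroup A] [DistribMulAction G A]

theorem cocycle_one {π : G ≃ A} (hπ : ∀ g h, π (g * h) = π g + g • π h) : π 1 = 0 := by
  have := hπ 1 1
  simpa using this

/-- The subgroup of elements whose value under a `1`-cocycle `π` is killed by `m`. -/
def torsionSubgroup (π : G ≃ A) (hπ : ∀ g h, π (g * h) = π g + g • π h) (m : ℕ) : Subgroup G where
  carrier := {g | m • π g = 0}
  one_mem' := by simp [cocycle_one hπ]
  mul_mem' := by
    intro g h hg hh
    have hg' : m • π g = 0 := hg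
    have hh' : m • π h = 0 := hh
    show m • π (g * h) = 0
    rw [hπ, smul_add, hg', zero_add, smul_comm, hh', smul_zero]
  inv_mem' := by
    intro g hg
    have hg' : m • π g = 0 := hg
    show m • π g⁻¹ = 0
    have h := hπ g g⁻¹
    rw [mul_inv_cancel, cocycle_one hπ] at h
    have h1 := congrArg (m • ·) h
    simp only [smul_zero, smul_add, hg', zero_add] at h1
    rw [smul_comm, eq_comm, smul_eq_zero_iff_eq] at h1
    exact h1

theorem mem_torsionSubgroup {π : G ≃ A} {hπ : ∀ g h, π (g * h) = π g + g • π h} {m : ℕ} {g : G} :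
    g ∈ torsionSubgroup π hπ m ↔ m • π g = 0 := Iff.rfl

theorem card_torsionSubgroup [Finite A] (π : G ≃ A) (hπ : ∀ g h, π (g * h) = π g + g • π h)
    {m m' : ℕ} (h : m * m' = Nat.card A) (hc : m.Coprime m') :
    Nat.card (torsionSubgroup π hπ m) = m := by
  exact (Nat.card_congr (π.subtypeEquiv fun _ => Iff.rfl)).trans (card_ker_nsmul_of_coprime h hc)

/-- A finite group with a bijective `1`-cocycle into an abelian group is solvable. -/
theorem isSolvable_of_bijective_cocycle [Finite G] (π : G ≃ A)
    (hπ : ∀ g h, π (g * h) = π g + g • π h) : Group.IsSolvable G := by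
  have : Finite A := Finite.of_equiv G π
  refine isSolvable_of_hall_family (torsionSubgroup π hπ) (fun m m' h hc => ?_) ?_
  · exact card_torsionSubgroup π hπ (h.trans (Nat.card_congr π)) hc
  · rintro m _ ⟨k, rfl⟩ g hg
    rw [mem_torsionSubgroup] at hg ⊢
    rw [mul_comm, mul_smul, hg, smul_zero]

/-- A finite group with a bijective `1`-cocycle into `A` cannot act faithfully on a set `X` with
more than one point which embeds equivariantly as a generating set of `A`, if all nontrivial normal
subgroups are transitive on `X`. -/
theorem false_of_bijective_cocycle [Finite G] [MulAction G X] [FaithfulSMul G X] (π : G ≃ A)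
    (hπ : ∀ g h, π (g * h) = π g + g • π h) (ι : X → A) (hι : Function.Injective ι)
    (hιG : ∀ (g : G) x, ι (g • x) = g • ι x) (hspan : AddSubgroup.closure (Set.range ι) = ⊤)
    (htr : ∀ N : Subgroup G, N.Normal → N ≠ ⊥ → ∀ x y : X, ∃ n ∈ N, n • x = y)
    (hG : Nontrivial G) (x₀ x₁ : X) (hx : x₀ ≠ x₁) : False := by
  have : Finite A := Finite.of_equiv G π
  have := isSolvable_of_bijective_cocycle π hπ
  obtain ⟨p, hp, N, hN, hN1, hNp⟩ := exists_normal_pgroup_of_isSolvable G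
  have : Fact p.Prime := ⟨hp⟩
  have hA0 : Nat.card A ≠ 0 := Nat.card_pos.ne'
  obtain ⟨q, m', hq, hqm, hqc, hpm⟩ : ∃ q m', (∃ k, q = p ^ k) ∧ q * m' = Nat.card A ∧
      q.Coprime m' ∧ ¬ p ∣ m' :=
    ⟨_, _, ⟨_, rfl⟩, Nat.ordProj_mul_ordCompl_eq_self (Nat.card A) p,
      (Nat.coprime_ordCompl hp hA0).pow_left _, Nat.not_dvd_ordCompl hp hA0⟩
  set H := torsionSubgroup π hπ q with hHdef
  have hHcard : Nat.card H = q := card_torsionSubgroup π hπ hqm hqc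
  have hHp : IsPGroup p H := by
    obtain ⟨k, hk⟩ := hq
    exact IsPGroup.of_card (hHcard.trans hk)
  -- `H` is a Sylow `p`-subgroup, so it contains `N`
  have hNH : N ≤ H := by
    have hi : ¬ p ∣ H.index := by
      have h1 := H.card_mul_index
      rw [hHcard, Nat.card_congr π, ← hqm] at h1
      rw [Nat.eq_of_mul_eq_mul_left (Nat.pos_of_ne_zero (by rintro rfl; simp at hqm; exact hA0 hqm.symm)) h1]
      exact hpm
    exact hNp.le_sylow_of_normal (hHp.toSylow hi)
  have hNq : ∀ n ∈ N, ∀ a : A, q • n • a = q • a := by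
    intro n hn a
    obtain ⟨g, rfl⟩ := π.surjective a
    have h1 : q • π (g⁻¹ * n * g) = 0 := by
      have := hN.conj_mem n hn g⁻¹
      rw [inv_inv] at this
      exact mem_torsionSubgroup.1 (hNH this)
    have h2 : π (n * g) = π (g * (g⁻¹ * n * g)) := by congr 1; group
    rw [hπ, hπ] at h2
    have h3 := congrArg (q • ·) h2
    simp only [smul_add] at h3
    rw [mem_torsionSubgroup.1 (hNH hn), zero_add, smul_comm q g, h1, smul_zero, add_zero] at h3
    exact h3
  -- `N` is transitive on the generators `ι x` of `A`, so `G` acts trivially on `q • A`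
  have hGq : ∀ (g : G) (a : A), q • g • a = q • a := by
    intro g a
    have ha : a ∈ AddSubgroup.closure (Set.range ι) := hspan ▸ AddSubgroup.mem_top a
    induction ha using AddSubgroup.closure_induction with
    | mem a ha =>
      obtain ⟨x, rfl⟩ := ha
      obtain ⟨n, hn, hnx⟩ := htr N hN hN1 x (g • x)
      rw [← hιG, ← hnx, hιG, hNq n hn]
    | zero => simp
    | add a b _ _ ha hb => rw [smul_add, smul_add, ha, hb, smul_add]
    | neg a _ ha => rw [smul_neg, smul_neg, ha, smul_neg]
  have hHn : H.Normal := by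
    refine ⟨fun h hh g => ?_⟩
    rw [hHdef, mem_torsionSubgroup] at hh ⊢
    have h1 := congrArg (q • ·) (hπ g g⁻¹)
    simp only [mul_inv_cancel, cocycle_one hπ, smul_zero, smul_add, hGq] at h1
    rw [hπ, hπ, smul_add, smul_add, hGq, hGq, hh, add_zero]
    exact h1.symm
  have : Nontrivial H := by
    rw [Subgroup.nontrivial_iff_ne_bot]
    rintro h
    rw [h] at hNH
    exact hN1 (le_bot_iff.1 hNH)
  have hZ := hHp.center_nontrivial
  -- the centre of `H` is transitive and commutes with `H`, so `H` acts freely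
  have hfree : ∀ h ∈ H, h • x₀ = x₀ → h = 1 := by
    intro h hh hx0
    refine FaithfulSMul.eq_of_smul_eq_smul (α := X) fun y => ?_
    obtain ⟨z, ⟨z, hz, rfl⟩, hzy⟩ := htr ((Subgroup.center H).map H.subtype) inferInstance
      (by
        rw [Ne, Subgroup.map_eq_bot_iff_of_injective _ H.subtype_injective]
        exact (Subgroup.nontrivial_iff_ne_bot _).1 hZ) x₀ y
    have hc : h * z = z * h := congrArg Subtype.val (Subgroup.mem_center_iff.1 hz ⟨h, hh⟩)
    rw [← hzy, one_smul, smul_smul]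
    show (h * (z : G)) • x₀ = (z : G) • x₀
    rw [hc, mul_smul, hx0]
  let f : H → (nsmulAddMonoidHom (α := A) q).ker := fun h =>
    ⟨ι ((h : G) • x₀) - ι x₀, by
      show q • (ι ((h : G) • x₀) - ι x₀) = 0
      rw [smul_sub, hιG, hGq, sub_self]⟩
  have hf : Function.Injective f := by
    intro h h' he
    have h1 : ι ((h : G) • x₀) = ι ((h' : G) • x₀) := sub_left_injective (congrArg Subtype.val he)
    have h2 := hfree _ (H.mul_mem (H.inv_mem h'.2) h.2) (by
      rw [mul_smul, hι h1, inv_smul_smul])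
    exact Subtype.ext (inv_mul_eq_one.1 h2).symm
  have hfs : Function.Surjective f :=
    ((Nat.bijective_iff_injective_and_card f).2
      ⟨hf, by rw [hHcard, card_ker_nsmul_of_coprime hqm hqc]⟩).2
  -- hence the image of `X` is a full coset of `A[q]`, which meets `q • A`
  obtain ⟨s, t, hst⟩ := Nat.isCoprime_iff_coprime.2 hqc
  have hk : (s * q) • ι x₀ - ι x₀ ∈ (nsmulAddMonoidHom (α := A) q).ker := by
    show q • ((s * q) • ι x₀ - ι x₀) = 0
    have h1 : (s * q) • ι x₀ - ι x₀ = -(t • m' • ι x₀) := by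
      rw [eq_sub_of_add_eq hst, sub_smul, one_smul, mul_smul, natCast_zsmul]
      abel
    rw [h1, smul_neg, smul_comm q t, smul_smul q m', hqm, card_nsmul_eq_zero', smul_zero, neg_zero]
  obtain ⟨h, hh⟩ := hfs ⟨_, hk⟩
  have h1 : ι ((h : G) • x₀) = (s * q) • ι x₀ := sub_left_injective (congrArg Subtype.val hh)
  have hfix : ∀ g : G, g • ((h : G) • x₀) = (h : G) • x₀ := by
    intro g
    apply hι
    rw [hιG, h1, mul_smul, natCast_zsmul, smul_comm g s, smul_comm g q, hGq]
  obtain ⟨n₀, -, h₀⟩ := htr N hN hN1 ((h : G) • x₀) x₀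
  obtain ⟨n₁, -, h₁⟩ := htr N hN hN1 ((h : G) • x₀) x₁
  exact hx (by rw [← h₀, ← h₁, hfix, hfix])

end Core

/-! ### The left brace of a finite cycle set -/

namespace CycleSet

section Brace

variable {Y : Type} (C : CycleSet Y)

/-- The extension of `σ` to words: `σ_{x l} = σ_{x·l} σ_x`, where `x·l` is the letterwise image
of `l` under `σ_x`. -/
noncomputable def listPerm : List Y → Equiv.Perm Y
  | [] => 1
  | x :: l => listPerm (l.map (C.op x)) * C.sigma x
termination_by l => l.length
decreasing_by simp

/-- The permutation `σ_l` does not depend on the order of the letters of `l`; for a swap of two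
letters this is the cycle set equation. The letterwise map `f` strengthens the induction. -/
theorem listPerm_map_eq_of_perm {l l' : List Y} (h : l.Perm l') :
    ∀ f : Y → Y, C.listPerm (l.map f) = C.listPerm (l'.map f) := by
  induction h with
  | nil => intro f; rfl
  | cons x _ ih =>
    intro f
    simp only [List.map_cons, listPerm, List.map_map]
    rw [ih]
  | swap x y l =>
    intro f
    simp only [List.map_cons, listPerm, List.map_map, mul_assoc]
    have h1 : C.op (C.op (f y) (f x)) ∘ C.op (f y) ∘ f
        = C.op (C.op (f x) (f y)) ∘ C.op (f x) ∘ f := by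
      funext z
      exact C.cyc _ _ _
    have h2 : C.sigma (C.op (f y) (f x)) * C.sigma (f y)
        = C.sigma (C.op (f x) (f y)) * C.sigma (f x) := by
      ext z
      exact C.cyc _ _ _
    rw [h1, h2]
  | trans _ _ ih₁ ih₂ => exact fun f => (ih₁ f).trans (ih₂ f)

/-- The extension `a ↦ σ_a` of `σ` to the free commutative monoid on `Y`. -/
noncomputable def mperm (m : Multiset Y) : Equiv.Perm Y :=
  Quot.liftOn m C.listPerm fun l l' h => by
    have := C.listPerm_map_eq_of_perm h id
    rwa [List.map_id, List.map_id] at this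

theorem mperm_zero : C.mperm 0 = 1 := by
  show C.listPerm [] = 1
  rw [listPerm]

theorem mperm_cons (x : Y) (m : Multiset Y) :
    C.mperm (x ::ₘ m) = C.mperm (m.map (C.op x)) * C.sigma x := by
  induction m using Quot.inductionOn with
  | _ l =>
    show C.listPerm (x :: l) = C.listPerm (l.map (C.op x)) * C.sigma x
    rw [listPerm]

theorem mperm_singleton (x : Y) : C.mperm {x} = C.sigma x := by
  rw [← Multiset.cons_zero, mperm_cons, Multiset.map_zero, mperm_zero, one_mul]

theorem mperm_add_aux (a : Multiset Y) : ∀ (f : Y → Y) (b : Multiset Y),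
    C.mperm (a.map f + b) = C.mperm (b.map (C.mperm (a.map f))) * C.mperm (a.map f) := by
  induction a using Multiset.induction with
  | empty => intro f b; simp [mperm_zero]
  | cons x a ih =>
    intro f b
    have h := ih (C.op (f x) ∘ f) (b.map (C.op (f x)))
    rw [Multiset.map_cons, Multiset.cons_add, mperm_cons, mperm_cons, Multiset.map_add,
      Multiset.map_map, h, Multiset.map_map, mul_assoc]
    rfl

/-- The cocycle rule `σ_{a+b} = σ_{a·b} σ_a`, where `a·b` is the image of `b` under `σ_a`. -/
theorem mperm_add (a b : Multiset Y) :
    C.mperm (a + b) = C.mperm (b.map (C.mperm a)) * C.mperm a := by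
  have := C.mperm_add_aux a id b
  rwa [Multiset.map_id] at this

theorem mperm_mul (a b : Multiset Y) :
    C.mperm b * C.mperm a = C.mperm (a + b.map ⇑(C.mperm a)⁻¹) := by
  rw [mperm_add, Multiset.map_map]
  congr 2
  conv_lhs => rw [← Multiset.map_id b]
  refine Multiset.map_congr rfl fun z _ => ?_
  simp

theorem mperm_mem (m : Multiset Y) : C.mperm m ∈ C.G := by
  suffices h : ∀ f : Y → Y, C.mperm (m.map f) ∈ C.G by simpa using h id
  induction m using Multiset.induction with
  | empty => intro f; rw [Multiset.map_zero, mperm_zero]; exact one_mem _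
  | cons x a ih =>
    intro f
    rw [Multiset.map_cons, mperm_cons, Multiset.map_map]
    exact mul_mem (ih _) (Subgroup.subset_closure ⟨_, rfl⟩)

/-- The permutations `σ_a` exhaust the group `G(Y)`. -/
theorem exists_mperm_eq [Finite Y] {g : Equiv.Perm Y} (hg : g ∈ C.G) : ∃ m, C.mperm m = g := by
  let R : Submonoid (Equiv.Perm Y) :=
    { carrier := Set.range C.mperm
      one_mem' := ⟨0, C.mperm_zero⟩
      mul_mem' := by
        rintro _ _ ⟨b, rfl⟩ ⟨a, rfl⟩
        exact ⟨_, (C.mperm_mul a b).symm⟩ }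
  show g ∈ R
  induction hg using Subgroup.closure_induction with
  | mem g hg => obtain ⟨x, rfl⟩ := hg; exact ⟨{x}, C.mperm_singleton x⟩
  | one => exact R.one_mem
  | mul a b _ _ ha hb => exact R.mul_mem ha hb
  | inv a _ ha =>
    -- inverses in a finite group are powers
    have h : a ^ (orderOf a - 1) * a = 1 := by
      rw [← pow_succ, Nat.sub_add_cancel (orderOf_pos a), pow_orderOf_eq_one]
    rw [← eq_inv_of_mul_eq_one_left h]
    exact R.pow_mem ha _

theorem mperm_add_congr {a b c d : Multiset Y} (h₁ : C.mperm a = C.mperm b)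
    (h₂ : C.mperm c = C.mperm d) : C.mperm (a + c) = C.mperm (b + d) := by
  rw [add_comm a c, mperm_add, h₂, ← mperm_add, add_comm d a, mperm_add, h₁, ← mperm_add]

/-- The congruence `σ_b = σ_c` is stable under the action of `G(Y)`. -/
theorem mperm_map_congr [Finite Y] {g : Equiv.Perm Y} (hg : g ∈ C.G) {b c : Multiset Y}
    (h : C.mperm b = C.mperm c) : C.mperm (b.map g) = C.mperm (c.map g) := by
  obtain ⟨a, rfl⟩ := C.exists_mperm_eq hg
  have := C.mperm_add_congr (a := a) rfl h
  rwa [mperm_add, mperm_add, mul_left_inj] at this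

/-- The congruence `a ∼ b ↔ σ_a = σ_b` on the free commutative monoid on `Y`. -/
def permCon : AddCon (Multiset Y) where
  r a b := C.mperm a = C.mperm b
  iseqv := ⟨fun _ => rfl, Eq.symm, Eq.trans⟩
  add' := C.mperm_add_congr

/-- The additive group of the left brace on `G(Y)`: the free commutative monoid on `Y` modulo
`a ∼ b ↔ σ_a = σ_b`. -/
def BraceAdd : Type := C.permCon.Quotient

noncomputable instance : AddCommMonoid C.BraceAdd :=
  inferInstanceAs (AddCommMonoid C.permCon.Quotient)

/-- The class of a multiset. -/
def toBrace : Multiset Y →+ C.BraceAdd := C.permCon.mk'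

theorem toBrace_surjective : Function.Surjective C.toBrace := AddCon.mk'_surjective

theorem toBrace_eq {a b : Multiset Y} : C.toBrace a = C.toBrace b ↔ C.mperm a = C.mperm b :=
  AddCon.eq C.permCon

theorem exists_neg_brace [Finite Y] (q : C.BraceAdd) : ∃ q' : C.BraceAdd, q' + q = 0 := by
  obtain ⟨a, rfl⟩ := C.toBrace_surjective q
  obtain ⟨c, hc⟩ := C.exists_mperm_eq (inv_mem (C.mperm_mem a))
  refine ⟨C.toBrace (c.map ⇑(C.mperm a)⁻¹), ?_⟩
  rw [← map_add, ← map_zero C.toBrace, toBrace_eq, add_comm, ← mperm_mul, hc, mperm_zero,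
    inv_mul_cancel]

noncomputable instance [Finite Y] : Neg C.BraceAdd := ⟨fun q => (C.exists_neg_brace q).choose⟩

noncomputable instance [Finite Y] : AddCommGroup C.BraceAdd :=
  { (inferInstance : AddCommMonoid C.BraceAdd), (inferInstance : Neg C.BraceAdd) with
    zsmul := zsmulRec
    neg_add_cancel := fun q => (C.exists_neg_brace q).choose_spec }

/-- The additive endomorphism of the brace induced by the action of `g ∈ G(Y)` on `Y`. -/
noncomputable def braceMap [Finite Y] (g : C.G) : C.BraceAdd →+ C.BraceAdd :=
  C.permCon.lift (C.toBrace.comp (Multiset.mapAddMonoidHom (g : Equiv.Perm Y)))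
    fun _ _ h => C.toBrace_eq.2 (C.mperm_map_congr g.2 h)

theorem braceMap_toBrace [Finite Y] (g : C.G) (a : Multiset Y) :
    C.braceMap g (C.toBrace a) = C.toBrace (a.map (g : Equiv.Perm Y)) := rfl

noncomputable instance [Finite Y] : DistribMulAction C.G C.BraceAdd where
  smul g q := C.braceMap g q
  one_smul q := by
    obtain ⟨a, rfl⟩ := C.toBrace_surjective q
    show C.braceMap 1 _ = _
    rw [braceMap_toBrace]
    exact congrArg _ (Multiset.map_id a)
  mul_smul g h q := by
    obtain ⟨a, rfl⟩ := C.toBrace_surjective q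
    show C.braceMap _ _ = C.braceMap _ (C.braceMap _ _)
    rw [braceMap_toBrace, braceMap_toBrace, braceMap_toBrace, Multiset.map_map]
    rfl
  smul_zero g := map_zero (C.braceMap g)
  smul_add g := map_add (C.braceMap g)

theorem smul_toBrace [Finite Y] (g : C.G) (a : Multiset Y) :
    g • C.toBrace a = C.toBrace (a.map (g : Equiv.Perm Y)) := rfl

/-- The permutation group carries a bijective `1`-cocycle with values in the additive group of the
brace. -/
theorem exists_cocycle [Finite Y] : ∃ π : C.G ≃ C.BraceAdd, ∀ g h, π (g * h) = π g + g • π h := by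
  -- `π` is the inverse of `a ↦ σ_a⁻¹`
  have hex : ∀ g : C.G, ∃ a, C.mperm a = (g : Equiv.Perm Y)⁻¹ := fun g =>
    C.exists_mperm_eq (inv_mem g.2)
  choose r hr using hex
  have hinj : Function.Injective fun g => C.toBrace (r g) := by
    intro g h hgh
    have := C.toBrace_eq.1 hgh
    rw [hr, hr, inv_inj] at this
    exact Subtype.ext this
  have hsurj : Function.Surjective fun g => C.toBrace (r g) := by
    intro q
    obtain ⟨a, rfl⟩ := C.toBrace_surjective q
    refine ⟨⟨(C.mperm a)⁻¹, inv_mem (C.mperm_mem a)⟩, C.toBrace_eq.2 ?_⟩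
    rw [hr, inv_inv]
  refine ⟨Equiv.ofBijective _ ⟨hinj, hsurj⟩, fun g h => ?_⟩
  show C.toBrace (r (g * h)) = C.toBrace (r g) + g • C.toBrace (r h)
  have hg : (g : Equiv.Perm Y) = (C.mperm (r g))⁻¹ := by rw [hr, inv_inv]
  rw [smul_toBrace, ← map_add, toBrace_eq, hr, hg, ← mperm_mul, hr, hr]
  simp

/-- In a primitive cycle set, nontrivial normal subgroups of the permutation group are transitive,
since their orbits are blocks. -/
theorem Primitive.exists_mem_normal_apply_eq {C : CycleSet Y} (hC : C.Primitive)
    (N : Subgroup C.G) (hN : N.Normal) (hN1 : N ≠ ⊥) (x y : Y) : ∃ n ∈ N, n • x = y := by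
  have hblock : C.IsBlock {z | ∃ n ∈ N, n • x = z} := by
    intro g hg
    rw [or_iff_not_imp_right]
    intro hd
    rw [Set.not_disjoint_iff] at hd
    obtain ⟨_, ⟨_, ⟨n, hn, rfl⟩, rfl⟩, m, hm, hmn⟩ := hd
    -- `g n x = m x`, so `g` maps the orbit of `x` to the orbit of `x`
    have hmn' : m • x = (⟨g, hg⟩ : C.G) • n • x := hmn
    set γ : C.G := ⟨g, hg⟩
    have hγ : γ • x = (γ * n⁻¹ * γ⁻¹ * m) • x := by
      rw [mul_smul, hmn']
      simp [smul_smul]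
    have hmem : γ * n⁻¹ * γ⁻¹ * m ∈ N := N.mul_mem (hN.conj_mem _ (N.inv_mem hn) γ) hm
    ext z
    constructor
    · rintro ⟨_, ⟨k, hk, rfl⟩, rfl⟩
      refine ⟨γ * k * γ⁻¹ * (γ * n⁻¹ * γ⁻¹ * m), N.mul_mem (hN.conj_mem _ hk γ) hmem, ?_⟩
      rw [mul_smul, ← hγ, smul_smul]
      show _ = γ • k • x
      rw [smul_smul]
      simp
    · rintro ⟨k, hk, rfl⟩
      refine ⟨_, ⟨γ⁻¹ * (k * (γ * n⁻¹ * γ⁻¹ * m)⁻¹) * γ, ?_, rfl⟩, ?_⟩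
      · have := hN.conj_mem _ (N.mul_mem hk (N.inv_mem hmem)) γ⁻¹
        rwa [inv_inv] at this
      · show γ • (_ • x) = k • x
        rw [mul_smul, hγ, mul_smul, smul_inv_smul, smul_smul, mul_assoc, inv_mul_cancel, mul_one]
  rcases hC.2 _ hblock with hs | hs
  · exfalso
    apply hN1
    rw [eq_bot_iff]
    intro n hn
    rw [Subgroup.mem_bot]
    refine FaithfulSMul.eq_of_smul_eq_smul (α := Y) fun z => ?_
    obtain ⟨g, hg, rfl⟩ := hC.1 x z
    have h1 := hN.conj_mem n hn (⟨g, hg⟩ : C.G)⁻¹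
    have h2 := hs ⟨_, h1, rfl⟩ ⟨1, N.one_mem, rfl⟩
    rw [inv_inv, one_smul, mul_smul, mul_smul, inv_smul_eq_iff] at h2
    rw [one_smul]
    exact h2
  · have : y ∈ {z | ∃ n ∈ N, n • x = z} := hs ▸ Set.mem_univ y
    exact this

end Brace

/-- A cycle set with more than one element and pairwise distinct left multiplications is not
primitive. -/
theorem not_primitive_of_sigma_injective {Y : Type} [Finite Y] (C : CycleSet Y)
    (hσ : Function.Injective C.sigma) (hcard : 1 < Nat.card Y) : ¬ C.Primitive := by
  intro hC
  obtain ⟨x₀, x₁, hx⟩ := (Finite.one_lt_card_iff_nontrivial.1 hcard).exists_pair_ne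
  obtain ⟨π, hπ⟩ := C.exists_cocycle
  refine false_of_bijective_cocycle π hπ (fun x => C.toBrace {x}) ?_ ?_ ?_
    hC.exists_mem_normal_apply_eq ?_ x₀ x₁ hx
  · intro x y hxy
    have := C.toBrace_eq.1 hxy
    rw [mperm_singleton, mperm_singleton] at this
    exact hσ this
  · intro g x
    show _ = g • C.toBrace {x}
    rw [smul_toBrace, Multiset.map_singleton]
    rfl
  · rw [eq_top_iff]
    rintro q -
    obtain ⟨a, rfl⟩ := C.toBrace_surjective q
    induction a using Multiset.induction with
    | empty => rw [map_zero]; exact zero_mem _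
    | cons x a ih =>
      rw [← Multiset.singleton_add, map_add]
      exact add_mem (AddSubgroup.subset_closure ⟨x, rfl⟩) ih
  · exact ⟨⟨_, Subgroup.subset_closure ⟨x₀, rfl⟩⟩, ⟨_, Subgroup.subset_closure ⟨x₁, rfl⟩⟩,
      fun h => hx (hσ (congrArg Subtype.val h))⟩

end CycleSet

theorem IsLatin.sigma_injective {Y : Type} {C : CycleSet Y} (h : IsLatin C) :
    Function.Injective C.sigma := fun x _ hxy =>
  (h x).1 (congrArg (fun g : Equiv.Perm Y => g x) hxy)

/-- Finite epimorphic images of latin cycle sets are latin. -/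
theorem IsLatin.of_surjective {Y Z : Type} [Finite Z] {C : CycleSet Y} {D : CycleSet Z}
    (h : IsLatin C) {p : Y → Z} (hp : Function.Surjective p) (hom : IsHom C D p) : IsLatin D := by
  intro z
  refine Finite.surjective_iff_bijective.1 fun w => ?_
  obtain ⟨x, rfl⟩ := hp z
  obtain ⟨y, rfl⟩ := hp w
  obtain ⟨u, rfl⟩ := (h x).2 y
  exact ⟨p u, (hom u x).symm⟩

theorem statement_11 {X : Type} [Finite X] (C : CycleSet X)
    (hnd : C.Nondeg) (hlatin : IsLatin C) (hcard : 1 < Nat.card X) :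
    ¬ C.HasFPL := by
  rintro ⟨k, hk, T, hT, CS, e, he, hehom, hc, hp, hprim⟩
  have key : ∀ i, i < k → IsLatin (CS i) ∧ 1 < Nat.card (T i) := by
    intro i
    induction i with
    | zero =>
      intro _
      exact ⟨hlatin.of_surjective he.2 hehom, by rwa [← Nat.card_congr (Equiv.ofBijective e he)]⟩
    | succ i ih =>
      intro hi
      obtain ⟨p, hps, hphom⟩ := hp i hi
      exact ⟨(ih (by omega)).1.of_surjective hps hphom, (hc i hi).2⟩
  obtain ⟨h1, h2⟩ := key (k - 1) (by omega)
  exact not_primitive_of_sigma_injective _ h1.sigma_injective h2 hprim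
end

section
/- Let X be a finite non-degenerate indecomposable cycle set of finite primitive level with |X| > 1. Then X is not soluble at any point x_t ∈ X. -/
open CycleSet

/-- `X` is soluble at `xt`: there are subsets `X_t ⊆ ⋯ ⊆ X₁ ⊆ X₀ = X` with
`X_t = {xt}` such that for each `1 ≤ i ≤ t` there is a cycle set epimorphism
`f_i : X → Y_i` with `X_i` a fiber of `f_i` and `f_i(X_{i-1})` a trivial
sub-cycle set on which `a·b = b`. -/
def SolubleAt {X : Type} [Finite X] (C : CycleSet X) (xt : X) : Prop :=
  ∃ (t : ℕ) (Xs : ℕ → Set X),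
    Xs 0 = Set.univ ∧ Xs t = {xt} ∧ (∀ i, i < t → Xs (i + 1) ⊆ Xs i) ∧
    ∀ i, i < t → ∃ (Y : Type) (D : CycleSet Y) (f : X → Y),
      Function.Surjective f ∧ IsHom C D f ∧
      (∃ y : Y, Xs (i + 1) = f ⁻¹' {y}) ∧
      (∀ a ∈ f '' Xs i, ∀ b ∈ f '' Xs i, D.op a b = b)

/-- A homomorphism from an indecomposable cycle set whose target acts trivially on its image is
constant. -/
theorem IsHom.constant_of_trivial {X Y : Type} {C : CycleSet X} {D : CycleSet Y} {f : X → Y}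
    (hind : C.Indec) (hf : IsHom C D f) (htriv : ∀ a b : X, D.op (f a) (f b) = f b) (a b : X) :
    f a = f b := by
  have hinv : ∀ g ∈ C.G, ∀ z, f (g z) = f z := by
    intro g hg
    induction hg using Subgroup.closure_induction with
    | mem g hg =>
      obtain ⟨x, rfl⟩ := hg
      intro z
      exact (hf x z).trans (htriv x z)
    | one => intro z; rfl
    | mul g h _ _ ihg ihh => intro z; rw [Equiv.Perm.mul_apply, ihg, ihh]
    | inv g _ ih => intro z; simpa using (ih (g⁻¹ z)).symm
  obtain ⟨g, hg, rfl⟩ := hind a b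
  exact (hinv g hg a).symm

theorem statement_12 {X : Type} [Finite X] (C : CycleSet X)
    (hnd : C.Nondeg) (hind : C.Indec) (hfpl : C.HasFPL) (hcard : 1 < Nat.card X) :
    ∀ xt : X, ¬ SolubleAt C xt := by
  rintro xt ⟨t, Xs, h0, ht, -, hstep⟩
  have huniv : ∀ i, i ≤ t → Xs i = Set.univ := by
    intro i
    induction i with
    | zero => exact fun _ => h0
    | succ i ih =>
      intro hi
      obtain ⟨Y, D, f, hsurj, hf, ⟨y, hy⟩, htriv⟩ := hstep i hi
      rw [ih (Nat.le_of_succ_le hi)] at htriv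
      have hconst := IsHom.constant_of_trivial hind hf fun a b =>
        htriv _ ⟨a, Set.mem_univ a, rfl⟩ _ ⟨b, Set.mem_univ b, rfl⟩
      obtain ⟨x, rfl⟩ := hsurj y
      rw [hy, Set.eq_univ_iff_forall]
      exact fun z => hconst z x
  have hall : ∀ z : X, z = xt := fun z =>
    Set.eq_univ_iff_forall.mp (ht.symm.trans (huniv t le_rfl)) z
  have : Subsingleton X := ⟨fun a b => (hall a).trans (hall b).symm⟩
  exact hcard.not_ge (Finite.card_le_one_iff_subsingleton.mpr this)
end

section
/- Let X be a finite trivial indecomposable non-degenerate cycle set with |X| > 1. Then fpl(X) = 2 if and only if |X| = pq for prime numbers p and q (not necessarily distinct). -/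
open CycleSet

namespace CycleSet

/-! ### Cyclic cycle sets and their epimorphic images -/

/-- All left multiplications of `C` equal the permutation `s`, and the powers of `s` act
transitively. -/
def IsCyclic {X : Type} (C : CycleSet X) (s : Equiv.Perm X) : Prop :=
  (∀ x y, C.op x y = s y) ∧ ∀ x y, ∃ i : ℤ, (s ^ i) x = y

lemma exists_isCyclic {X : Type} (C : CycleSet X) (htriv : C.IsTrivial) (hind : C.Indec)
    (x₀ : X) : C.IsCyclic (C.sigma x₀) := by
  have hs : ∀ x, C.sigma x = C.sigma x₀ := fun x => Equiv.ext fun z => htriv x x₀ z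
  refine ⟨fun x y => htriv x x₀ y, fun x y => ?_⟩
  obtain ⟨g, hg, rfl⟩ := hind x y
  have hr : Set.range C.sigma = {C.sigma x₀} := by
    ext g
    simp only [Set.mem_range, Set.mem_singleton_iff]
    exact ⟨fun ⟨x, hx⟩ => hx ▸ hs x, fun h => ⟨x₀, h.symm⟩⟩
  rw [G, hr, Subgroup.mem_closure_singleton] at hg
  obtain ⟨i, rfl⟩ := hg
  exact ⟨i, rfl⟩

/-- For a cyclic cycle set, `s ^ i` has a fixed point exactly when `|X|` divides `i`. -/
lemma IsCyclic.zpow_apply_eq {X : Type} [Finite X] {C : CycleSet X} {s : Equiv.Perm X}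
    (h : C.IsCyclic s) (x : X) (i : ℤ) : (s ^ i) x = x ↔ (Nat.card X : ℤ) ∣ i := by
  have := Fintype.ofFinite X
  have hc : s.IsCycleOn ((Finset.univ : Finset X) : Set X) := by
    exact ⟨by simp, fun x _ y _ => h.2 x y⟩
  rw [hc.zpow_apply_eq (Finset.mem_univ x), Finset.card_univ, Nat.card_eq_fintype_card]

/-- A homomorphism intertwines the powers of the two permutations. -/
lemma map_zpow_apply {X Y : Type} {s : Equiv.Perm X} {t : Equiv.Perm Y} {f : X → Y}
    (h : ∀ x, f (s x) = t (f x)) (i : ℤ) (x : X) : f ((s ^ i) x) = (t ^ i) (f x) := by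
  induction i generalizing x with
  | zero => simp
  | succ n ih => rw [zpow_add_one, zpow_add_one, Equiv.Perm.mul_apply, ih, h]; rfl
  | pred n ih =>
    rw [zpow_sub_one, zpow_sub_one, Equiv.Perm.mul_apply, ih, Equiv.Perm.mul_apply]
    congr 1
    rw [Equiv.Perm.eq_inv_iff_eq, ← h]; simp

/-- An epimorphic image of a cyclic cycle set is cyclic, of cardinality dividing the original
one. -/
lemma IsCyclic.card_dvd {X Y : Type} [Finite X] [Finite Y] {C : CycleSet X} {D : CycleSet Y}
    {s : Equiv.Perm X} (h : C.IsCyclic s) (x₀ : X) {f : X → Y} (hf : Function.Surjective f)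
    (hom : IsHom C D f) :
    D.IsCyclic (D.sigma (f x₀)) ∧ Nat.card Y ∣ Nat.card X := by
  have hs : ∀ a x, f (s x) = D.op (f a) (f x) := fun a x => by rw [← hom, h.1]
  have hst : ∀ x, f (s x) = D.sigma (f x₀) (f x) := hs x₀
  have hD : D.IsCyclic (D.sigma (f x₀)) := by
    constructor
    · intro a b
      obtain ⟨a, rfl⟩ := hf a
      obtain ⟨b, rfl⟩ := hf b
      rw [← hs, hst]
    · intro a b
      obtain ⟨a, rfl⟩ := hf a
      obtain ⟨b, rfl⟩ := hf b
      obtain ⟨i, rfl⟩ := h.2 a b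
      exact ⟨i, (map_zpow_apply hst i a).symm⟩
  refine ⟨hD, ?_⟩
  have h1 := (h.zpow_apply_eq x₀ (Nat.card X)).2 dvd_rfl
  have h2 := map_zpow_apply hst (Nat.card X) x₀
  rw [h1] at h2
  exact Int.natCast_dvd_natCast.1 ((hD.zpow_apply_eq _ _).1 h2.symm)

/-! ### The cycle sets `ℤ/n` -/

/-- The cycle set `ℤ/n` with `x·y = y + 1`. -/
def shift (n : ℕ) : CycleSet (ZMod n) where
  op _ y := y + 1
  bij _ := (Equiv.addRight (1 : ZMod n)).bijective
  cyc _ _ _ := rfl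

/-- Reduction modulo a divisor `d` of `|X|` is an epimorphism from `X` to `ℤ/d`. -/
lemma IsCyclic.exists_toZMod {X : Type} [Finite X] {C : CycleSet X}
    {s : Equiv.Perm X} (h : C.IsCyclic s) (x₀ : X) {d : ℕ} (hd : d ∣ Nat.card X) :
    ∃ f : X → ZMod d, Function.Surjective f ∧ IsHom C (shift d) f := by
  choose e he using h.2 x₀
  have key : ∀ (i : ℤ) x, (s ^ i) x₀ = x → ((e x : ℤ) : ZMod d) = i := by
    intro i x hx
    have h1 : (s ^ (e x - i)) x₀ = x₀ := by
      rw [sub_eq_neg_add, zpow_add, Equiv.Perm.mul_apply, he, zpow_neg,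
        Equiv.Perm.inv_eq_iff_eq, hx]
    have h2 := (h.zpow_apply_eq _ _).1 h1
    have h3 : (d : ℤ) ∣ e x - i := (Int.natCast_dvd_natCast.2 hd).trans h2
    rw [← sub_eq_zero, ← Int.cast_sub, ZMod.intCast_zmod_eq_zero_iff_dvd _ d |>.2 h3]
  refine ⟨fun x => (e x : ℤ), fun z => ?_, fun a b => ?_⟩
  · obtain ⟨i, rfl⟩ := ZMod.intCast_surjective z
    exact ⟨_, key i _ rfl⟩
  · have := key (1 + e b) (C.op a b) (by rw [zpow_one_add, Equiv.Perm.mul_apply, he, h.1])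
    simp only [this, shift]
    push_cast
    ring

/-- Reduction from `ℤ/m` to `ℤ/n` for `n ∣ m`. -/
lemma exists_shift_hom {m n : ℕ} (h : n ∣ m) :
    ∃ f : ZMod m → ZMod n, Function.Surjective f ∧ IsHom (shift m) (shift n) f :=
  ⟨ZMod.castHom h (ZMod n), ZMod.castHom_surjective h, fun _ b =>
    (map_add (ZMod.castHom h (ZMod n)) b 1).trans (congrArg _ (map_one _))⟩

lemma shift_pow_mem (n : ℕ) (j : ℕ) :
    ∃ g : Equiv.Perm (ZMod n), g ∈ (shift n).G ∧ ∀ z, g z = z + j := by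
  refine ⟨(shift n).sigma 0 ^ j, pow_mem (Subgroup.subset_closure (Set.mem_range_self 0)) j, fun z => ?_⟩
  induction j with
  | zero => simp
  | succ j ih =>
    rw [pow_succ', Equiv.Perm.mul_apply, ih]
    change z + j + 1 = _
    push_cast
    ring

/-- A block of `ℤ/p` with two points `a ≠ b` is stable under translation by `b - a`, which
generates `ℤ/p`. -/
lemma shift_primitive {p : ℕ} (hp : p.Prime) : (shift p).Primitive := by
  have : Fact p.Prime := ⟨hp⟩
  refine ⟨fun a b => ?_, fun s hs => ?_⟩
  · obtain ⟨g, hg, h⟩ := shift_pow_mem p (b - a).val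
    exact ⟨g, hg, by rw [h, ZMod.natCast_zmod_val]; ring⟩
  · refine or_iff_not_imp_left.2 fun hns => ?_
    obtain ⟨a, ha, b, hb, hab⟩ := Set.not_subsingleton_iff.1 hns
    obtain ⟨g, hg, h⟩ := shift_pow_mem p (b - a).val
    simp only [ZMod.natCast_zmod_val] at h
    have hgs : ⇑g '' s = s := by
      refine (hs g hg).resolve_right fun hd => ?_
      exact Set.disjoint_left.1 hd ⟨a, ha, by rw [h]; ring⟩ hb
    have hcl : ∀ j : ℕ, a + j * (b - a) ∈ s := by
      intro j
      induction j with
      | zero => simpa using ha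
      | succ j ih =>
        rw [← hgs]
        exact ⟨_, ih, by rw [h]; push_cast; ring⟩
    refine Set.eq_univ_of_forall fun z => ?_
    have hba : b - a ≠ 0 := sub_ne_zero.2 (Ne.symm hab)
    have := hcl ((z - a) / (b - a)).val
    rwa [ZMod.natCast_zmod_val, div_mul_cancel₀ _ hba, add_sub_cancel] at this

/-! ### Chains and divisors -/

lemma hasChain_two {X : Type} [Finite X] {C : CycleSet X} {s : Equiv.Perm X}
    (h : C.IsCyclic s) (x₀ : X) {p : ℕ} (hp : p.Prime) (hd : p ∣ Nat.card X)
    (hlt : p < Nat.card X) : HasChain C 2 := by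
  have : NeZero p := ⟨hp.ne_zero⟩
  refine ⟨fun | 0 => X | _ + 1 => ZMod p, ?_, fun | 0 => C | _ + 1 => shift p, id,
    Function.bijective_id, fun _ _ => rfl, ?_, ?_, shift_primitive hp⟩
  · rintro (_ | i)
    · assumption
    · exact inferInstanceAs (Finite (ZMod p))
  · intro i hi
    obtain rfl : i = 0 := by omega
    simpa using ⟨hlt, hp.one_lt⟩
  · intro i hi
    obtain rfl : i = 0 := by omega
    exact h.exists_toZMod x₀ hd

lemma hasChain_three {X : Type} [Finite X] {C : CycleSet X} {s : Equiv.Perm X}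
    (h : C.IsCyclic s) (x₀ : X) {p m : ℕ} (hp : p.Prime) (hpm : p ∣ m) (hlt : p < m)
    (hd : m ∣ Nat.card X) (hlt' : m < Nat.card X) : HasChain C 3 := by
  have : NeZero p := ⟨hp.ne_zero⟩
  have : NeZero m := ⟨by omega⟩
  refine ⟨fun | 0 => X | 1 => ZMod m | _ + 2 => ZMod p, ?_,
    fun | 0 => C | 1 => shift m | _ + 2 => shift p, id,
    Function.bijective_id, fun _ _ => rfl, ?_, ?_, shift_primitive hp⟩
  · rintro (_ | _ | i)
    · assumption
    · exact inferInstanceAs (Finite (ZMod m))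
    · exact inferInstanceAs (Finite (ZMod p))
  · intro i hi
    obtain rfl | rfl : i = 0 ∨ i = 1 := by omega
    · simpa using ⟨hlt', hp.one_lt.trans hlt⟩
    · simpa using ⟨hlt, hp.one_lt⟩
  · intro i hi
    obtain rfl | rfl : i = 0 ∨ i = 1 := by omega
    · exact h.exists_toZMod x₀ hd
    · exact exists_shift_hom hpm

/-- The cardinalities in a chain starting from a cyclic cycle set form a chain of proper divisors
of `|X|`, all greater than one. -/
lemma HasChain.exists_dvd {X : Type} [Finite X] {C : CycleSet X} {s : Equiv.Perm X}
    (h : C.IsCyclic s) (x₀ : X) {k : ℕ} (hk : HasChain C k) :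
    ∃ d : ℕ → ℕ, d 0 = Nat.card X ∧
      ∀ i, i + 1 < k → d (i + 1) ∣ d i ∧ d (i + 1) < d i ∧ 1 < d (i + 1) := by
  obtain ⟨T, hT, CS, e, he, hom, hc, hp, -⟩ := hk
  have hcyc : ∀ i, i < k → Nonempty (T i) ∧ ∃ t, (CS i).IsCyclic t := by
    intro i
    induction i with
    | zero => exact fun _ => ⟨⟨e x₀⟩, _, (h.card_dvd x₀ he.2 hom).1⟩
    | succ i ih =>
      intro hi
      obtain ⟨⟨y⟩, t, ht⟩ := ih (by omega)
      obtain ⟨f, hf, hf'⟩ := hp i hi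
      exact ⟨⟨f y⟩, _, (ht.card_dvd y hf hf').1⟩
  refine ⟨fun i => Nat.card (T i), (Nat.card_eq_of_bijective e he).symm, fun i hi => ?_⟩
  obtain ⟨⟨y⟩, t, ht⟩ := hcyc i (by omega)
  obtain ⟨f, hf, hf'⟩ := hp i hi
  exact ⟨(ht.card_dvd y hf hf').2, hc i hi⟩

end CycleSet

/-! ### The primitive level -/

theorem statement_13 {X : Type} [Finite X] (C : CycleSet X)
    (hnd : C.Nondeg) (htriv : C.IsTrivial) (hind : C.Indec)
    (hcard : 1 < Nat.card X) :
    fplEq C 2 ↔ ∃ p q : ℕ, p.Prime ∧ q.Prime ∧ Nat.card X = p * q := by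
  obtain ⟨x₀⟩ : Nonempty X := (Nat.card_pos_iff.1 (by omega)).1
  have h := exists_isCyclic C htriv hind x₀
  constructor
  · rintro ⟨-, h2, hmax⟩
    obtain ⟨d, hd0, hd⟩ := h2.exists_dvd h x₀
    obtain ⟨hdvd, hlt, hgt⟩ := hd 0 (by omega)
    simp only [zero_add, hd0] at hdvd hlt hgt
    have hp : (Nat.card X).minFac.Prime := Nat.minFac_prime hcard.ne'
    have hnp : ¬ (Nat.card X).Prime := fun hn =>
      ((Nat.dvd_prime hn).1 hdvd).elim (by omega) (by omega)
    obtain ⟨m, hm⟩ := (Nat.card X).minFac_dvd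
    set p := (Nat.card X).minFac
    have hm1 : m ≠ 1 := by
      rintro rfl
      exact hnp (by rw [hm, mul_one]; exact hp)
    refine ⟨p, m, hp, ?_, hm⟩
    by_contra hmp
    -- With `q` a proper prime factor of `m`, the chain `X → ℤ/pq → ℤ/p` is too long.
    have hq : m.minFac.Prime := Nat.minFac_prime hm1
    have hm0 : 0 < m := Nat.pos_of_ne_zero (by rintro rfl; omega)
    have hqm : m.minFac < m :=
      lt_of_le_of_ne (Nat.minFac_le hm0) fun he => hmp (he ▸ hq)
    have h3 : HasChain C 3 := hasChain_three h x₀ (m := p * m.minFac) hp (dvd_mul_right _ _)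
      (lt_mul_of_one_lt_right hp.pos hq.one_lt)
      (by rw [hm]; exact mul_dvd_mul_left _ m.minFac_dvd)
      (by rw [hm]; exact Nat.mul_lt_mul_of_pos_left hqm hp.pos)
    have := hmax 3 (by omega) h3
    omega
  · rintro ⟨p, q, hp, hq, hn⟩
    refine ⟨by omega, hasChain_two h x₀ hp (hn ▸ dvd_mul_right _ _)
      (hn ▸ lt_mul_of_one_lt_right hp.pos hq.one_lt), fun k _ hk => ?_⟩
    by_contra! hk2
    obtain ⟨d, hd0, hd⟩ := hk.exists_dvd h x₀
    obtain ⟨⟨a, ha⟩, hlt, hgt⟩ := hd 0 (by omega)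
    obtain ⟨⟨b, hb⟩, hlt', hgt'⟩ := hd 1 (by omega)
    simp only [zero_add, one_add_one_eq_two] at *
    have ha1 : a ≠ 1 := by rintro rfl; omega
    have hb1 : b ≠ 1 := by rintro rfl; omega
    -- A product of two primes has only two prime factors, so it is not `d₂ * b * a`.
    have hΩ : ArithmeticFunction.cardFactors (d 2 * b * a) = 2 := by
      rw [← hb, ← ha, hd0, hn, ArithmeticFunction.cardFactors_mul hp.ne_zero hq.ne_zero,
        ArithmeticFunction.cardFactors_apply_prime hp,
        ArithmeticFunction.cardFactors_apply_prime hq]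
    have ha0 : a ≠ 0 := by rintro rfl; omega
    have hb0 : b ≠ 0 := by rintro rfl; omega
    rw [ArithmeticFunction.cardFactors_mul (by positivity) ha0,
      ArithmeticFunction.cardFactors_mul (by omega) hb0] at hΩ
    have pos : ∀ x, 1 < x → 0 < ArithmeticFunction.cardFactors x := fun x hx =>
      ArithmeticFunction.cardFactors_pos_iff_one_lt.2 hx
    have := pos _ hgt'
    have := pos a (by omega)
    have := pos b (by omega)
    omega
end

section
/- Let X be a finite non-degenerate indecomposable cycle set and p : X → Y an epimorphism from X onto a trivial indecomposable cycle set Y. Then |Y| divides the number of orbits of the displacement group Dis(X) acting on X. -/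
open CycleSet

namespace CycleSet

theorem sigma_apply {X : Type} (C : CycleSet X) (x y : X) : C.sigma x y = C.op x y := rfl

theorem sigma_mul_sigma {X : Type} (C : CycleSet X) (x y : X) :
    C.sigma (C.op x y) * C.sigma x = C.sigma (C.op y x) * C.sigma y :=
  Equiv.ext fun z => C.cyc x y z

theorem sigma_mul_inv_mem_Dis {X : Type} (C : CycleSet X) (x y : X) :
    C.sigma x * (C.sigma y)⁻¹ ∈ C.Dis :=
  Subgroup.subset_closure ⟨x, y, rfl⟩

theorem conj_mem_Dis {X : Type} (C : CycleSet X) (z : X) {g : Equiv.Perm X} (hg : g ∈ C.Dis) :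
    C.sigma z * g * (C.sigma z)⁻¹ ∈ C.Dis := by
  suffices h : C.Dis ≤ C.Dis.comap (MulAut.conj (C.sigma z)).toMonoidHom from h hg
  refine (Subgroup.closure_le _).2 ?_
  rintro _ ⟨x, y, rfl⟩
  change C.sigma z * (C.sigma x * (C.sigma y)⁻¹) * (C.sigma z)⁻¹ ∈ C.Dis
  have h : C.sigma x * (C.sigma y)⁻¹ = (C.sigma (C.op x y))⁻¹ * C.sigma (C.op y x) := by
    rw [mul_inv_eq_iff_eq_mul, mul_assoc, eq_inv_mul_iff_mul_eq, sigma_mul_sigma]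
  rw [h]
  have := C.Dis.mul_mem (C.sigma_mul_inv_mem_Dis z (C.op x y))
    (C.sigma_mul_inv_mem_Dis (C.op y x) z)
  simpa only [mul_assoc] using this

/-- A homomorphism to a trivial cycle set is constant on the orbits of the displacement group. -/
theorem map_apply_of_mem_Dis {X Y : Type} {C : CycleSet X} {D : CycleSet Y} (hD : D.IsTrivial)
    {p : X → Y} (hp : IsHom C D p) {g : Equiv.Perm X} (hg : g ∈ C.Dis) (x : X) :
    p (g x) = p x := by
  induction hg using Subgroup.closure_induction generalizing x with
  | mem g hg =>
    obtain ⟨a, b, rfl⟩ := hg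
    obtain ⟨w, rfl⟩ := (C.sigma b).surjective x
    rw [Equiv.Perm.mul_apply, Equiv.Perm.inv_def, Equiv.symm_apply_apply, sigma_apply, sigma_apply, hp, hp]
    exact hD _ _ _
  | one => rfl
  | mul g h _ _ ihg ihh => rw [Equiv.Perm.mul_apply, ihg, ihh]
  | inv g _ ih => rw [← ih (g⁻¹ x), Equiv.Perm.inv_def, Equiv.apply_symm_apply]

/-- The map induced by `σ_z` on the set of orbits of the displacement group. -/
noncomputable def orbitMap {X : Type} (C : CycleSet X) (z : X) :
    MulAction.orbitRel.Quotient C.Dis X → MulAction.orbitRel.Quotient C.Dis X :=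
  Quotient.map (C.sigma z) fun a b hab => by
    obtain ⟨g, rfl⟩ := MulAction.orbitRel_apply.1 hab
    refine MulAction.orbitRel_apply.2 ⟨⟨_, C.conj_mem_Dis z g.2⟩, ?_⟩
    change (C.sigma z * g.1 * (C.sigma z)⁻¹) (C.sigma z b) = C.sigma z (g.1 b)
    simp

theorem orbitMap_bijective {X : Type} [Finite X] (C : CycleSet X) (z : X) :
    Function.Bijective (C.orbitMap z) := by
  have : Finite (MulAction.orbitRel.Quotient C.Dis X) := Quotient.finite _
  refine Function.Surjective.bijective_of_finite fun a => ?_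
  induction a using Quotient.inductionOn with
  | h x =>
    obtain ⟨w, rfl⟩ := (C.sigma z).surjective x
    exact ⟨Quotient.mk _ w, rfl⟩

end CycleSet

theorem statement_14 {X Y : Type} [Finite X] [Finite Y] (C : CycleSet X)
    (hnd : C.Nondeg) (hind : C.Indec)
    (D : CycleSet Y) (htriv : D.IsTrivial) (hDind : D.Indec)
    (p : X → Y) (hsurj : Function.Surjective p) (hhom : IsHom C D p) :
    Nat.card Y ∣ Nat.card (MulAction.orbitRel.Quotient ↥C.Dis X) := by
  rcases isEmpty_or_nonempty X with hX | ⟨⟨z⟩⟩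
  · have : IsEmpty (MulAction.orbitRel.Quotient C.Dis X) := Quotient.instIsEmpty
    simp
  have : Finite (MulAction.orbitRel.Quotient C.Dis X) := Quotient.finite _
  let q : MulAction.orbitRel.Quotient C.Dis X → Y := Quotient.lift p fun a b hab => by
    obtain ⟨g, rfl⟩ := MulAction.orbitRel_apply.1 hab
    exact map_apply_of_mem_Dis htriv hhom g.2 b
  have hq : ∀ (y : Y) a, q (C.orbitMap z a) = D.sigma y (q a) := fun y a => by
    induction a using Quotient.inductionOn with
    | h x => exact (hhom z x).trans (htriv _ _ _)
  have hfib : ∀ g ∈ D.G, ∀ y : Y, Nat.card {a // q a = g y} = Nat.card {a // q a = y} := by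
    intro g hg
    induction hg using Subgroup.closure_induction with
    | mem g hg =>
      obtain ⟨w, rfl⟩ := hg
      intro y
      refine (Nat.card_congr ((Equiv.ofBijective _ (C.orbitMap_bijective z)).subtypeEquiv
        fun a => ?_)).symm
      rw [Equiv.ofBijective_apply, hq w, (D.sigma w).injective.eq_iff]
    | one => exact fun _ => rfl
    | mul g h _ _ ihg ihh => exact fun y => by rw [Equiv.Perm.mul_apply, ihg, ihh]
    | inv g _ ih => exact fun y => by rw [← ih (g⁻¹ y), Equiv.Perm.inv_def, Equiv.apply_symm_apply]
  have hconst : ∀ y, Nat.card {a // q a = y} = Nat.card {a // q a = p z} := fun y => by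
    obtain ⟨g, hg, rfl⟩ := hDind (p z) y
    exact hfib g hg _
  have := Fintype.ofFinite Y
  rw [← Nat.card_congr (Equiv.sigmaFiberEquiv q), Nat.card_sigma, Finset.sum_congr rfl
    fun y _ => hconst y, Finset.sum_const, Finset.card_univ, Nat.card_eq_fintype_card, smul_eq_mul]
  exact dvd_mul_right _ _
end

section
/- Let X be a finite non-trivial non-degenerate indecomposable cycle set with fpl(X) = 2. Then the displacement group Dis(X) splits X into exactly p orbits for some prime number p, and for every cycle set epimorphism r : X → Y with |Y| a prime number, one has |Y| = p. -/
open CycleSet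

/-! ### Conjugacy classes of prime power size in simple groups -/

/-- If the average of finitely many roots of unity is an algebraic integer, then it is zero or all
the roots are equal: otherwise all its conjugates have norm at most one, so it is itself a root of
unity by Kronecker's theorem, and equality holds in the triangle inequality. -/
lemma sum_rootsOfUnity_eq_zero_or_const {ι : Type} [Fintype ι] [Nonempty ι] (f : ι → ℂ)
    (N : ℕ) (hN : 0 < N) (hf : ∀ i, f i ^ N = 1)
    (hintg : IsIntegral ℤ ((∑ i, f i) / (Fintype.card ι : ℂ))) :
    ∑ i, f i = 0 ∨ ∃ c, ∀ i, f i = c := by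
  classical
  set d : ℂ := ((Fintype.card ι : ℕ) : ℂ) with hd
  have hd0 : d ≠ 0 := by simp [hd]
  by_cases h0 : ∑ i, f i = 0
  · exact Or.inl h0
  right
  have hfi : ∀ i, IsIntegral ℚ (f i) := fun i =>
    IsIntegral.of_pow hN (by rw [hf i]; exact isIntegral_one)
  let K : IntermediateField ℚ ℂ := IntermediateField.adjoin ℚ (Set.range f)
  have : FiniteDimensional ℚ K := by
    apply IntermediateField.finiteDimensional_adjoin
    rintro _ ⟨i, rfl⟩
    exact hfi i
  have : NumberField K := ⟨⟩
  let g : ι → K := fun i => ⟨f i, IntermediateField.subset_adjoin _ _ ⟨i, rfl⟩⟩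
  let a : K := (∑ i, g i) / (Fintype.card ι : K)
  have ha : (a : ℂ) = (∑ i, f i) / d := by
    simp [a, g, hd]
  have ha0 : a ≠ 0 := by
    intro h
    have : (a : ℂ) = 0 := by rw [h]; rfl
    rw [ha] at this
    exact (div_ne_zero h0 hd0) this
  have hai : IsIntegral ℤ a := by
    rw [← isIntegral_algHom_iff (K.val.restrictScalars ℤ) K.val.injective]
    change IsIntegral ℤ (a : ℂ)
    rw [ha]; exact hintg
  have hle : ∀ φ : K →+* ℂ, ‖φ a‖ ≤ 1 := by
    intro φ
    have h1 : ∀ i, ‖φ (g i)‖ = 1 := fun i => by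
      have : φ (g i) ^ N = 1 := by
        rw [← map_pow, show g i ^ N = 1 from Subtype.ext (by simpa [g] using hf i), map_one]
      exact Complex.norm_eq_one_of_pow_eq_one this hN.ne'
    simp only [a, map_div₀, map_sum, map_natCast, norm_div, Complex.norm_natCast]
    rw [div_le_one (by exact_mod_cast Fintype.card_pos)]
    calc _ ≤ ∑ i, ‖φ (g i)‖ := norm_sum_le _ _
      _ = _ := by simp [h1]
  obtain ⟨n, hn, han⟩ := NumberField.Embeddings.pow_eq_one_of_norm_le_one K ℂ ha0 hai hle
  set α : ℂ := (∑ i, f i) / d with hα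
  have hαn : α ^ n = 1 := by
    rw [← ha]; exact_mod_cast congrArg (Subtype.val) han
  have hα1 : ‖α‖ = 1 := Complex.norm_eq_one_of_pow_eq_one hαn hn.ne'
  have hα0 : α ≠ 0 := by intro h; simp [h] at hα1
  refine ⟨α, fun i => ?_⟩
  have hsum : ∑ i, (1 - (α⁻¹ * f i).re) = 0 := by
    rw [Finset.sum_sub_distrib, ← Complex.re_sum, ← Finset.mul_sum]
    have : α⁻¹ * ∑ i, f i = d := by
      rw [hα]; field_simp
    rw [this]; simp [hd]
  have hn1 : ∀ i, ‖α⁻¹ * f i‖ = 1 := fun i => by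
    rw [norm_mul, norm_inv, hα1, Complex.norm_eq_one_of_pow_eq_one (hf i) hN.ne']; simp
  have hnn : ∀ i ∈ Finset.univ, 0 ≤ 1 - (α⁻¹ * f i).re := fun i _ => by
    have := Complex.re_le_norm (α⁻¹ * f i)
    rw [hn1] at this; linarith
  have hre := (Finset.sum_eq_zero_iff_of_nonneg hnn).1 hsum i (Finset.mem_univ i)
  have h1 : α⁻¹ * f i = 1 := by
    have hre' : (α⁻¹ * f i).re = 1 := by linarith
    have h2 := Complex.sq_norm (α⁻¹ * f i)
    rw [hn1, Complex.normSq_apply, hre'] at h2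
    apply Complex.ext
    · simpa using hre'
    · have : (α⁻¹ * f i).im * (α⁻¹ * f i).im = 0 := by linarith
      simpa using this
  field_simp at h1
  exact h1

/-- The preceding lemma applied to the eigenvalues of a matrix of finite order, which is scalar as
soon as its eigenvalues coincide because it is diagonalisable. -/
lemma matrix_trace_eq_zero_or_scalar {n : ℕ} [NeZero n] (M : Matrix (Fin n) (Fin n) ℂ) (N : ℕ) (hN : 0 < N)
    (hM : M ^ N = 1) (hintg : IsIntegral ℤ (M.trace / (n : ℂ))) :
    M.trace = 0 ∨ ∃ c : ℂ, M = Matrix.scalar (Fin n) c := by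
  classical
  have hsplit := IsAlgClosed.splits M.charpoly
  have hcard : M.charpoly.roots.card = n := by
    rw [← hsplit.natDegree_eq_card_roots, Matrix.charpoly_natDegree_eq_dim, Fintype.card_fin]
  have hdvd : minpoly ℂ M ∣ Polynomial.X ^ N - 1 := minpoly.dvd _ _ (by simp [hM])
  have hroot : ∀ z ∈ M.charpoly.roots, z ^ N = 1 := by
    intro z hz
    have h1 : z ∈ spectrum ℂ M :=
      Matrix.mem_spectrum_iff_isRoot_charpoly.2 (Polynomial.isRoot_of_mem_roots hz)
    have h3 : z ^ N ∈ spectrum ℂ (M ^ N) := spectrum.pow_mem_pow M N h1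
    rw [hM, spectrum.one_eq] at h3
    exact h3
  let l := M.charpoly.roots.toList
  have hl : l.length = n := by simp [l, hcard]
  have hsum : ∑ i : Fin l.length, l.get i = M.trace := by
    rw [Matrix.trace_eq_sum_roots_charpoly, ← Multiset.sum_toList]
    conv_rhs => rw [← List.ofFn_get M.charpoly.roots.toList]
    rw [List.sum_ofFn]
  have : Nonempty (Fin l.length) := by rw [hl]; exact ⟨0⟩
  have hmem : ∀ i, l.get i ∈ M.charpoly.roots := fun i => Multiset.mem_toList.1 (List.get_mem l i)
  rcases sum_rootsOfUnity_eq_zero_or_const l.get N hN (fun i => hroot _ (hmem i))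
    (by rw [hsum, Fintype.card_fin, hl]; exact hintg) with h | ⟨c, hc⟩
  · left; rw [← hsum, h]
  right
  refine ⟨c, ?_⟩
  have hroots : M.charpoly.roots = Multiset.replicate n c := by
    rw [Multiset.eq_replicate]
    refine ⟨hcard, fun b hb => ?_⟩
    obtain ⟨i, hi⟩ := List.get_of_mem (Multiset.mem_toList.2 hb)
    rw [← hi]; exact hc i
  have hchar : M.charpoly = (Polynomial.X - Polynomial.C c) ^ n := by
    rw [hsplit.eq_prod_roots_of_monic M.charpoly_monic, hroots]; simp
  have hsq : Squarefree (minpoly ℂ M) :=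
    ((Polynomial.separable_X_pow_sub_C (1 : ℂ) (by exact_mod_cast hN.ne') one_ne_zero).squarefree).squarefree_of_dvd
      (by simpa using hdvd)
  have h1 : minpoly ℂ M ∣ Polynomial.X - Polynomial.C c :=
    hsq.isRadical n _ (hchar ▸ Matrix.minpoly_dvd_charpoly M)
  have h2 := (minpoly.dvd_iff).1 h1
  simp only [map_sub, Polynomial.aeval_X, Polynomial.aeval_C, sub_eq_zero] at h2
  rw [h2]; rfl

/-- The trace of a left multiplication on a product of matrix algebras; for the group algebra this
is the decomposition of the regular character. -/
lemma trace_mulLeft_pi {n : ℕ} (d : Fin n → ℕ) (r : Π i, Matrix (Fin (d i)) (Fin (d i)) ℂ) :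
    LinearMap.trace ℂ _ (LinearMap.mulLeft ℂ r) = ∑ i, (d i : ℂ) * (r i).trace := by
  classical
  let b := Pi.basis (fun i => Matrix.stdBasis ℂ (Fin (d i)) (Fin (d i)))
  rw [LinearMap.trace_eq_matrix_trace ℂ b, Matrix.trace, Fintype.sum_sigma]
  refine Finset.sum_congr rfl fun i _ => ?_
  have : ∀ jk : Fin (d i) × Fin (d i),
      ((LinearMap.toMatrix b b) (LinearMap.mulLeft ℂ r)).diag ⟨i, jk⟩ = r i jk.1 jk.1 := by
    rintro ⟨j, k⟩
    rw [Matrix.diag_apply, LinearMap.toMatrix_apply]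
    simp only [b, Pi.basis_apply, LinearMap.mulLeft_apply, Pi.basis_repr, Pi.mul_apply,
      Pi.single_eq_same, Matrix.stdBasis_eq_single]
    have : ∀ M : Matrix (Fin (d i)) (Fin (d i)) ℂ,
        (Matrix.stdBasis ℂ (Fin (d i)) (Fin (d i))).repr M (j, k) = M j k := by
      intro M
      have h := (Matrix.stdBasis ℂ (Fin (d i)) (Fin (d i))).repr_self
      rfl
    rw [this]
    simp [Matrix.mul_single_apply_same]
  simp_rw [this]
  rw [Fintype.sum_prod_type]
  simp [Matrix.trace, Finset.mul_sum]

lemma trace_mulLeft_single {G : Type} [Group G] [Finite G] {g : G} (hg : g ≠ 1) :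
    LinearMap.trace ℂ (MonoidAlgebra ℂ G) (LinearMap.mulLeft ℂ (MonoidAlgebra.of ℂ G g)) = 0 := by
  classical
  have := Fintype.ofFinite G
  rw [LinearMap.trace_eq_matrix_trace ℂ (MonoidAlgebra.basis G ℂ), Matrix.trace]
  refine Finset.sum_eq_zero fun h _ => ?_
  rw [Matrix.diag_apply, LinearMap.toMatrix_apply]
  simp only [MonoidAlgebra.basis_apply, LinearMap.mulLeft_apply, MonoidAlgebra.of_apply,
    MonoidAlgebra.single_mul_single, mul_one]
  change (MonoidAlgebra.single (g * h) (1:ℂ)).coeff h = 0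
  simp [MonoidAlgebra.coeff_single, hg]

/-- Values of a central character on sums of group elements are algebraic integers: such a sum lies
in the integral group ring, which is finite over `ℤ`. -/
lemma isIntegral_of_classSum {G : Type} [Group G] [Finite G] {n : ℕ} [NeZero n]
    (φ : MonoidAlgebra ℂ G →ₐ[ℂ] Matrix (Fin n) (Fin n) ℂ) (s : Finset G) (w : ℂ)
    (h : ∑ x ∈ s, φ (MonoidAlgebra.of ℂ G x) = Matrix.scalar (Fin n) w) : IsIntegral ℤ w := by
  classical
  have := Fintype.ofFinite G
  have : Module.Finite ℤ (MonoidAlgebra ℤ G) := Module.Finite.of_basis (MonoidAlgebra.basis G ℤ)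
  let F : G →* Matrix (Fin n) (Fin n) ℂ := (φ : MonoidAlgebra ℂ G →* _).comp (MonoidAlgebra.of ℂ G)
  let Φ : MonoidAlgebra ℤ G →ₐ[ℤ] Matrix (Fin n) (Fin n) ℂ := MonoidAlgebra.lift ℤ _ _ F
  have h1 : IsIntegral ℤ (∑ x ∈ s, MonoidAlgebra.of ℤ G x) := IsIntegral.of_finite ℤ _
  have h2 := h1.map Φ
  have h3 : Φ (∑ x ∈ s, MonoidAlgebra.of ℤ G x) = Matrix.scalar (Fin n) w := by
    rw [← h, map_sum]
    refine Finset.sum_congr rfl fun x _ => ?_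
    simp [Φ, F]
  rw [h3] at h2
  have h4 : Matrix.scalar (Fin n) w = (Algebra.ofId ℂ (Matrix (Fin n) (Fin n) ℂ)).restrictScalars ℤ w := rfl
  rw [h4] at h2
  exact (isIntegral_algHom_iff _ (FaithfulSMul.algebraMap_injective ℂ _)).1 h2

lemma isIntegral_trace {n : ℕ} (M : Matrix (Fin n) (Fin n) ℂ) (N : ℕ) (hN : 0 < N)
    (hM : M ^ N = 1) : IsIntegral ℤ M.trace := by
  rw [Matrix.trace_eq_sum_roots_charpoly]
  refine IsIntegral.multiset_sum fun z hz => ?_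
  have h1 : z ∈ spectrum ℂ M :=
    Matrix.mem_spectrum_iff_isRoot_charpoly.2 (Polynomial.isRoot_of_mem_roots hz)
  have h3 : z ^ N ∈ spectrum ℂ (M ^ N) := spectrum.pow_mem_pow M N h1
  have : Nonempty (Fin n) := by
    by_contra hh
    rw [not_nonempty_iff] at hh
    rw [spectrum.of_subsingleton] at h1
    exact h1
  rw [hM, spectrum.one_eq] at h3
  exact IsIntegral.of_pow hN (by rw [show z ^ N = 1 from h3]; exact isIntegral_one)

lemma scalar_of_central {n : ℕ} [NeZero n] (M : Matrix (Fin n) (Fin n) ℂ)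
    (h : ∀ A, A * M = M * A) : ∃ c, M = Matrix.scalar (Fin n) c := by
  have : M ∈ Set.center (Matrix (Fin n) (Fin n) ℂ) := by
    rw [Semigroup.mem_center_iff]; exact h
  rw [Matrix.center_eq_range] at this
  obtain ⟨c, hc⟩ := this
  exact ⟨c, hc.symm⟩

/-- In a nonabelian simple group, a representation sending some `g ≠ 1` to a scalar is trivial. -/
lemma trivial_of_scalar {G : Type} [Group G] [IsSimpleGroup G] (hnc : ∃ a b : G, a * b ≠ b * a)
    {n : ℕ} (ρ : G →* Matrix (Fin n) (Fin n) ℂ) {g : G} (hg : g ≠ 1) {c : ℂ}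
    (hc : ρ g = Matrix.scalar (Fin n) c) (x : G) : ρ x = 1 := by
  have hinv : ∀ x : G, ρ x⁻¹ * ρ x = 1 := fun x => by rw [← map_mul]; simp
  have hinv' : ∀ x : G, ρ x * ρ x⁻¹ = 1 := fun x => by rw [← map_mul]; simp
  let N : Subgroup G :=
    { carrier := {h | ∀ y, ρ h * ρ y = ρ y * ρ h}
      one_mem' := by intro y; simp
      mul_mem' := by
        intro a b ha hb y
        rw [map_mul, mul_assoc, hb y, ← mul_assoc, ha y, mul_assoc]
      inv_mem' := by
        intro a ha y
        calc ρ a⁻¹ * ρ y = ρ a⁻¹ * (ρ y * ρ a) * ρ a⁻¹ := by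
              rw [mul_assoc, mul_assoc, hinv', mul_one]
          _ = ρ y * ρ a⁻¹ := by rw [← ha y, ← mul_assoc, hinv, one_mul] }
  have hN : N.Normal := ⟨fun a ha y z => by
    have h1 : ρ (y * a * y⁻¹) = ρ a := by
      rw [map_mul, map_mul, ← ha y, mul_assoc, hinv', mul_one]
    rw [h1]; exact ha z⟩
  have hgN : g ∈ N := fun y => by
    rw [hc]; exact (Matrix.scalar_commute c (fun _ => Commute.all _ _) (ρ y)).eq
  have hNtop : N = ⊤ := (hN.eq_bot_or_eq_top).resolve_left fun h => by
    rw [h, Subgroup.mem_bot] at hgN; exact hg hgN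
  have hker : ρ.ker = ⊤ := (ρ.normal_ker.eq_bot_or_eq_top).resolve_left fun h => by
    obtain ⟨a, b, hab⟩ := hnc
    apply hab
    have ha : a ∈ N := hNtop ▸ Subgroup.mem_top a
    have hinj := (MonoidHom.ker_eq_bot_iff ρ).1 h
    apply hinj
    rw [map_mul, map_mul, ha b]
  have : x ∈ ρ.ker := hker ▸ Subgroup.mem_top x
  exact this

/-- Burnside: a nonabelian finite simple group has no conjugacy class of prime power size apart
from that of `1`. In the regular character evaluated at `g ≠ 1`, the trivial constituent contributes
`1` and every other constituent contributes `p` times an algebraic integer, while the total is `0`;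
hence `-1 / p` would be an algebraic integer. -/
theorem no_prime_power_class {G : Type} [Group G] [Finite G] [IsSimpleGroup G]
    (hnc : ∃ a b : G, a * b ≠ b * a) {p k : ℕ} (hp : p.Prime) {g : G} (hg : g ≠ 1)
    (hcard : Nat.card (MulAction.orbit (ConjAct G) g) = p ^ k) : False := by
  classical
  have := Fintype.ofFinite G
  have : NeZero (Nat.card G : ℂ) := ⟨by exact_mod_cast Nat.card_pos.ne'⟩
  obtain ⟨n, d, hd, ⟨e⟩⟩ := IsSemisimpleRing.exists_algEquiv_pi_matrix_of_isAlgClosed ℂ (MonoidAlgebra ℂ G)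
  let φ : ∀ i, MonoidAlgebra ℂ G →ₐ[ℂ] Matrix (Fin (d i)) (Fin (d i)) ℂ := fun i =>
    (Pi.evalAlgHom ℂ (fun i => Matrix (Fin (d i)) (Fin (d i)) ℂ) i).comp e.toAlgHom
  have hφe : ∀ i r, φ i r = e r i := fun i r => rfl
  let ρ : ∀ i, G →* Matrix (Fin (d i)) (Fin (d i)) ℂ := fun i =>
    (φ i : MonoidAlgebra ℂ G →* _).comp (MonoidAlgebra.of ℂ G)
  have hρ : ∀ i x, ρ i x = φ i (MonoidAlgebra.of ℂ G x) := fun i x => rfl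
  have hsurj : ∀ i, Function.Surjective (φ i) := by
    intro i M
    obtain ⟨r, hr⟩ := e.surjective (Pi.single i M)
    exact ⟨r, by rw [hφe, hr, Pi.single_eq_same]⟩
  have hpow : ∀ i x, ρ i x ^ Nat.card G = 1 := fun i x => by
    rw [← map_pow, pow_card_eq_one', map_one]
  have hN : 0 < Nat.card G := Nat.card_pos
  have hsum : ∑ i, (d i : ℂ) * (ρ i g).trace = 0 := by
    rw [← trace_mulLeft_single hg, ← trace_mulLeft_pi d (fun i => ρ i g)]
    have := LinearMap.trace_conj' (LinearMap.mulLeft ℂ (MonoidAlgebra.of ℂ G g)) e.toLinearEquiv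
    rw [← this]
    congr 1
    refine LinearMap.ext fun r => ?_
    rw [LinearEquiv.conj_apply_apply]
    simp only [LinearMap.mulLeft_apply]
    change _ = e (MonoidAlgebra.of ℂ G g * e.symm r)
    rw [map_mul, AlgEquiv.apply_symm_apply]
    rfl
  let s : Finset G := (MulAction.orbit (ConjAct G) g).toFinset
  have hs : s.card = p ^ k := by rw [← hcard, Set.toFinset_card, Nat.card_eq_fintype_card]
  have htr : ∀ i, ∀ x ∈ s, (ρ i x).trace = (ρ i g).trace := by
    intro i x hx
    obtain ⟨y, rfl⟩ := (Set.mem_toFinset.1 hx)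
    change (ρ i (y • g)).trace = _
    rw [ConjAct.smul_def, map_mul, Matrix.trace_mul_comm, ← map_mul, inv_mul_cancel_left]
  have hcentral : ∀ i, ∃ w, ∑ x ∈ s, ρ i x = Matrix.scalar (Fin (d i)) w := by
    intro i
    apply scalar_of_central
    have hgp : ∀ y : G, ρ i y * (∑ x ∈ s, ρ i x) = (∑ x ∈ s, ρ i x) * ρ i y := by
      intro y
      rw [Finset.mul_sum, Finset.sum_mul]
      refine Finset.sum_bij (fun x _ => ConjAct.toConjAct y • x) ?_ ?_ ?_ ?_
      · intro x hx
        rw [Set.mem_toFinset] at hx ⊢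
        obtain ⟨z, rfl⟩ := hx
        exact ⟨ConjAct.toConjAct y * z, mul_smul _ _ _⟩
      · intro a _ b _ hab
        exact smul_left_cancel _ hab
      · intro b hb
        refine ⟨(ConjAct.toConjAct y)⁻¹ • b, ?_, by simp⟩
        rw [Set.mem_toFinset] at hb ⊢
        obtain ⟨z, rfl⟩ := hb
        exact ⟨(ConjAct.toConjAct y)⁻¹ * z, mul_smul _ _ _⟩
      · intro x hx
        rw [← map_mul, ← map_mul, ConjAct.toConjAct_smul, inv_mul_cancel_right]
    intro A
    obtain ⟨r, rfl⟩ := hsurj i A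
    induction r using MonoidAlgebra.induction_on with
    | of x => exact hgp x
    | add a b ha hb => rw [map_add, add_mul, mul_add, ha, hb]
    | smul c a ha => rw [map_smul, smul_mul_assoc, ha, mul_smul_comm]
  choose w hw using hcentral
  have hwint : ∀ i, IsIntegral ℤ (w i) := fun i => isIntegral_of_classSum (φ i) s (w i) (hw i)
  have hwtr : ∀ i, (p : ℂ) ^ k * (ρ i g).trace = d i * w i := by
    intro i
    have h1 := congrArg Matrix.trace (hw i)
    rw [Matrix.trace_sum, Finset.sum_congr rfl (htr i), Finset.sum_const, hs] at h1
    simp only [nsmul_eq_mul, Nat.cast_pow] at h1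
    rw [h1]
    simp [Matrix.trace]
  -- if `p ∤ d i`, Bézout for `p ^ k` and `d i` makes `tr (ρ i g) / d i` integral, so `ρ i g` has
  -- trace zero or is scalar
  have htri : ∀ i, (∀ x, ρ i x = 1) ∨ (∃ z : ℂ, IsIntegral ℤ z ∧ (d i : ℂ) * (ρ i g).trace = p * z) := by
    intro i
    have hti := isIntegral_trace (ρ i g) _ hN (hpow i g)
    by_cases hpd : p ∣ d i
    · obtain ⟨m, hm⟩ := hpd
      right
      refine ⟨m * (ρ i g).trace, (isIntegral_algebraMap (R := ℤ) (x := (m : ℤ))).mul hti |> fun h => by simpa using h, ?_⟩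
      have : (d i : ℂ) = p * m := by exact_mod_cast hm
      rw [this]; ring
    · have hcop : IsCoprime ((p : ℤ) ^ k) (d i : ℤ) := by
        have : Nat.Coprime (p ^ k) (d i) := Nat.Coprime.pow_left _ ((Nat.Prime.coprime_iff_not_dvd hp).2 hpd)
        exact_mod_cast Nat.isCoprime_iff_coprime.2 this
      obtain ⟨u, v, huv⟩ := hcop
      have hd0 : (d i : ℂ) ≠ 0 := by exact_mod_cast (hd i).ne
      have hintg : IsIntegral ℤ ((ρ i g).trace / (d i : ℂ)) := by
        have : (ρ i g).trace / (d i : ℂ) = algebraMap ℤ ℂ u * w i + algebraMap ℤ ℂ v * (ρ i g).trace := by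
          have huv' : (u : ℂ) * (p : ℂ) ^ k + v * d i = 1 := by exact_mod_cast huv
          rw [div_eq_iff hd0]
          simp only [algebraMap_int_eq, eq_intCast]
          calc (ρ i g).trace = ((u : ℂ) * (p : ℂ) ^ k + v * d i) * (ρ i g).trace := by rw [huv', one_mul]
            _ = u * ((p : ℂ) ^ k * (ρ i g).trace) + v * (ρ i g).trace * d i := by ring
            _ = _ := by rw [hwtr]; ring
        rw [this]
        exact (isIntegral_algebraMap.mul (hwint i)).add (isIntegral_algebraMap.mul hti)
      rcases matrix_trace_eq_zero_or_scalar (ρ i g) _ hN (hpow i g) hintg with h0 | ⟨c, hc⟩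
      · right; exact ⟨0, isIntegral_zero, by rw [h0]; simp⟩
      · left; exact trivial_of_scalar hnc (ρ i) hg hc
  let aug : MonoidAlgebra ℂ G →ₐ[ℂ] ℂ := MonoidAlgebra.lift ℂ _ _ 1
  have haug : ∀ i, (∀ x, ρ i x = 1) → ∀ r, φ i r = aug r • (1 : Matrix (Fin (d i)) (Fin (d i)) ℂ) := by
    intro i hi r
    induction r using MonoidAlgebra.induction_on with
    | of x => rw [← hρ, hi x]; simp [aug]
    | add a b ha hb => rw [map_add, ha, hb, map_add, add_smul]
    | smul c a ha => rw [map_smul, ha, map_smul, smul_assoc]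
  -- the sum `ε` of all group elements is central and fixed by `G`, so `G` acts trivially on any
  -- constituent on which `ε` does not vanish
  have hex : ∃ i, ∀ x, ρ i x = 1 := by
    let ε : MonoidAlgebra ℂ G := ∑ x : G, MonoidAlgebra.of ℂ G x
    have hε : ∀ y, MonoidAlgebra.of ℂ G y * ε = ε := by
      intro y
      simp only [ε, Finset.mul_sum, ← map_mul]
      exact Fintype.sum_equiv (Equiv.mulLeft y) _ _ (fun _ => rfl)
    have hε' : ∀ y, ε * MonoidAlgebra.of ℂ G y = ε := by
      intro y
      simp only [ε, Finset.sum_mul, ← map_mul]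
      exact Fintype.sum_equiv (Equiv.mulRight y) _ _ (fun _ => rfl)
    have hε0 : ε ≠ 0 := by
      intro h
      have h1 : aug ε = 0 := by rw [h, map_zero]
      simp [ε, aug] at h1
    have : ∃ i, φ i ε ≠ 0 := by
      by_contra! h
      exact hε0 (e.injective (by ext1 i; rw [← hφe, h i, map_zero]; rfl))
    obtain ⟨i, hi⟩ := this
    refine ⟨i, ?_⟩
    obtain ⟨c, hc⟩ := scalar_of_central (φ i ε) (by
      intro A
      obtain ⟨r, rfl⟩ := hsurj i A
      rw [← map_mul, ← map_mul]
      congr 1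
      induction r using MonoidAlgebra.induction_on with
      | of x => rw [hε, hε']
      | add a b ha hb => rw [add_mul, mul_add, ha, hb]
      | smul c a ha => rw [smul_mul_assoc, ha, mul_smul_comm])
    have hc0 : c ≠ 0 := by
      rintro rfl; apply hi; rw [hc]; simp
    intro x
    have h1 : ρ i x * φ i ε = φ i ε := by rw [hρ, ← map_mul, hε]
    have h2 : φ i ε = c • (1 : Matrix (Fin (d i)) (Fin (d i)) ℂ) := by
      rw [hc, Matrix.smul_one_eq_diagonal]; rfl
    rw [h2, mul_smul_comm, mul_one] at h1
    exact smul_right_injective _ hc0 h1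
  obtain ⟨i₀, hi₀⟩ := hex
  have huniq : ∀ i, (∀ x, ρ i x = 1) → i = i₀ := by
    intro i hi
    by_contra hne
    obtain ⟨r, hr⟩ := e.surjective (Pi.single i 1)
    have h1 := haug i hi r
    have h2 := haug i₀ hi₀ r
    rw [hφe, hr, Pi.single_eq_same] at h1
    rw [hφe, hr, Pi.single_eq_of_ne (Ne.symm hne)] at h2
    have h1' := congrFun (congrFun h1 0) 0
    have h2' := congrFun (congrFun h2 0) 0
    simp at h1' h2'
    rw [← h2'] at h1'
    exact one_ne_zero h1'
  have hd1 : d i₀ = 1 := by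
    by_contra hne
    have h2 : 1 < d i₀ := by have := (hd i₀).ne; omega
    obtain ⟨r, hr⟩ := hsurj i₀ (Matrix.single ⟨0, by omega⟩ ⟨1, h2⟩ 1)
    rw [haug i₀ hi₀] at hr
    have := congrFun (congrFun hr ⟨0, by omega⟩) ⟨1, h2⟩
    simp at this
  have hrest : ∃ z : ℂ, IsIntegral ℤ z ∧
      ∑ i ∈ Finset.univ.erase i₀, (d i : ℂ) * (ρ i g).trace = p * z := by
    have : ∀ i, ∃ z : ℂ, i ≠ i₀ → IsIntegral ℤ z ∧ (d i : ℂ) * (ρ i g).trace = p * z := by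
      intro i
      rcases htri i with h | ⟨z, hz⟩
      · exact ⟨0, fun h' => absurd (huniq i h) h'⟩
      · exact ⟨z, fun _ => hz⟩
    choose z hz using this
    refine ⟨∑ i ∈ Finset.univ.erase i₀, z i, IsIntegral.sum _ fun i hi => (hz i (Finset.ne_of_mem_erase hi)).1, ?_⟩
    rw [Finset.mul_sum]
    exact Finset.sum_congr rfl fun i hi => (hz i (Finset.ne_of_mem_erase hi)).2
  obtain ⟨z, hz, hzs⟩ := hrest
  rw [← Finset.add_sum_erase _ _ (Finset.mem_univ i₀), hzs, hi₀ g, Matrix.trace_one,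
    Fintype.card_fin, hd1] at hsum
  have hp0 : (p : ℚ) ≠ 0 := by exact_mod_cast hp.ne_zero
  have hzq : z = algebraMap ℚ ℂ (-1 / p) := by
    have : (p : ℂ) ≠ 0 := by exact_mod_cast hp.ne_zero
    simp only [eq_ratCast]; push_cast
    field_simp
    linear_combination hsum
  rw [hzq] at hz
  have hz' : IsIntegral ℤ (-1 / (p : ℚ)) :=
    (isIntegral_algHom_iff ((Algebra.ofId ℚ ℂ).restrictScalars ℤ) (algebraMap ℚ ℂ).injective).1 hz
  obtain ⟨m, hm⟩ := IsIntegrallyClosed.isIntegral_iff.1 hz'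
  have hm' : (m : ℚ) * p = -1 := by
    simp only [algebraMap_int_eq, eq_intCast] at hm
    rw [hm]; field_simp
  have hm'' : m * (p : ℤ) = -1 := by exact_mod_cast hm'
  have : (p : ℤ) ∣ 1 := ⟨-m, by linarith⟩
  have : p ∣ 1 := by exact_mod_cast this
  exact hp.one_lt.ne' (Nat.dvd_one.1 this)

/-! ### Groups of order `p ^ a * q ^ b` -/

/-- The `p`-core: the intersection of all Sylow `p`-subgroups. -/
def pCore (p : ℕ) (G : Type) [Group G] : Subgroup G := ⨅ P : Sylow p G, (P : Subgroup G)

lemma isPGroup_pCore (p : ℕ) (G : Type) [Group G] : IsPGroup p (pCore p G) := by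
  have P : Sylow p G := default
  exact P.isPGroup'.to_le (iInf_le _ P)

lemma le_pCore {p : ℕ} {G : Type} [Group G] (N : Subgroup G) [N.Normal] (h : IsPGroup p N) :
    N ≤ pCore p G := le_iInf fun P => h.le_sylow_of_normal P

instance pCore_normal (p : ℕ) (G : Type) [Group G] : (pCore p G).Normal := by
  refine ⟨fun n hn g => ?_⟩
  simp only [pCore, Subgroup.mem_iInf] at hn ⊢
  intro P
  have h := hn (g⁻¹ • P)
  rw [Sylow.coe_subgroup_smul, Subgroup.mem_pointwise_smul_iff_inv_smul_mem] at h
  simpa using h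

instance pCore_characteristic (p : ℕ) (G : Type) [Group G] : (pCore p G).Characteristic := by
  rw [Subgroup.characteristic_iff_map_le]
  intro φ
  have : ((pCore p G).map φ.toMonoidHom).Normal :=
    (pCore_normal p G).map _ φ.surjective
  exact le_pCore _ ((isPGroup_pCore p G).map _)

lemma pCore_ne_bot_of_normal {p : ℕ} {G : Type} [Group G] (N : Subgroup G) [N.Normal]
    (h : pCore p N ≠ ⊥) : pCore p G ≠ ⊥ := by
  have h1 : ((pCore p N).map N.subtype).Normal := ConjAct.normal_of_characteristic_of_normal
  have h2 := le_pCore ((pCore p N).map N.subtype) ((isPGroup_pCore p N).map _)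
  intro h3
  rw [h3, le_bot_iff, Subgroup.map_eq_bot_iff_of_injective _ N.subtype_injective] at h2
  exact h h2

/-- A simple group of order `p ^ a * q ^ b` with `b ≠ 0` is abelian: a nontrivial central element of
a Sylow `q`-subgroup has a conjugacy class of size a power of `p`. -/
lemma isCommutative_of_simple {p a q b : ℕ} (hp : p.Prime) (hq : q.Prime) {G : Type} [Group G]
    [Finite G] [IsSimpleGroup G] (hb : b ≠ 0)
    (hG : Nat.card G = p ^ a * q ^ b) : ∀ x y : G, x * y = y * x := by
  by_contra! hnc
  have := Fact.mk hp
  have := Fact.mk hq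
  have Q : Sylow q G := default
  have hne : (Q : Subgroup G) ≠ ⊥ :=
    Q.ne_bot_of_dvd_card (by rw [hG]; exact dvd_mul_of_dvd_right (dvd_pow_self q hb) _)
  have := (Subgroup.nontrivial_iff_ne_bot _).2 hne
  have := Q.isPGroup'.center_nontrivial
  obtain ⟨⟨⟨z, hzQ⟩, hzc⟩, hz1⟩ := exists_ne (1 : Subgroup.center (Q : Subgroup G))
  have hz : z ≠ 1 := by
    rintro rfl; exact hz1 rfl
  have hcop : (Q : Subgroup G).index.Coprime (q ^ b) :=
    Nat.Coprime.pow_right _ ((Nat.Prime.coprime_iff_not_dvd hq).2 Q.not_dvd_index).symm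
  have hdvd : (Q : Subgroup G).index ∣ p ^ a :=
    hcop.dvd_of_dvd_mul_right (hG ▸ (Q : Subgroup G).index_dvd_card)
  have hle : (Q : Subgroup G) ≤ Subgroup.centralizer {z} := by
    intro x hx
    rw [Subgroup.mem_centralizer_singleton_iff]
    have := Subgroup.mem_center_iff.1 hzc ⟨x, hx⟩
    exact congrArg Subtype.val this
  have hidx : (Subgroup.centralizer {z}).index = Nat.card (MulAction.orbit (ConjAct G) z) := by
    have h1 := MulAction.index_stabilizer (ConjAct G) z
    rw [ConjAct.stabilizer_eq_centralizer] at h1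
    rw [Nat.card_coe_set_eq, ← h1]
    rfl
  obtain ⟨k, -, hk⟩ := (Nat.dvd_prime_pow hp).1
    (hidx ▸ (Subgroup.index_dvd_of_le hle).trans hdvd)
  exact no_prime_power_class hnc hp hz hk

/-- Burnside's theorem on groups of order `p ^ a * q ^ b`, in the form of a nontrivial core. -/
theorem pCore_ne_bot_or {p q : ℕ} (hp : p.Prime) (hq : q.Prime) :
    ∀ (n : ℕ) (G : Type) [Group G] [Finite G] [Nontrivial G] (a b : ℕ), Nat.card G = n →
      n = p ^ a * q ^ b → pCore p G ≠ ⊥ ∨ pCore q G ≠ ⊥ := by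
  intro n
  induction n using Nat.strong_induction_on with
  | _ n ih =>
  intro G _ _ _ a b hGn hn
  have := Fact.mk hp
  have := Fact.mk hq
  have htop : ∀ r, r.Prime → IsPGroup r G → pCore r G ≠ ⊥ := by
    intro r hr h h1
    have h2 := le_pCore (p := r) (⊤ : Subgroup G) (h.to_subgroup _)
    rw [h1, le_bot_iff] at h2
    exact bot_ne_top h2.symm
  rcases Nat.eq_zero_or_pos b with rfl | hb
  · left
    exact htop p hp (IsPGroup.of_card (n := a) (by rw [hGn, hn]; simp))
  by_cases hs : ∃ N : Subgroup G, N.Normal ∧ N ≠ ⊥ ∧ N ≠ ⊤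
  · obtain ⟨N, hN, hN1, hN2⟩ := hs
    have := (Subgroup.nontrivial_iff_ne_bot _).2 hN1
    have hlt : Nat.card N < n := by
      rw [← hGn]
      exact lt_of_le_of_ne (Subgroup.card_le_card_group N) fun h => hN2 (Subgroup.eq_top_of_card_eq N h)
    have hd : Nat.card N ∣ p ^ a * q ^ b := by rw [← hn, ← hGn]; exact Subgroup.card_subgroup_dvd_card N
    obtain ⟨x, y, hx, hy, hxy⟩ := (Nat.dvd_mul).1 hd
    obtain ⟨a', -, rfl⟩ := (Nat.dvd_prime_pow hp).1 hx
    obtain ⟨b', -, rfl⟩ := (Nat.dvd_prime_pow hq).1 hy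
    rcases ih _ hlt N a' b' rfl hxy.symm with h | h
    · exact Or.inl (pCore_ne_bot_of_normal N h)
    · exact Or.inr (pCore_ne_bot_of_normal N h)
  · push Not at hs
    have : IsSimpleGroup G := ⟨fun H hH => by
      by_cases h : H = ⊥
      · exact Or.inl h
      · exact Or.inr (hs H hH h)⟩
    have hcomm := isCommutative_of_simple hp hq hb.ne' (hGn.trans hn)
    right
    have Q : Sylow q G := default
    have hne : (Q : Subgroup G) ≠ ⊥ :=
      Q.ne_bot_of_dvd_card (by rw [hGn, hn]; exact dvd_mul_of_dvd_right (dvd_pow_self q hb.ne') _)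
    have hQ : (Q : Subgroup G).Normal := ⟨fun x hx y => by
      rw [hcomm y x, mul_inv_cancel_right]; exact hx⟩
    have := le_pCore (Q : Subgroup G) Q.isPGroup'
    exact fun h => hne (le_bot_iff.1 (h ▸ this))

/-! ### Bijective cocycles and primitive actions -/

/-- A bijective 1-cocycle `κ : G → A`. -/
structure BijCocycle (G A : Type) [Group G] [AddCommGroup A] [DistribMulAction G A] where
  toFun : G → A
  bij : Function.Bijective toFun
  map_mul : ∀ g h, toFun (g * h) = toFun g + g • toFun h

namespace BijCocycle

variable {G A : Type} [Group G] [AddCommGroup A] [DistribMulAction G A]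

lemma map_one (κ : BijCocycle G A) : κ.toFun 1 = 0 := by
  have := κ.map_mul 1 1
  simpa using this

lemma map_inv (κ : BijCocycle G A) (g : G) : κ.toFun g⁻¹ = -(g⁻¹ • κ.toFun g) := by
  have := κ.map_mul g⁻¹ g
  rw [inv_mul_cancel, κ.map_one] at this
  exact eq_neg_of_add_eq_zero_left this.symm

/-- The subgroup of `G` corresponding to the `d`-torsion of `A`. -/
def torsion (κ : BijCocycle G A) (d : ℕ) : Subgroup G where
  carrier := {g | d • κ.toFun g = 0}
  one_mem' := by simp [κ.map_one]
  mul_mem' := by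
    intro g h hg hh
    simp only [Set.mem_ofPred_eq] at *
    rw [κ.map_mul, nsmul_add, hg, ← smul_comm, hh, smul_zero, add_zero]
  inv_mem' := by
    intro g hg
    simp only [Set.mem_ofPred_eq] at *
    rw [κ.map_inv, smul_neg, ← smul_comm, hg, smul_zero, neg_zero]

lemma mem_torsion {κ : BijCocycle G A} {d : ℕ} {g : G} : g ∈ κ.torsion d ↔ d • κ.toFun g = 0 :=
  Iff.rfl

lemma card_torsion (κ : BijCocycle G A) (d : ℕ) :
    Nat.card (κ.torsion d) = Nat.card {a : A // d • a = 0} :=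
  Nat.card_congr ((Equiv.ofBijective _ κ.bij).subtypeEquiv fun _ => Iff.rfl)

end BijCocycle

lemma exists_card_torsion_eq {A : Type} [AddCommGroup A] [Finite A] {p q : ℕ} (hp : p.Prime)
    (hq : q.Prime) (k l : ℕ) :
    ∃ a b, Nat.card {a : A // (p ^ k * q ^ l) • a = 0} = p ^ a * q ^ b := by
  let T : AddSubgroup A :=
    { carrier := {a | (p ^ k * q ^ l) • a = 0}
      zero_mem' := by simp
      add_mem' := by
        intro a b ha hb
        simp only [Set.mem_ofPred_eq] at *
        rw [nsmul_add, ha, hb, add_zero]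
      neg_mem' := by
        intro a ha
        simp only [Set.mem_ofPred_eq] at *
        rw [smul_neg, ha, neg_zero] }
  change ∃ a b, Nat.card T = p ^ a * q ^ b
  have hpr : ∀ r, r.Prime → r ∣ Nat.card T → r = p ∨ r = q := by
    intro r hr hd
    have := Fact.mk hr
    obtain ⟨⟨x, hx⟩, hxr⟩ := exists_prime_addOrderOf_dvd_card' r hd
    have hx' : (p ^ k * q ^ l) • (⟨x, hx⟩ : T) = 0 := Subtype.ext hx
    have h1 := addOrderOf_dvd_of_nsmul_eq_zero hx'
    rw [hxr] at h1
    rcases hr.dvd_mul.1 h1 with h | h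
    · exact Or.inl ((Nat.prime_dvd_prime_iff_eq hr hp).1 (hr.dvd_of_dvd_pow h))
    · exact Or.inr ((Nat.prime_dvd_prime_iff_eq hr hq).1 (hr.dvd_of_dvd_pow h))
  have hn : Nat.card T ≠ 0 := Nat.card_pos.ne'
  obtain ⟨a, m, hm, ham⟩ := Nat.exists_eq_pow_mul_and_not_dvd hn p hp.ne_one
  have hm0 : m ≠ 0 := by rintro rfl; simp at hm
  obtain ⟨b, c, hc, hbc⟩ := Nat.exists_eq_pow_mul_and_not_dvd hm0 q hq.ne_one
  refine ⟨a, b, ?_⟩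
  have : c = 1 := by
    by_contra hc1
    have hcm : c ∣ m := ⟨q ^ b, by rw [hbc, mul_comm]⟩
    rcases hpr _ (Nat.minFac_prime hc1)
      ((Nat.minFac_dvd c).trans (hcm.trans ⟨p ^ a, by rw [ham, mul_comm]⟩)) with h | h
    · exact hm (h ▸ (Nat.minFac_dvd c).trans hcm)
    · exact hc (h ▸ Nat.minFac_dvd c)
  rw [ham, hbc, this, mul_one]

lemma exists_card_torsion_eq_prime_pow {A : Type} [AddCommGroup A] [Finite A] {p : ℕ}
    (hp : p.Prime) (k : ℕ) :
    ∃ a, Nat.card {a : A // p ^ k • a = 0} = p ^ a := by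
  obtain ⟨a, b, h⟩ := exists_card_torsion_eq (A := A) hp hp k 0
  simp only [pow_zero, mul_one] at h
  exact ⟨a + b, by rw [h, pow_add]⟩

open scoped Pointwise in
/-- An equivariant map out of a primitive action is injective or constant, because its fibres are
blocks. -/
lemma injective_or_const {G X B : Type} [Group G] [MulAction G X] [MulAction G B]
    [MulAction.IsPreprimitive G X] (f : X → B) (hf : ∀ (g : G) x, f (g • x) = g • f x) :
    Function.Injective f ∨ ∀ x y, f x = f y := by
  by_cases h : Function.Injective f
  · exact Or.inl h
  right
  simp only [Function.Injective, not_forall] at h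
  obtain ⟨x, y, hxy, hne⟩ := h
  have hb : MulAction.IsBlock G {z | f z = f x} := by
    rw [MulAction.isBlock_iff_smul_eq_or_disjoint]
    intro g
    have hmem : ∀ z, z ∈ g • {z | f z = f x} ↔ f z = g • f x := by
      intro z
      rw [Set.mem_smul_set_iff_inv_smul_mem, Set.mem_ofPred_eq, hf, inv_smul_eq_iff]
    by_cases hg : g • f x = f x
    · left
      ext z
      rw [hmem, hg]; rfl
    · right
      rw [Set.disjoint_left]
      intro z hz hz'
      rw [hmem] at hz
      exact hg (hz ▸ hz')
  rcases MulAction.IsPreprimitive.isTrivialBlock_of_isBlock hb with h | h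
  · exact absurd (h (by simp) (by simpa using hxy.symm)) hne
  · intro z w
    have hz : z ∈ {z | f z = f x} := h ▸ Set.mem_univ z
    have hw : w ∈ {z | f z = f x} := h ▸ Set.mem_univ w
    exact hz.trans hw.symm

/-- Let `H` be the subgroup attached to the `p ^ k * q ^ l`-torsion, with `p ≠ q`. Its `p`-core acts
trivially on the `q ^ l`-torsion: `h ∈ H` acts there by the affine map `v ↦ p ^ k • κ h + h • v`, this
action is transitive on a set of order prime to `p`, so the `p`-core has a fixed point and, being
normal, fixes everything; comparing with the image of `0` gives the linear statement. -/
lemma pCore_smul_torsion {G A : Type} [Group G] [Finite G] [AddCommGroup A]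
    [Finite A] [DistribMulAction G A] (κ : BijCocycle G A) {p q : ℕ} (hp : p.Prime) (hq : q.Prime)
    (hpq : p ≠ q) (k l : ℕ) : ∀ (n : pCore p (κ.torsion (p ^ k * q ^ l))) (v : A),
      q ^ l • v = 0 → ((n : κ.torsion (p ^ k * q ^ l)) : G) • v = v := by
  have := Fact.mk hp
  set H := κ.torsion (p ^ k * q ^ l) with hH
  let T := {v : A // q ^ l • v = 0}
  let act : MulAction H T :=
    { smul := fun h v => ⟨p ^ k • κ.toFun h + (h : G) • (v : A), by
        have h1 : (p ^ k * q ^ l) • κ.toFun h = 0 := h.2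
        rw [nsmul_add, smul_comm (q ^ l) (h : G), v.2, smul_zero, add_zero, ← mul_nsmul, h1]⟩
      one_smul := fun v => Subtype.ext (by
        change p ^ k • κ.toFun 1 + (1 : G) • (v : A) = v
        rw [κ.map_one]; simp)
      mul_smul := fun g h v => Subtype.ext (by
        change p ^ k • κ.toFun (g * h) + ((g : G) * h) • (v : A) =
          p ^ k • κ.toFun g + (g : G) • (p ^ k • κ.toFun h + (h : G) • (v : A))
        rw [κ.map_mul, nsmul_add, smul_add, mul_smul, add_assoc, smul_comm (g : G) (p ^ k)]) }
  have hact : ∀ (h : H) (v : T), ((h • v : T) : A) = p ^ k • κ.toFun h + (h : G) • (v : A) :=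
    fun _ _ => rfl
  let zero : T := ⟨0, smul_zero _⟩
  have htrans : ∀ v : T, ∃ h : H, h • zero = v := by
    rintro ⟨v, hv⟩
    have hcop : IsCoprime ((p : ℤ) ^ k) ((q : ℤ) ^ l) :=
      (Nat.isCoprime_iff_coprime.2 ((Nat.coprime_primes hp hq).2 hpq)).pow
    obtain ⟨u, w, huw⟩ := hcop
    obtain ⟨g, hg⟩ := κ.bij.2 (u • v)
    refine ⟨⟨g, ?_⟩, Subtype.ext ?_⟩
    · rw [hH, BijCocycle.mem_torsion, hg, mul_comm, mul_nsmul, ← smul_comm u, hv, smul_zero,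
        smul_zero]
    · rw [hact]
      change p ^ k • κ.toFun g + g • (0 : A) = v
      rw [hg, smul_zero, add_zero]
      have h2 : (q : ℤ) ^ l • v = 0 := by
        have := natCast_zsmul v (q ^ l)
        rw [hv] at this
        simpa using this
      calc p ^ k • u • v = ((p : ℤ) ^ k * u) • v := by
            rw [mul_zsmul, ← natCast_zsmul]; push_cast; rfl
        _ = (u * (p : ℤ) ^ k + w * (q : ℤ) ^ l) • v := by
            rw [add_zsmul, mul_zsmul v w, h2, smul_zero, add_zero, mul_comm]
        _ = v := by rw [huw, one_zsmul]
  have hcardT : ¬ p ∣ Nat.card T := by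
    obtain ⟨a, ha⟩ := exists_card_torsion_eq_prime_pow (A := A) hq l
    change ¬ p ∣ Nat.card {a : A // q ^ l • a = 0}
    rw [ha]
    intro h
    exact hpq ((Nat.prime_dvd_prime_iff_eq hp hq).1 (hp.dvd_of_dvd_pow h))
  obtain ⟨v₀, hv₀⟩ := (isPGroup_pCore p H).nonempty_fixed_point_of_prime_not_dvd_card T hcardT
  have hfix : ∀ (n : pCore p H) (v : T), (n : H) • v = v := by
    intro n v
    obtain ⟨h, rfl⟩ := htrans v
    obtain ⟨h₀, hh₀⟩ := htrans v₀
    have hz : zero = h₀⁻¹ • v₀ := by rw [← hh₀, inv_smul_smul]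
    have h1 : (h * h₀⁻¹)⁻¹ * n * (h * h₀⁻¹) ∈ pCore p H := by
      have := (pCore_normal p H).conj_mem n n.2 (h * h₀⁻¹)⁻¹
      simpa using this
    have h2 : ((h * h₀⁻¹)⁻¹ * n * (h * h₀⁻¹)) • v₀ = v₀ := hv₀ ⟨_, h1⟩
    rw [hz, ← mul_smul h]
    rw [mul_smul, mul_smul, inv_smul_eq_iff] at h2
    exact h2
  intro n v hv
  have h0 := congrArg Subtype.val (hfix n zero)
  have h1 := congrArg Subtype.val (hfix n ⟨v, hv⟩)
  rw [hact] at h0 h1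
  change p ^ k • κ.toFun _ + _ • (0 : A) = 0 at h0
  change p ^ k • κ.toFun _ + _ • v = v at h1
  rw [smul_zero, add_zero] at h0
  rw [h0, zero_add] at h1
  exact h1

lemma pCore_torsion_eq_bot {G A X : Type} [Group G] [Finite G] [AddCommGroup A]
    [Finite A] [DistribMulAction G A] [MulAction G X] [FaithfulSMul G X]
    (κ : BijCocycle G A) {p q : ℕ} (hp : p.Prime) (hq : q.Prime)
    (hpq : p ≠ q) (k l : ℕ) (f : X → A) (hf : ∀ (g : G) x, f (g • x) = g • f x)
    (hinj : Function.Injective f) (hfq : ∀ x, q ^ l • f x = 0) :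
    pCore p (κ.torsion (p ^ k * q ^ l)) = ⊥ := by
  rw [Subgroup.eq_bot_iff_forall]
  intro n hn
  apply Subtype.ext
  apply FaithfulSMul.eq_of_smul_eq_smul (α := X)
  intro x
  apply hinj
  rw [hf, pCore_smul_torsion κ hp hq hpq k l ⟨n, hn⟩ _ (hfq x)]
  simp

/-- A faithful `G`-set cannot embed equivariantly both into the `q`-primary and into the `p`-primary
part of `A`: both cores of the subgroup attached to the `p ^ k * q ^ l`-torsion would be trivial,
which contradicts Burnside's theorem. -/
lemma not_two_primes {G A X : Type} [Group G] [Finite G] [AddCommGroup A]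
    [Finite A] [DistribMulAction G A] [MulAction G X] [FaithfulSMul G X] [Nontrivial X]
    (κ : BijCocycle G A) {p q : ℕ} (hp : p.Prime) (hq : q.Prime)
    (hpq : p ≠ q) (k l : ℕ) (f f' : X → A) (hf : ∀ (g : G) x, f (g • x) = g • f x)
    (hinj : Function.Injective f) (hfq : ∀ x, q ^ l • f x = 0)
    (hf' : ∀ (g : G) x, f' (g • x) = g • f' x)
    (hinj' : Function.Injective f') (hfp : ∀ x, p ^ k • f' x = 0) : False := by
  obtain ⟨a, b, hab⟩ := exists_card_torsion_eq (A := A) hp hq k l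
  rw [← κ.card_torsion] at hab
  have hnt : Nontrivial (κ.torsion (p ^ k * q ^ l)) := by
    have : Nontrivial {a : A // (p ^ k * q ^ l) • a = 0} := by
      obtain ⟨x, y, hxy⟩ := exists_pair_ne X
      refine ⟨⟨f x, ?_⟩, ⟨f y, ?_⟩, fun h => hxy (hinj (congrArg Subtype.val h))⟩ <;>
        rw [mul_comm, mul_nsmul, hfq, smul_zero]
    rw [← Finite.one_lt_card_iff_nontrivial] at this ⊢
    rwa [κ.card_torsion]
  rcases pCore_ne_bot_or hp hq _ _ a b rfl hab with h | h
  · exact h (pCore_torsion_eq_bot κ hp hq hpq k l f hf hinj hfq)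
  · have := pCore_torsion_eq_bot κ hq hp hpq.symm l k f' hf' hinj' hfp
    rw [mul_comm] at this
    exact h this

/-- The case in which only the `p`-primary component of `t` is not constant, `m • t` playing the role
of that component. Then `g ↦ p ^ k • κ g` is a homomorphism, so the subgroup `H` attached to the
`p ^ k`-torsion is a normal `p`-subgroup with more elements than `X`. Its center is transitive by
primitivity, hence `H` acts freely, which is impossible by counting. -/
lemma not_one_prime {G A X : Type} [Group G] [Finite G] [AddCommGroup A]
    [Finite A] [DistribMulAction G A] [Finite X] [MulAction G X] [FaithfulSMul G X] [Nontrivial X]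
    [MulAction.IsPreprimitive G X]
    (κ : BijCocycle G A) {p : ℕ} (hp : p.Prime) (k m : ℕ) (t : X → A)
    (ht : ∀ (g : G) x, t (g • x) = g • t x)
    (hgen : AddSubgroup.closure (Set.range t) = ⊤)
    (hinj : Function.Injective fun x => m • t x) (hmk : ∀ x, p ^ k • m • t x = 0)
    (hconst : ∀ x y, p ^ k • t x = p ^ k • t y) : False := by
  have := Fact.mk hp
  have htriv : ∀ (g : G) (a : A), p ^ k • g • a = p ^ k • a := by
    intro g a
    have ha : a ∈ AddSubgroup.closure (Set.range t) := hgen ▸ AddSubgroup.mem_top a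
    induction ha using AddSubgroup.closure_induction with
    | mem a ha => obtain ⟨x, rfl⟩ := ha; rw [← ht, hconst]
    | zero => simp
    | add a b _ _ ha hb => rw [smul_add, nsmul_add, ha, hb, nsmul_add]
    | neg a _ ha => rw [smul_neg, smul_neg, ha, smul_neg]
  let φ : G →* Multiplicative A :=
    { toFun := fun g => Multiplicative.ofAdd (p ^ k • κ.toFun g)
      map_one' := by rw [κ.map_one, smul_zero]; rfl
      map_mul' := fun g h => by rw [κ.map_mul, nsmul_add, htriv]; rfl }
  set H := κ.torsion (p ^ k) with hH
  have hker : φ.ker = H := by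
    ext g
    rfl
  have hHn : H.Normal := hker ▸ φ.normal_ker
  -- `m • t` embeds `X` into the nonzero elements of the torsion
  have hcard : Nat.card X < Nat.card H := by
    have hne : ∀ x, m • t x ≠ 0 := by
      intro x hx
      obtain ⟨y, hy⟩ := exists_ne x
      obtain ⟨g, rfl⟩ := MulAction.exists_smul_eq G x y
      apply hy
      apply hinj
      change m • t (g • x) = m • t x
      rw [ht, ← smul_comm, hx, smul_zero]
    let F : Option X → {a : A // p ^ k • a = 0} := fun o =>
      o.elim ⟨0, smul_zero _⟩ fun x => ⟨m • t x, hmk x⟩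
    have hF : Function.Injective F := by
      rintro (_ | x) (_ | y) h
      · rfl
      · exact absurd (congrArg Subtype.val h).symm (hne y)
      · exact absurd (congrArg Subtype.val h) (hne x)
      · rw [hinj (congrArg Subtype.val h)]
    have := Nat.card_le_card_of_injective F hF
    rw [Finite.card_option, ← κ.card_torsion] at this
    exact this
  have hHnt : Nontrivial H := by
    rw [← Finite.one_lt_card_iff_nontrivial]
    exact lt_of_le_of_lt Nat.card_pos hcard
  have hHp : IsPGroup p H := by
    obtain ⟨a, ha⟩ := exists_card_torsion_eq_prime_pow (A := A) hp k
    exact IsPGroup.of_card ((κ.card_torsion _).trans ha)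
  have hZnt := hHp.center_nontrivial
  let Z : Subgroup G := (Subgroup.center H).map H.subtype
  have hZ : Z.Normal := ConjAct.normal_of_characteristic_of_normal
  have hqp : MulAction.IsQuasiPreprimitive G X := inferInstance
  have hZt : MulAction.IsPretransitive Z X := by
    apply hqp.isPretransitive_of_normal
    intro h
    obtain ⟨⟨z, hz⟩, hz1⟩ := exists_ne (1 : Subgroup.center H)
    apply hz1
    apply Subtype.ext
    apply Subtype.ext
    apply FaithfulSMul.eq_of_smul_eq_smul (α := X)
    intro x
    have hx : x ∈ MulAction.fixedPoints Z X := h ▸ Set.mem_univ x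
    have := hx ⟨z, Subgroup.mem_map_of_mem H.subtype hz⟩
    change (z : G) • x = (1 : G) • x
    rw [one_smul]
    exact this
  obtain ⟨x⟩ : Nonempty X := inferInstance
  -- `H` commutes with the transitive group `Z`, so it acts freely
  have hfree : Function.Injective fun h : H => (h : G) • x := by
    intro h h' hh
    apply Subtype.ext
    apply FaithfulSMul.eq_of_smul_eq_smul (α := X)
    intro y
    obtain ⟨⟨_, z, hz, rfl⟩, rfl⟩ := MulAction.exists_smul_eq Z x y
    have hc : ∀ h : H, (h : G) * z = z * h := fun h =>
      congrArg Subtype.val (Subgroup.mem_center_iff.1 hz h)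
    change (h : G) • (z : G) • x = (h' : G) • (z : G) • x
    rw [← mul_smul, ← mul_smul, hc, hc, mul_smul, mul_smul]
    exact congrArg _ hh
  exact absurd (Nat.card_le_card_of_injective _ hfree) (not_le.2 hcard)

/-- An equivariant map from a faithful primitive `G`-set to `A` whose image generates `A` is constant
whenever there is a bijective cocycle `G → A`: each primary component is injective or constant, at
most one is injective by `not_two_primes`, and none is by `not_one_prime`. -/
theorem const_of_preprimitive {G A X : Type} [Group G] [Finite G] [AddCommGroup A]
    [Finite A] [DistribMulAction G A] [Finite X] [MulAction G X] [FaithfulSMul G X]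
    [MulAction.IsPreprimitive G X] (κ : BijCocycle G A) (t : X → A)
    (ht : ∀ (g : G) x, t (g • x) = g • t x)
    (hgen : AddSubgroup.closure (Set.range t) = ⊤) (x y : X) : t x = t y := by
  by_contra hxy
  have : Nontrivial X := ⟨x, y, fun h => hxy (h ▸ rfl)⟩
  set n := Nat.card A with hn
  have hn0 : n ≠ 0 := Nat.card_pos.ne'
  let m : ℕ → ℕ := fun p => n / p ^ n.factorization p
  have hm : ∀ p, p ^ n.factorization p * m p = n := Nat.ordProj_mul_ordCompl_eq_self n
  have hkill : ∀ p x, p ^ n.factorization p • m p • t x = 0 := by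
    intro p x
    rw [← mul_nsmul', hm, hn, card_nsmul_eq_zero']
  have hmt : ∀ p (g : G) x, m p • t (g • x) = g • m p • t x := fun p g x => by
    rw [ht, smul_comm]
  have hdich := fun p => injective_or_const (fun x => m p • t x) (hmt p)
  have hord : ∀ (j : ℕ) x y, j • t x = j • t y → addOrderOf (t x - t y) ∣ j := by
    intro j x y h
    apply addOrderOf_dvd_of_nsmul_eq_zero
    rw [nsmul_sub, h, sub_self]
  have hex : ∃ p, p.Prime ∧ Function.Injective fun x => m p • t x := by
    by_contra! h
    have h1 : addOrderOf (t x - t y) ≠ 1 := by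
      rw [Ne, AddMonoid.addOrderOf_eq_one_iff, sub_eq_zero]; exact hxy
    have hp := Nat.minFac_prime h1
    have h2 := hord _ _ _ ((hdich _).resolve_left (h _ hp) x y)
    exact Nat.not_dvd_ordCompl hp hn0 ((Nat.minFac_dvd _).trans h2)
  obtain ⟨p, hp, hpinj⟩ := hex
  have hother : ∀ q, q.Prime → q ≠ p → ∀ x y, m q • t x = m q • t y := by
    intro q hq hqp
    refine (hdich q).resolve_left fun hqinj => ?_
    exact not_two_primes κ hp hq hqp.symm _ _ _ _ (hmt q) hqinj (hkill q) (hmt p) hpinj (hkill p)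
  refine not_one_prime κ hp (n.factorization p) (m p) t ht hgen hpinj (hkill p) fun x y => ?_
  have hcop : (addOrderOf (t x - t y)).Coprime (m p) := by
    by_contra h
    obtain ⟨r, hr, hr1, hr2⟩ := Nat.Prime.not_coprime_iff_dvd.1 h
    have hrp : r ≠ p := by
      rintro rfl
      exact Nat.not_dvd_ordCompl hr hn0 hr2
    exact Nat.not_dvd_ordCompl hr hn0 (hr1.trans (hord _ _ _ (hother r hr hrp x y)))
  have hdvd : addOrderOf (t x - t y) ∣ p ^ n.factorization p :=
    hcop.dvd_of_dvd_mul_right (by rw [hm]; exact addOrderOf_dvd_natCard _)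
  have := addOrderOf_dvd_iff_nsmul_eq_zero.1 hdvd
  rwa [nsmul_sub, sub_eq_zero] at this

/-! ### The brace of a cycle set -/

section Brace

variable {X : Type}

lemma sigma_apply (C : CycleSet X) (x y : X) : C.sigma x y = C.op x y := rfl

lemma sigma_mem (C : CycleSet X) (x : X) : C.sigma x ∈ C.G :=
  Subgroup.subset_closure ⟨x, rfl⟩

lemma sigma_mul (C : CycleSet X) (a b : X) :
    C.sigma (C.op a b) * C.sigma a = C.sigma (C.op b a) * C.sigma b :=
  Equiv.ext fun z => C.cyc a b z

/-- The map `π ↦ σ_{π x} ∘ π` on `G(X)`. -/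
noncomputable def transFun (C : CycleSet X) (x : X) (π : C.G) : C.G :=
  ⟨C.sigma ((π : Equiv.Perm X) x) * π, mul_mem (sigma_mem C _) π.2⟩

lemma transFun_coe (C : CycleSet X) (x : X) (π : C.G) :
    (transFun C x π : Equiv.Perm X) = C.sigma ((π : Equiv.Perm X) x) * π := rfl

lemma transFun_injective {C : CycleSet X} (hnd : C.Nondeg) (x : X) :
    Function.Injective (transFun C x) := by
  intro π ρ h
  have h1 : C.sigma ((π : Equiv.Perm X) x) * π = C.sigma ((ρ : Equiv.Perm X) x) * ρ :=
    congrArg Subtype.val h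
  have h2 : (π : Equiv.Perm X) x = (ρ : Equiv.Perm X) x := hnd.1 (Equiv.congr_fun h1 x)
  rw [h2] at h1
  exact Subtype.ext (mul_left_cancel h1)

/-- For a finite non-degenerate cycle set, `π ↦ σ_{π x} ∘ π` is a permutation of `G(X)`; these
are the translations by the generators for the additive structure of the brace `G(X)`. -/
noncomputable def transl [Finite X] {C : CycleSet X} (hnd : C.Nondeg) (x : X) :
    Equiv.Perm C.G :=
  Equiv.ofBijective _ (Finite.injective_iff_bijective.1 (transFun_injective hnd x))

lemma isPreprimitive_of_primitive {C : CycleSet X} (h : C.Primitive) :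
    MulAction.IsPreprimitive C.G X := by
  have : MulAction.IsPretransitive C.G X := ⟨fun x y => by
    obtain ⟨g, hg, hxy⟩ := h.1 x y
    exact ⟨⟨g, hg⟩, hxy⟩⟩
  refine ⟨fun {B} hB => h.2 B fun g hg => ?_⟩
  exact (MulAction.isBlock_iff_smul_eq_or_disjoint.1 hB) ⟨g, hg⟩

variable [Finite X] {C : CycleSet X}

lemma transl_apply (hnd : C.Nondeg) (x : X) (π : C.G) :
    (transl hnd x π : Equiv.Perm X) = C.sigma ((π : Equiv.Perm X) x) * π := rfl

lemma transl_comm (hnd : C.Nondeg) (x y : X) :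
    transl hnd x * transl hnd y = transl hnd y * transl hnd x := by
  refine Equiv.ext fun π => Subtype.ext ?_
  rw [Equiv.Perm.mul_apply, Equiv.Perm.mul_apply, transl_apply, transl_apply, transl_apply, transl_apply,
    ← mul_assoc, ← mul_assoc]
  congr 1
  exact sigma_mul C _ _

/-- The additive group of the brace `G(X)`, realised as the group of its translations. -/
def transGroup (hnd : C.Nondeg) : Subgroup (Equiv.Perm C.G) :=
  Subgroup.closure (Set.range (transl hnd))

noncomputable instance (hnd : C.Nondeg) : CommGroup (transGroup hnd) :=
  { (inferInstance : Group (transGroup hnd)) with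
    mul_comm := (Subgroup.isMulCommutative_closure (k := Set.range (transl hnd)) (by
      rintro _ ⟨x, rfl⟩ _ ⟨y, rfl⟩
      exact transl_comm hnd x y)).is_comm.comm }

/-- Right multiplication by `g` permutes the translations according to the action of `G(X)` on
`X`. -/
lemma transl_conj (hnd : C.Nondeg) (x : X) (g : C.G) :
    (Equiv.mulRight g)⁻¹ * transl hnd x * Equiv.mulRight g = transl hnd ((g : Equiv.Perm X) x) := by
  refine Equiv.ext fun π => Subtype.ext ?_
  change C.sigma (((π * g : C.G) : Equiv.Perm X) x) * (π * g : C.G) * ((g⁻¹ : C.G) : Equiv.Perm X) = _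
  rw [transl_apply]
  simp [mul_assoc]

lemma conj_mem_transGroup (hnd : C.Nondeg) (g : C.G) {a : Equiv.Perm C.G}
    (ha : a ∈ transGroup hnd) :
    (Equiv.mulRight g)⁻¹ * a * Equiv.mulRight g ∈ transGroup hnd := by
  induction ha using Subgroup.closure_induction with
  | mem a ha =>
    obtain ⟨x, rfl⟩ := ha
    rw [transl_conj]
    exact Subgroup.subset_closure ⟨_, rfl⟩
  | one => rw [mul_one, inv_mul_cancel]; exact one_mem _
  | mul a b _ _ ha hb =>
    convert mul_mem ha hb using 1
    group
  | inv a _ ha =>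
    convert inv_mem ha using 1
    group

/-- The action of the multiplicative group of the brace on its additive group. -/
noncomputable instance (hnd : C.Nondeg) : MulDistribMulAction C.G (transGroup hnd) where
  smul g a := ⟨(Equiv.mulRight g)⁻¹ * a * Equiv.mulRight g, conj_mem_transGroup hnd g a.2⟩
  one_smul a := Subtype.ext (Equiv.ext fun π => by
    change (a : Equiv.Perm C.G) (π * 1) * 1⁻¹ = _
    simp)
  mul_smul g h a := Subtype.ext (Equiv.ext fun π => by
    change (a : Equiv.Perm C.G) (π * (g * h)) * (g * h)⁻¹ =
      (a : Equiv.Perm C.G) (π * g * h) * h⁻¹ * g⁻¹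
    rw [mul_inv_rev, mul_assoc, mul_assoc])
  smul_mul g a b := Subtype.ext (by
    change (Equiv.mulRight g)⁻¹ * ((a : Equiv.Perm C.G) * b) * Equiv.mulRight g =
      ((Equiv.mulRight g)⁻¹ * a * Equiv.mulRight g) * ((Equiv.mulRight g)⁻¹ * b * Equiv.mulRight g)
    group)
  smul_one g := Subtype.ext (by
    change (Equiv.mulRight g)⁻¹ * 1 * Equiv.mulRight g = 1
    group)

noncomputable instance (hnd : C.Nondeg) :
    DistribMulAction C.G (Additive (transGroup hnd)) where
  smul g a := Additive.ofMul (g • a.toMul)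
  one_smul a := one_smul C.G a.toMul
  mul_smul g h a := mul_smul g h a.toMul
  smul_zero g := smul_one (N := transGroup hnd) g
  smul_add g a b := smul_mul' g a.toMul b.toMul

lemma smul_transGroup_apply (hnd : C.Nondeg) (g : C.G) (a : transGroup hnd) (π : C.G) :
    ((g • a : transGroup hnd) : Equiv.Perm C.G) π = (a : Equiv.Perm C.G) (π * g) * g⁻¹ := rfl

lemma exists_transGroup_apply_one (hnd : C.Nondeg) (π : C.G) :
    ∃ a : transGroup hnd, (a : Equiv.Perm C.G) 1 = π := by
  obtain ⟨π, hπ⟩ := π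
  suffices h : ∀ π ∈ C.G, ∃ a : transGroup hnd, ((a : Equiv.Perm C.G) 1 : Equiv.Perm X) = π by
    obtain ⟨a, ha⟩ := h π hπ
    exact ⟨a, Subtype.ext ha⟩
  intro π hπ
  have hT : ∀ x, transl hnd x ∈ transGroup hnd := fun x => Subgroup.subset_closure ⟨x, rfl⟩
  induction hπ using Subgroup.closure_induction_left with
  | one => exact ⟨1, rfl⟩
  | mul_left x hx π hπ ih =>
    obtain ⟨x, rfl⟩ := hx
    obtain ⟨a, rfl⟩ := ih
    refine ⟨⟨transl hnd (((a : Equiv.Perm C.G) 1 : Equiv.Perm X)⁻¹ x), hT _⟩ * a, ?_⟩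
    change (transl hnd _ ((a : Equiv.Perm C.G) 1) : Equiv.Perm X) = _
    rw [transl_apply, ← Equiv.Perm.mul_apply, mul_inv_cancel]; rfl
  | inv_mul_cancel x hx π hπ ih =>
    obtain ⟨x, rfl⟩ := hx
    obtain ⟨a, ha⟩ := ih
    let ρ : C.G := ⟨(C.sigma x)⁻¹ * π, mul_mem (inv_mem (sigma_mem C x)) hπ⟩
    refine ⟨⟨transl hnd ((ρ : Equiv.Perm X)⁻¹ x), hT _⟩⁻¹ * a, ?_⟩
    have h1 : transl hnd ((ρ : Equiv.Perm X)⁻¹ x) ρ = (a : Equiv.Perm C.G) 1 := by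
      apply Subtype.ext
      rw [transl_apply, ← Equiv.Perm.mul_apply, mul_inv_cancel, ha]
      simp [ρ]
    change (((transl hnd _)⁻¹ ((a : Equiv.Perm C.G) 1) : C.G) : Equiv.Perm X) = ρ
    rw [← h1, ← Equiv.Perm.mul_apply, inv_mul_cancel]; rfl

/-- The translations form a regular permutation group of `G(X)`: transitivity is by induction on
words in the generators, and a transitive abelian permutation group is regular. -/
lemma transGroup_apply_one_bijective (hnd : C.Nondeg) :
    Function.Bijective fun a : transGroup hnd => (a : Equiv.Perm C.G) 1 := by
  refine ⟨fun a b hab => Subtype.ext (Equiv.ext fun π => ?_), exists_transGroup_apply_one hnd⟩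
  obtain ⟨s, rfl⟩ := exists_transGroup_apply_one hnd π
  have hc : ∀ c : transGroup hnd, (c : Equiv.Perm C.G) ((s : Equiv.Perm C.G) 1) =
      (s : Equiv.Perm C.G) ((c : Equiv.Perm C.G) 1) := fun c =>
    Equiv.congr_fun (congrArg Subtype.val (mul_comm c s)) 1
  rw [hc, hc]
  exact congrArg _ hab

/-- The bijective cocycle of the brace `G(X)`: `g` is sent to the translation carrying `1` to
`g⁻¹`. -/
noncomputable def braceCocycle (hnd : C.Nondeg) : BijCocycle C.G (Additive (transGroup hnd)) where
  toFun g := Additive.ofMul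
    ((Equiv.ofBijective _ (transGroup_apply_one_bijective hnd)).symm g⁻¹)
  bij := Additive.ofMul.bijective.comp ((Equiv.bijective _).comp (Equiv.inv C.G).bijective)
  map_mul g h := by
    have hs : ∀ π, (((Equiv.ofBijective _ (transGroup_apply_one_bijective hnd)).symm π :
        transGroup hnd) : Equiv.Perm C.G) 1 = π := fun π =>
      Equiv.ofBijective_apply_symm_apply _ (transGroup_apply_one_bijective hnd) π
    set e := Equiv.ofBijective _ (transGroup_apply_one_bijective hnd)
    change Additive.ofMul (e.symm (g * h)⁻¹) = Additive.ofMul (e.symm g⁻¹ * g • e.symm h⁻¹)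
    refine congrArg Additive.ofMul ?_
    apply (transGroup_apply_one_bijective hnd).1
    rw [mul_comm]
    change _ = ((g • e.symm h⁻¹ : transGroup hnd) : Equiv.Perm C.G)
      ((e.symm g⁻¹ : Equiv.Perm C.G) 1)
    rw [smul_transGroup_apply]
    simp [hs]

/-- A finite non-degenerate primitive cycle set is trivial. -/
theorem isTrivial_of_primitive (hnd : C.Nondeg) (h : C.Primitive) : C.IsTrivial := by
  have := isPreprimitive_of_primitive h
  let t : X → Additive (transGroup hnd) := fun x =>
    Additive.ofMul ⟨transl hnd x, Subgroup.subset_closure ⟨x, rfl⟩⟩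
  have ht : ∀ (g : C.G) x, t (g • x) = g • t x := fun g x =>
    congrArg Additive.ofMul (Subtype.ext (transl_conj hnd x g).symm)
  have hgen : AddSubgroup.closure (Set.range t) = ⊤ := by
    rw [eq_top_iff]
    rintro ⟨a, ha⟩ -
    change Additive.ofMul (⟨a, ha⟩ : transGroup hnd) ∈ _
    induction ha using Subgroup.closure_induction with
    | mem a ha =>
      obtain ⟨x, rfl⟩ := ha
      exact AddSubgroup.subset_closure ⟨x, rfl⟩
    | one => exact zero_mem _
    | mul a b _ _ ha hb => exact add_mem ha hb
    | inv a _ ha => exact neg_mem ha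
  intro x y z
  have h1 := const_of_preprimitive (braceCocycle hnd) t ht hgen x y
  have h2 : transl hnd x = transl hnd y := congrArg Subtype.val h1
  have h3 := congrArg Subtype.val (Equiv.congr_fun h2 1)
  rw [transl_apply, transl_apply] at h3
  exact Equiv.congr_fun h3 z

end Brace

/-! ### Images, the displacement group and its orbits -/

lemma perm_inv_apply_self {X : Type*} (f : Equiv.Perm X) (x : X) : f⁻¹ (f x) = x := by
  rw [← Equiv.Perm.mul_apply, inv_mul_cancel, Equiv.Perm.one_apply]

lemma perm_apply_inv_self {X : Type*} (f : Equiv.Perm X) (x : X) : f (f⁻¹ x) = x := by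
  rw [← Equiv.Perm.mul_apply, mul_inv_cancel, Equiv.Perm.one_apply]

section Images

variable {X Y : Type} {C : CycleSet X} {D : CycleSet Y} {r : X → Y}

lemma Nondeg.image [Finite Y] (hnd : C.Nondeg) (hr : Function.Surjective r) (h : IsHom C D r) :
    D.Nondeg := by
  refine Finite.surjective_iff_bijective.1 fun y => ?_
  obtain ⟨x, rfl⟩ := hr y
  obtain ⟨z, rfl⟩ := hnd.2 x
  exact ⟨r z, (h z z).symm⟩

lemma exists_mem_G_map (h : IsHom C D r) {g : Equiv.Perm X} (hg : g ∈ C.G) :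
    ∃ g' ∈ D.G, ∀ x, r (g x) = g' (r x) := by
  induction hg using Subgroup.closure_induction with
  | mem g hg =>
    obtain ⟨a, rfl⟩ := hg
    exact ⟨D.sigma (r a), sigma_mem D _, fun x => h a x⟩
  | one => exact ⟨1, one_mem _, fun _ => rfl⟩
  | mul g k _ _ hg hk =>
    obtain ⟨g', hg', h1⟩ := hg
    obtain ⟨k', hk', h2⟩ := hk
    exact ⟨g' * k', mul_mem hg' hk', fun x => by
      rw [Equiv.Perm.mul_apply, h1, h2, Equiv.Perm.mul_apply]⟩
  | inv g _ hg =>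
    obtain ⟨g', hg', h1⟩ := hg
    refine ⟨g'⁻¹, inv_mem hg', fun x => ?_⟩
    rw [Equiv.Perm.eq_inv_iff_eq, ← h1, ← Equiv.Perm.mul_apply, mul_inv_cancel, Equiv.Perm.one_apply]

lemma Indec.image (hind : C.Indec) (hr : Function.Surjective r) (h : IsHom C D r) :
    D.Indec := by
  intro a b
  obtain ⟨x, rfl⟩ := hr a
  obtain ⟨y, rfl⟩ := hr b
  obtain ⟨g, hg, rfl⟩ := hind x y
  obtain ⟨g', hg', h1⟩ := exists_mem_G_map h hg
  exact ⟨g', hg', (h1 x).symm⟩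

lemma primitive_of_prime_card (hind : D.Indec) (hY : (Nat.card Y).Prime) : D.Primitive := by
  have : MulAction.IsPretransitive D.G Y := ⟨fun x y => by
    obtain ⟨g, hg, hxy⟩ := hind x y
    exact ⟨⟨g, hg⟩, hxy⟩⟩
  have := MulAction.IsPreprimitive.of_prime_card (G := D.G) hY
  refine ⟨hind, fun s hs => ?_⟩
  apply MulAction.IsPreprimitive.isTrivialBlock_of_isBlock (G := D.G)
  rw [MulAction.isBlock_iff_smul_eq_or_disjoint]
  exact fun g => hs g g.2

end Images

section Displacement

variable {X : Type} {C : CycleSet X}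

lemma sigma_mul_inv_mem (C : CycleSet X) (x y : X) : C.sigma x * (C.sigma y)⁻¹ ∈ C.Dis :=
  Subgroup.subset_closure ⟨x, y, rfl⟩

/-- The map `(x, y) ↦ (x·y, y·x)` is injective: the permutation `g = σ_{x·y} σ_x` is determined by
`x·y` and `y·x`, and `g` carries `y` and `x` to the squares of `x·y` and `y·x`. -/
lemma op_swap_injective [Finite X] (hnd : C.Nondeg) :
    Function.Injective fun z : X × X => (C.op z.1 z.2, C.op z.2 z.1) := by
  have key : ∀ x y, ∃ g : C.G, (g : Equiv.Perm X) y = C.op (C.op x y) (C.op x y) ∧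
      (g : Equiv.Perm X) x = C.op (C.op y x) (C.op y x) ∧
      transl hnd (C.op (C.op x y) (C.op x y)) (transl hnd (C.op (C.op y x) (C.op y x)) g⁻¹) = 1 := by
    intro x y
    let g : C.G := ⟨C.sigma (C.op x y) * C.sigma x, mul_mem (sigma_mem C _) (sigma_mem C _)⟩
    have h1 : (g : Equiv.Perm X) y = C.op (C.op x y) (C.op x y) := rfl
    have h2 : (g : Equiv.Perm X) x = C.op (C.op y x) (C.op y x) := C.cyc x y x
    refine ⟨g, h1, h2, ?_⟩
    rw [← h1, ← h2]
    have h3 : ((transl hnd ((g : Equiv.Perm X) x) g⁻¹ : C.G) : Equiv.Perm X) =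
        C.sigma x * (g : Equiv.Perm X)⁻¹ := by
      rw [transl_apply]
      simp
    apply Subtype.ext
    rw [transl_apply, h3]
    rw [Equiv.Perm.mul_apply, perm_inv_apply_self, ← mul_assoc]
    exact mul_inv_cancel (g : Equiv.Perm X)
  rintro ⟨x, y⟩ ⟨x', y'⟩ h
  obtain ⟨h1, h2⟩ := Prod.mk.inj h
  simp only at h1 h2
  obtain ⟨g, hy, hx, hg⟩ := key x y
  obtain ⟨g', hy', hx', hg'⟩ := key x' y'
  rw [← h1, ← h2] at hg'
  have : g = g' := inv_injective
    ((transl hnd _).injective ((transl hnd _).injective (hg.trans hg'.symm)))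
  subst this
  rw [← h1, ← hy] at hy'
  rw [← h2, ← hx] at hx'
  rw [(g : Equiv.Perm X).injective hx', (g : Equiv.Perm X).injective hy']

lemma inv_sigma_mul_mem [Finite X] (hnd : C.Nondeg) (a b : X) :
    (C.sigma b)⁻¹ * C.sigma a ∈ C.Dis := by
  obtain ⟨⟨x, y⟩, h⟩ := (Finite.injective_iff_surjective.1 (op_swap_injective hnd)) (a, b)
  obtain ⟨rfl, rfl⟩ := Prod.mk.inj h
  have h1 := sigma_mul C x y
  have h2 : (C.sigma (C.op y x))⁻¹ * C.sigma (C.op x y) = C.sigma y * (C.sigma x)⁻¹ := by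
    rw [inv_mul_eq_iff_eq_mul, ← mul_assoc, eq_mul_inv_iff_mul_eq, h1]
  simp only
  rw [h2]
  exact sigma_mul_inv_mem C y x

/-- The displacement group is normalised by every `σ_x`. -/
lemma sigma_conj_mem [Finite X] (hnd : C.Nondeg) (x : X) {d : Equiv.Perm X} (hd : d ∈ C.Dis) :
    C.sigma x * d * (C.sigma x)⁻¹ ∈ C.Dis := by
  have h : ∀ d ∈ C.Dis, (C.sigma x)⁻¹ * d * ((C.sigma x)⁻¹)⁻¹ ∈ C.Dis := by
    intro d hd
    induction hd using Subgroup.closure_induction with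
    | mem d hd =>
      obtain ⟨u, v, rfl⟩ := hd
      convert mul_mem (inv_sigma_mul_mem hnd u x) (inv_mem (inv_sigma_mul_mem hnd v x)) using 1
      group
    | one => simp
    | mul a b _ _ ha hb =>
      convert mul_mem ha hb using 1
      group
    | inv a _ ha =>
      convert inv_mem ha using 1
      group
  have hn : (C.sigma x)⁻¹ ∈ Subgroup.normalizer (C.Dis : Set (Equiv.Perm X)) :=
    Subgroup.mem_normalizer_fintype h
  exact (Subgroup.mem_normalizer_iff.1 (by simpa using inv_mem hn) d).1 hd

/-- The set of orbits of the displacement group. -/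
abbrev DisOrbits (C : CycleSet X) : Type := MulAction.orbitRel.Quotient C.Dis X

/-- The orbit of a point under the displacement group. -/
noncomputable def disMk (C : CycleSet X) (x : X) : DisOrbits C := Quotient.mk'' x

lemma disMk_eq_iff {x y : X} : disMk C x = disMk C y ↔ ∃ d ∈ C.Dis, d y = x := by
  rw [disMk, disMk, Quotient.eq'', MulAction.orbitRel_apply]
  exact ⟨fun ⟨d, hd⟩ => ⟨d, d.2, hd⟩, fun ⟨d, hd, h⟩ => ⟨⟨d, hd⟩, h⟩⟩

lemma disMk_surjective (C : CycleSet X) : Function.Surjective (disMk C) := Quotient.mk''_surjective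

lemma disMk_sigma (x x' y : X) : disMk C (C.op x y) = disMk C (C.op x' y) := by
  rw [disMk_eq_iff]
  refine ⟨_, sigma_mul_inv_mem C x x', ?_⟩
  change C.sigma x ((C.sigma x')⁻¹ (C.sigma x' y)) = C.sigma x y
  rw [perm_inv_apply_self]

/-- Every `σ_x` induces the same permutation of the orbits of the displacement group. -/
lemma exists_perm_disOrbits [Finite X] (hnd : C.Nondeg) [Nonempty X] :
    ∃ s : Equiv.Perm (DisOrbits C), ∀ x y, disMk C (C.op x y) = s (disMk C y) := by
  obtain ⟨x₀⟩ := ‹Nonempty X›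
  let f : DisOrbits C → DisOrbits C := Quotient.map' (C.sigma x₀) (by
    intro a b hab
    obtain ⟨d, hd, rfl⟩ := disMk_eq_iff.1 (Quotient.sound' hab)
    refine Quotient.exact' (disMk_eq_iff.2 ⟨_, sigma_conj_mem hnd x₀ hd, ?_⟩)
    simp [Equiv.Perm.mul_apply])
  have hf : ∀ y, f (disMk C y) = disMk C (C.op x₀ y) := fun y => rfl
  have hs : Function.Surjective f := by
    intro o
    obtain ⟨y, rfl⟩ := disMk_surjective C o
    obtain ⟨z, rfl⟩ := (C.bij x₀).2 y
    exact ⟨disMk C z, hf z⟩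
  refine ⟨Equiv.ofBijective f (Finite.surjective_iff_bijective.1 hs), fun x y => ?_⟩
  rw [Equiv.ofBijective_apply, hf]
  exact disMk_sigma _ _ _

end Displacement

section Cyclic

/-- The cycle set all of whose left multiplications are the permutation `s`. -/
def constCycleSet {O : Type} (s : Equiv.Perm O) : CycleSet O where
  op _ y := s y
  bij _ := s.bijective
  cyc _ _ _ := rfl

/-- If all left multiplications of an indecomposable cycle set induce the same permutation `s` under
a map `r`, then the cyclic group generated by `s` is transitive on the image of `r`. -/
lemma exists_zpow_of_indec {X Y : Type} {C : CycleSet X} (hind : C.Indec) {r : X → Y}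
    (s : Equiv.Perm Y) (hrs : ∀ x y, r (C.op x y) = s (r y)) (x y : X) :
    ∃ k : ℤ, (s ^ k) (r x) = r y := by
  obtain ⟨g, hg, rfl⟩ := hind x y
  obtain ⟨g', hg', h⟩ := exists_mem_G_map (C := C) (D := constCycleSet s) (r := r) hrs hg
  rw [h]
  have hle : (constCycleSet s).G ≤ Subgroup.zpowers s := by
    rw [CycleSet.G, Subgroup.closure_le]
    rintro _ ⟨o, rfl⟩
    exact Subgroup.mem_zpowers_iff.2 ⟨1, by rw [zpow_one]; exact Equiv.ext fun _ => rfl⟩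
  obtain ⟨k, rfl⟩ := Subgroup.mem_zpowers_iff.1 (hle hg')
  exact ⟨k, rfl⟩

variable {O : Type} {s : Equiv.Perm O} {o : O}

lemma zpow_eq_one_of_fixes (h : ∀ o', ∃ k : ℤ, (s ^ k) o = o') {k : ℤ} (hk : (s ^ k) o = o) :
    s ^ k = 1 := by
  ext o'
  obtain ⟨j, rfl⟩ := h o'
  rw [← Equiv.Perm.mul_apply, ← zpow_add, add_comm, zpow_add, Equiv.Perm.mul_apply, hk,
    Equiv.Perm.one_apply]

/-- A permutation with a single cycle through all points has order the number of points. -/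
lemma orderOf_eq_card (h : ∀ o', ∃ k : ℤ, (s ^ k) o = o') : orderOf s = Nat.card O := by
  rw [← Nat.card_zpowers]
  refine Nat.card_congr (Equiv.ofBijective (fun g : Subgroup.zpowers s => (g : Equiv.Perm O) o)
    ⟨?_, fun o' => ?_⟩)
  · rintro ⟨_, j, rfl⟩ ⟨_, k, rfl⟩ hjk
    apply Subtype.ext
    change (s ^ j) o = (s ^ k) o at hjk
    change s ^ j = s ^ k
    have : (s ^ (-k + j)) o = o := by
      rw [zpow_add, Equiv.Perm.mul_apply, hjk, ← Equiv.Perm.mul_apply, ← zpow_add]; simp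
    have := zpow_eq_one_of_fixes h this
    rw [zpow_add, zpow_neg, inv_mul_eq_one] at this
    exact this.symm
  · obtain ⟨k, hk⟩ := h o'
    exact ⟨⟨s ^ k, k, rfl⟩, hk⟩

/-- A set with a transitive permutation `s` maps onto `ZMod p` for every divisor `p` of its
cardinality, `s` becoming the translation by `1`. -/
lemma exists_map_zmod (h : ∀ o', ∃ k : ℤ, (s ^ k) o = o') {p : ℕ} (hp : p ∣ Nat.card O) :
    ∃ f : O → ZMod p, Function.Surjective f ∧ ∀ o', f (s o') = f o' + 1 := by
  choose k hk using h
  have hwd : ∀ j : ℤ, ((k ((s ^ j) o) : ℤ) : ZMod p) = j := by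
    intro j
    have h1 : s ^ (-j + k ((s ^ j) o)) = 1 := by
      apply zpow_eq_one_of_fixes fun o' => ⟨k o', hk o'⟩
      rw [zpow_add, Equiv.Perm.mul_apply, hk, ← Equiv.Perm.mul_apply, ← zpow_add]; simp
    have h2 := orderOf_dvd_iff_zpow_eq_one.2 h1
    rw [orderOf_eq_card fun o' => ⟨k o', hk o'⟩] at h2
    rw [ZMod.intCast_eq_intCast_iff_dvd_sub, ← dvd_neg]
    have h3 : (p : ℤ) ∣ Nat.card O := by exact_mod_cast hp
    refine (h3.trans h2).trans (dvd_of_eq (by ring))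
  refine ⟨fun o' => k o', fun z => ?_, fun o' => ?_⟩
  · obtain ⟨j, rfl⟩ := ZMod.intCast_surjective z
    exact ⟨_, hwd j⟩
  · have h1 : s o' = (s ^ (1 + k o')) o := by
      rw [zpow_add, Equiv.Perm.mul_apply, hk, zpow_one]
    simp only
    rw [h1, hwd]
    push_cast
    ring

end Cyclic

/-- The size of every trivial epimorphic image divides the number of orbits of the displacement group:
the image is constant on these orbits, so its single cycle is a quotient of theirs. -/
lemma card_dvd_of_trivial {X Y : Type} [Finite X] [Nonempty X] {C : CycleSet X} (hnd : C.Nondeg)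
    (hind : C.Indec) {D : CycleSet Y} {r : X → Y} (hr : Function.Surjective r) (h : IsHom C D r)
    (hD : D.IsTrivial) : Nat.card Y ∣ Nat.card (DisOrbits C) := by
  obtain ⟨s, hs⟩ := exists_perm_disOrbits hnd
  obtain ⟨x₀⟩ := ‹Nonempty X›
  let u := D.sigma (r x₀)
  have hu : ∀ x y, r (C.op x y) = u (r y) := fun x y => by
    rw [h]; exact hD _ _ _
  have hs' : ∀ o, ∃ k : ℤ, (s ^ k) (disMk C x₀) = o := fun o => by
    obtain ⟨y, rfl⟩ := disMk_surjective C o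
    exact exists_zpow_of_indec hind s hs x₀ y
  have hu' : ∀ y, ∃ k : ℤ, (u ^ k) (r x₀) = y := fun y => by
    obtain ⟨y, rfl⟩ := hr y
    exact exists_zpow_of_indec hind u hu x₀ y
  rw [← orderOf_eq_card hs', ← orderOf_eq_card hu', orderOf_dvd_iff_pow_eq_one]
  have hdis : ∀ d ∈ C.Dis, ∀ x, r (d x) = r x := by
    intro d hd
    induction hd using Subgroup.closure_induction with
    | mem d hd =>
      obtain ⟨a, b, rfl⟩ := hd
      intro x
      obtain ⟨z, rfl⟩ := (C.bij b).2 x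
      change r (C.sigma a ((C.sigma b)⁻¹ (C.sigma b z))) = _
      rw [perm_inv_apply_self, hu]
      exact hu a z
    | one => exact fun _ => rfl
    | mul a b _ _ ha hb => exact fun x => (ha _).trans (hb x)
    | inv a _ ha =>
      intro x
      rw [← ha, perm_apply_inv_self]
  let rbar : DisOrbits C → Y := Quotient.lift r (by
    intro a b hab
    obtain ⟨d, hd, rfl⟩ := disMk_eq_iff.1 (Quotient.sound' hab)
    exact hdis d hd b)
  have hrbar : ∀ x, rbar (disMk C x) = r x := fun _ => rfl
  have hintg : ∀ (n : ℕ) o, rbar ((s ^ n) o) = (u ^ n) (rbar o) := by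
    intro n
    induction n with
    | zero => exact fun _ => rfl
    | succ n ih =>
      intro o
      obtain ⟨y, rfl⟩ := disMk_surjective C o
      rw [pow_succ, Equiv.Perm.mul_apply, ← hs x₀, ih, hrbar, hu, pow_succ, Equiv.Perm.mul_apply,
        hrbar]
  ext y
  obtain ⟨x, rfl⟩ := hr y
  rw [← hrbar, ← hintg, pow_orderOf_eq_one]
  rfl

lemma card_disOrbits_lt {X : Type} [Finite X] {C : CycleSet X} (hC : ¬ C.IsTrivial) :
    Nat.card (DisOrbits C) < Nat.card X := by
  refine lt_of_le_of_ne (Nat.card_le_card_of_surjective _ (disMk_surjective C)) fun h => hC ?_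
  have hbij := (Nat.bijective_iff_surjective_and_card (disMk C)).2 ⟨disMk_surjective C, h.symm⟩
  intro x y z
  exact hbij.1 (disMk_sigma x y z)

/-- If the number of orbits of the displacement group were composite, these orbits would form an
intermediate cycle set between `X` and a cyclic one of prime size, giving a chain of length
three. -/
theorem card_disOrbits_prime {X : Type} [Finite X] [Nonempty X] {C : CycleSet X} (hnd : C.Nondeg)
    (hind : C.Indec) (hC : ¬ C.IsTrivial) (h3 : ¬ HasChain C 3)
    (h1 : Nat.card (DisOrbits C) ≠ 1) : (Nat.card (DisOrbits C)).Prime := by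
  by_contra hnp
  apply h3
  obtain ⟨s, hs⟩ := exists_perm_disOrbits hnd
  obtain ⟨x₀⟩ := ‹Nonempty X›
  have hs' : ∀ o, ∃ k : ℤ, (s ^ k) (disMk C x₀) = o := fun o => by
    obtain ⟨y, rfl⟩ := disMk_surjective C o
    exact exists_zpow_of_indec hind s hs x₀ y
  have : Nonempty (DisOrbits C) := ⟨disMk C x₀⟩
  have hpos : 0 < Nat.card (DisOrbits C) := Nat.card_pos
  set p := (Nat.card (DisOrbits C)).minFac with hpdef
  have hp : p.Prime := Nat.minFac_prime h1
  have hlt : p < Nat.card (DisOrbits C) :=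
    lt_of_le_of_ne (Nat.minFac_le hpos) fun h => hnp (h ▸ hp)
  have : NeZero p := ⟨hp.ne_zero⟩
  obtain ⟨f, hf, hfs⟩ := exists_map_zmod hs' (Nat.minFac_dvd (Nat.card (DisOrbits C)))
  have hcardp : Nat.card (ZMod p) = p := Nat.card_zmod p
  let DO := constCycleSet s
  let DP : CycleSet (ZMod p) := constCycleSet (Equiv.addRight 1)
  have hh1 : IsHom C DO (disMk C) := hs
  have hh2 : IsHom DO DP f := fun _ b => hfs b
  have hindO : DO.Indec := Indec.image hind (disMk_surjective C) hh1
  have hprim : DP.Primitive :=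
    primitive_of_prime_card (Indec.image hindO hf hh2) (by rw [hcardp]; exact hp)
  let T : ℕ → Type := fun
    | 0 => X
    | 1 => DisOrbits C
    | _ + 2 => ZMod p
  let CS : ∀ i, CycleSet (T i) := fun
    | 0 => C
    | 1 => DO
    | _ + 2 => DP
  have hT : ∀ i, Finite (T i) := fun
    | 0 => ‹Finite X›
    | 1 => (inferInstance : Finite (DisOrbits C))
    | _ + 2 => (inferInstance : Finite (ZMod p))
  refine ⟨T, hT, CS, id, Function.bijective_id, fun _ _ => rfl,
    ?_, ?_, hprim⟩
  · intro i hi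
    match i, hi with
    | 0, _ => exact ⟨card_disOrbits_lt hC, by change 1 < Nat.card (DisOrbits C); omega⟩
    | 1, _ =>
      change Nat.card (ZMod p) < Nat.card (DisOrbits C) ∧ 1 < Nat.card (ZMod p)
      rw [hcardp]
      exact ⟨hlt, hp.one_lt⟩
  · intro i hi
    match i, hi with
    | 0, _ => exact ⟨disMk C, disMk_surjective C, hh1⟩
    | 1, _ => exact ⟨f, hf, hh2⟩

theorem statement_15 {X : Type} [Finite X] (C : CycleSet X)
    (hnd : C.Nondeg) (hind : C.Indec) (hnontriv : ¬ C.IsTrivial)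
    (hfpl2 : fplEq C 2) :
    ∃ p : ℕ, p.Prime ∧
      Nat.card (MulAction.orbitRel.Quotient ↥C.Dis X) = p ∧
      ∀ (Y : Type) (D : CycleSet Y) (r : X → Y),
        Function.Surjective r → IsHom C D r → (Nat.card Y).Prime →
          Nat.card Y = p := by
  have hne : Nonempty X := by
    by_contra h
    rw [not_nonempty_iff] at h
    exact hnontriv fun x => h.elim x
  obtain ⟨-, ⟨T, hT, CS, e, he, heh, hcard, hepi, hprim⟩, hmax⟩ := hfpl2
  have h3 : ¬ HasChain C 3 := fun h => absurd (hmax 3 (by norm_num) h) (by norm_num)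
  have h1 : Nat.card (DisOrbits C) ≠ 1 := by
    intro h1
    obtain ⟨q, hq, hqh⟩ := hepi 0 (by norm_num)
    have hr : Function.Surjective (q ∘ e) := hq.comp he.2
    have hrh : IsHom C (CS 1) (q ∘ e) := fun a b => by
      change q (e (C.op a b)) = _
      rw [heh, hqh]; rfl
    have := hT 1
    have hd := card_dvd_of_trivial hnd hind hr hrh
      (isTrivial_of_primitive (Nondeg.image hnd hr hrh) hprim)
    have h2 : 1 < Nat.card (T 1) := (hcard 0 (by norm_num)).2
    rw [h1, Nat.dvd_one] at hd
    exact h2.ne' hd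
  have hp := card_disOrbits_prime hnd hind hnontriv h3 h1
  refine ⟨_, hp, rfl, fun Y D r hr hrh hY => ?_⟩
  have : Finite Y := Nat.finite_of_card_ne_zero hY.ne_zero
  have hd := card_dvd_of_trivial hnd hind hr hrh
    (isTrivial_of_primitive (Nondeg.image hnd hr hrh)
      (primitive_of_prime_card (Indec.image hind hr hrh) hY))
  exact (Nat.prime_dvd_prime_iff_eq hY hp).1 hd
end
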